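/- There exist universal constants c, C > 0 such that the following holds. Let n ≥ 2, let X be an isotropic, log-concave random vector in ℝⁿ, and let G be a standard Gaussian random vector in ℝⁿ. Set Q_n = ψ_n·√(log(n+1)). Then for every gauge function ‖·‖ on ℝⁿ (in particular for every norm), (c/Q_n)·E‖G‖ ≤ E‖X‖ ≤ C·Q_n·E‖G‖. -/

import Mathlib

open MeasureTheory Real Pointwise RealInnerProductSpace
open scoped ENNReal

noncomputable section

/-- A convex body: a compact convex set with non-empty interior. -/
def IsConvexBody {n : ℕ} (K : Set (EuclideanSpace ℝ (Fin n))) : Prop :=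
  IsCompact K ∧ Convex ℝ K ∧ (interior K).Nonempty

/-- The uniform probability measure on a set `K`. -/
def unifOn {n : ℕ} (K : Set (EuclideanSpace ℝ (Fin n))) : Measure (EuclideanSpace ℝ (Fin n)) :=
  (volume K)⁻¹ • volume.restrict K

/-- A probability measure `μ` on `ℝⁿ` is isotropic: its barycenter vanishes and its
covariance matrix is the identity. -/
def IsIsotropicMeasure {n : ℕ} (μ : Measure (EuclideanSpace ℝ (Fin n))) : Prop :=
  (∀ i, ∫ x, x i ∂μ = 0) ∧ ∀ i j, ∫ x, x i * x j ∂μ = if i = j then 1 else 0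

/-- A convex body is in isotropic position if the uniform probability measure on it
is isotropic. -/
def IsIsotropicBody {n : ℕ} (K : Set (EuclideanSpace ℝ (Fin n))) : Prop :=
  IsIsotropicMeasure (unifOn K)

/-- A log-concave density: nonnegative, and multiplicatively convex. This is equivalent to:
`{p > 0}` is convex and `log (1/p)` is convex on it. -/
def IsLogConcaveDensity {n : ℕ} (p : EuclideanSpace ℝ (Fin n) → ℝ) : Prop :=
  (∀ x, 0 ≤ p x) ∧ ∀ x y : EuclideanSpace ℝ (Fin n), ∀ t : ℝ, 0 ≤ t → t ≤ 1 →
    p x ^ t * p y ^ (1 - t) ≤ p (t • x + (1 - t) • y)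

/-- A measure on `ℝⁿ` is log-concave if it has a log-concave density w.r.t. Lebesgue. -/
def IsLogConcaveMeasure {n : ℕ} (μ : Measure (EuclideanSpace ℝ (Fin n))) : Prop :=
  ∃ p : EuclideanSpace ℝ (Fin n) → ℝ, Measurable p ∧ IsLogConcaveDensity p ∧
    μ = volume.withDensity fun x => ENNReal.ofReal (p x)

/-- The standard Gaussian probability measure on `ℝⁿ`. -/
def stdGaussian (n : ℕ) : Measure (EuclideanSpace ℝ (Fin n)) :=
  volume.withDensity fun x => ENNReal.ofReal ((2 * π) ^ (-(n : ℝ) / 2) * Real.exp (-‖x‖ ^ 2 / 2))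

/-- The Poincaré constant of a measure: the least `A ≥ 0` such that
`Var f ≤ A ⬝ E |∇ f|²` for all locally Lipschitz `f`. -/
def poincareConst {n : ℕ} (μ : Measure (EuclideanSpace ℝ (Fin n))) : ℝ :=
  sInf {A : ℝ | 0 ≤ A ∧ ∀ f : EuclideanSpace ℝ (Fin n) → ℝ, LocallyLipschitz f →
    ∫ x, (f x - ∫ y, f y ∂μ) ^ 2 ∂μ ≤ A * ∫ x, ‖gradient f x‖ ^ 2 ∂μ}

/-- The KLS constant `ψₙ`. -/
def KLSConst (n : ℕ) : ℝ :=
  sSup {s : ℝ | ∃ μ : Measure (EuclideanSpace ℝ (Fin n)), IsProbabilityMeasure μ ∧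
    IsLogConcaveMeasure μ ∧ IsIsotropicMeasure μ ∧ s = Real.sqrt (poincareConst μ)}

/-- The Hilbert-Schmidt norm of a matrix. -/
def hsNorm {n : ℕ} (M : Matrix (Fin n) (Fin n) ℝ) : ℝ :=
  Real.sqrt (∑ i, ∑ j, (M i j) ^ 2)

/-- The coefficient `κₙ`, the supremum of `‖E [X₁ (X ⊗ X)]‖_HS` over all isotropic
log-concave random vectors `X` in `ℝⁿ`. -/
def kappaConst (n : ℕ) : ℝ :=
  sSup {s : ℝ | ∃ μ : Measure (EuclideanSpace ℝ (Fin n)), IsProbabilityMeasure μ ∧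
    IsLogConcaveMeasure μ ∧ IsIsotropicMeasure μ ∧ ∃ h : 0 < n,
    s = hsNorm (Matrix.of fun i j => ∫ x, x ⟨0, h⟩ * (x i * x j) ∂μ)}

/-- A gauge function on `ℝⁿ`: non-negative, convex, positively homogeneous. -/
def IsGauge {n : ℕ} (f : EuclideanSpace ℝ (Fin n) → ℝ) : Prop :=
  (∀ x, 0 ≤ f x) ∧ ConvexOn ℝ Set.univ f ∧
    ∀ (c : ℝ), 0 ≤ c → ∀ x, f (c • x) = c * f x

/-- `M(K)`: the mean of the Minkowski functional of `K` over the unit sphere, w.r.t. the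
uniform probability measure on the sphere. -/
def Mparam (n : ℕ) (K : Set (EuclideanSpace ℝ (Fin n))) : ℝ :=
  ∫ x : Metric.sphere (0 : EuclideanSpace ℝ (Fin n)) 1,
    gauge K x ∂(((volume : Measure (EuclideanSpace ℝ (Fin n))).toSphere Set.univ)⁻¹ •
      (volume : Measure (EuclideanSpace ℝ (Fin n))).toSphere)

/-- The polar body. -/
def polarBody {n : ℕ} (K : Set (EuclideanSpace ℝ (Fin n))) : Set (EuclideanSpace ℝ (Fin n)) :=
  {x | ∀ y ∈ K, ⟪x, y⟫ ≤ 1}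

/-- `R(K)`: the maximal Euclidean norm of a point of `K`. -/
def Rparam {n : ℕ} (K : Set (EuclideanSpace ℝ (Fin n))) : ℝ :=
  sSup {r : ℝ | ∃ x ∈ K, r = ‖x‖}

/-- The operator norm `‖A : K → T‖ = sup_{x ≠ 0} ‖Ax‖_T / ‖x‖_K` (Minkowski functionals). -/
def mapNorm {n : ℕ} (K T : Set (EuclideanSpace ℝ (Fin n)))
    (A : Matrix (Fin n) (Fin n) ℝ) : ℝ :=
  sSup {r : ℝ | ∃ x : EuclideanSpace ℝ (Fin n), x ≠ 0 ∧
    r = gauge T (Matrix.toEuclideanLin A x) / gauge K x}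

/-- The ℓ₂ operator norm of a matrix. -/
def matOpNorm {n : ℕ} (M : Matrix (Fin n) (Fin n) ℝ) : ℝ :=
  ‖LinearMap.toContinuousLinearMap (Matrix.toEuclideanLin M)‖

/-!
The proof runs a stochastic localization of `X` (Eldan's scheme) up to a time `T` of order
`1 / (ψₙ² log n)`, written without stochastic calculus: all processes enter through expectations at a
fixed time only.

**Localization.** Let `μ` be the law of `X`, conditioned on a large ball (`exists_trunc`). For
`p = (t, θ)` let `tilt μ p` be the probability measure with density proportional to
`exp (⟪x, θ⟫ - t ‖x‖² / 2)` with respect to `μ`, and let `tE μ k p` be the mean of `k` under it. When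
`θ` is distributed as `t X + √t Z`, with `Z` Gaussian and independent of `X`, the tilt is the
conditional law of `X` given `θ`; `Em μ f t` is the expectation of `f (t, θ)`. For a smooth `Φ`,
`Em μ (Φ ∘ tE μ k) t` has derivative in `t` equal to the expectation of one half of the Hessian of `Φ`
traced against the covariances of `k` with the coordinates under the tilt. This is Itô's formula in
expectation, `ito`. It follows from the heat equation for Gaussian averages, `heat_deriv`, and from
`itoH_cancel`.

**Covariance control.** Let `Γ = tr (Cov(tilt) - Cov μ)^q`, with `q` even of order `log n`. Itô's
formula is applied to the bounded potential `(Γ + η) / (Γ + M)`, where `M = 4^(-q)`. Its drift involves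
third moments of the tilt. These are controlled by the Poincaré inequality for quadratic forms
(`thirdM_trace_le`), with the constant `ψₙ`, because tilts are log-concave and an affine image of each
of them is isotropic (`quadPoincare_KLS`). The drift is then a multiple of the potential (`drift_le`),
and Grönwall's inequality shows that up to time `T` the covariance of the tilt is, up to a
polynomially small exceptional event, between `1/2` and `9/4`. For the Poincaré inequality to hold
with the constant `ψₙ`, the supremum defining `ψₙ` has to be taken over a bounded set; this is the
purpose of the crude dimensional inequality `base_poincare`.

**Comparison.** Let `P` be the convolution of the gauge `g` with the Gaussian measure. Homogeneity of
`g` gives `ΔP(x) = P(x) - DP(x) x` (`gsm_laplacian`), and convexity then yields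
`P - g ≤ ΔP ≤ E g(G)`. Itô's formula for `P` at the mean `a` of the tilt, divided by `√T`, combined
with the covariance control, gives two inequalities. On the one hand
`E P(a / √T) ≤ C E g(G)` at time `T`; since `X` differs from `a` by a Gaussian vector of scale `1 / √T`
(`compare_mean`), this gives `E g(X) ≤ (C / √T) E g(G)`, which is `core_upper`. On the other hand `P`
grows at a rate at least `c (E g(G) - E g(X) / √T) / T`, while its final value is at most
`E g(G) + E g(X) / √T`; this gives `c √T E g(G) ≤ E g(X)`, which is `core_lower`. Removing the
truncation gives `gauge_upper` and `gauge_lower`.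
-/

/-! ### Laplace transforms -/

/-- The Laplace transform `w ↦ ∫ exp (T ω w) • k ω`. -/
def laplaceT {Ω W F : Type} [MeasurableSpace Ω] [NormedAddCommGroup W] [NormedSpace ℝ W]
    [NormedAddCommGroup F] [NormedSpace ℝ F]
    (ν : Measure Ω) (T : Ω → (W →L[ℝ] ℝ)) (k : Ω → F) (w : W) : F :=
  ∫ ω, Real.exp (T ω w) • k ω ∂ν

section Laplace
variable {Ω W F : Type} [MeasurableSpace Ω] [NormedAddCommGroup W] [NormedSpace ℝ W]
  [NormedAddCommGroup F] [NormedSpace ℝ F]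

/-- The function whose Laplace transform is the derivative of the one of `k`. -/
def laplaceD (T : Ω → (W →L[ℝ] ℝ)) (k : Ω → F) (ω : Ω) : W →L[ℝ] F := (T ω).smulRight (k ω)

theorem norm_laplaceD_le (T : Ω → (W →L[ℝ] ℝ)) (k : Ω → F) (ω : Ω) :
    ‖laplaceD T k ω‖ ≤ Real.exp ‖T ω‖ * ‖k ω‖ := by
  rw [laplaceD, ContinuousLinearMap.norm_smulRight_apply]
  gcongr
  linarith [Real.add_one_le_exp ‖T ω‖]

theorem aesm_laplaceD {ν : Measure Ω} {T : Ω → (W →L[ℝ] ℝ)} {k : Ω → F}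
    (hT : AEStronglyMeasurable T ν) (hk : AEStronglyMeasurable k ν) :
    AEStronglyMeasurable (laplaceD T k) ν := by
  have : Continuous fun p : (W →L[ℝ] ℝ) × F => (p.1.smulRight p.2 : W →L[ℝ] F) :=
    (ContinuousLinearMap.smulRightL ℝ W F).continuous₂
  exact this.comp_aestronglyMeasurable (hT.prodMk hk)

theorem aesm_exp_smul {ν : Measure Ω} {T : Ω → (W →L[ℝ] ℝ)} {k : Ω → F}
    (hT : AEStronglyMeasurable T ν) (hk : AEStronglyMeasurable k ν) (w : W) :
    AEStronglyMeasurable (fun ω => Real.exp (T ω w) • k ω) ν := by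
  have : Continuous fun p : (W →L[ℝ] ℝ) => Real.exp (p w) := by fun_prop
  exact (this.comp_aestronglyMeasurable hT).smul hk

theorem exp_apply_le {T : W →L[ℝ] ℝ} {w : W} {r : ℝ} (h : ‖w‖ ≤ r) :
    Real.exp (T w) ≤ Real.exp (r * ‖T‖) := by
  apply Real.exp_le_exp.2
  calc T w ≤ ‖T w‖ := Real.le_norm_self _
    _ ≤ ‖T‖ * ‖w‖ := T.le_opNorm w
    _ ≤ r * ‖T‖ := by rw [mul_comm]; gcongr

theorem laplaceD_integrable_exp {ν : Measure Ω} {T : Ω → (W →L[ℝ] ℝ)} {k : Ω → F}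
    (hT : AEStronglyMeasurable T ν) (hk : AEStronglyMeasurable k ν)
    (hi : ∀ r : ℝ, Integrable (fun ω => Real.exp (r * ‖T ω‖) * ‖k ω‖) ν) (r : ℝ) :
    Integrable (fun ω => Real.exp (r * ‖T ω‖) * ‖laplaceD T k ω‖) ν := by
  refine (hi (r + 1)).mono' ?_ (.of_forall fun ω => ?_)
  · have : Continuous fun p : (W →L[ℝ] ℝ) => Real.exp (r * ‖p‖) := by fun_prop
    exact (this.comp_aestronglyMeasurable hT).mul (aesm_laplaceD hT hk).norm
  · rw [Real.norm_of_nonneg (by positivity)]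
    calc Real.exp (r * ‖T ω‖) * ‖laplaceD T k ω‖
        ≤ Real.exp (r * ‖T ω‖) * (Real.exp ‖T ω‖ * ‖k ω‖) := by
          gcongr; exact norm_laplaceD_le _ _ _
      _ = _ := by rw [← mul_assoc, ← Real.exp_add]; ring_nf

theorem laplaceT_integrable {ν : Measure Ω} {T : Ω → (W →L[ℝ] ℝ)} {k : Ω → F}
    (hT : AEStronglyMeasurable T ν) (hk : AEStronglyMeasurable k ν)
    (hi : ∀ r : ℝ, Integrable (fun ω => Real.exp (r * ‖T ω‖) * ‖k ω‖) ν) (w : W) :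
    Integrable (fun ω => Real.exp (T ω w) • k ω) ν := by
  refine (hi ‖w‖).mono' (aesm_exp_smul hT hk w) (.of_forall fun ω => ?_)
  rw [norm_smul, Real.norm_of_nonneg (Real.exp_nonneg _)]
  gcongr
  exact Real.exp_le_exp.1 (exp_apply_le le_rfl)

theorem laplaceT_hasFDerivAt {ν : Measure Ω} {T : Ω → (W →L[ℝ] ℝ)} {k : Ω → F}
    (hT : AEStronglyMeasurable T ν) (hk : AEStronglyMeasurable k ν)
    (hi : ∀ r : ℝ, Integrable (fun ω => Real.exp (r * ‖T ω‖) * ‖k ω‖) ν) (w : W) :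
    HasFDerivAt (laplaceT ν T k) (laplaceT ν T (laplaceD T k) w) w := by
  have hi' := laplaceD_integrable_exp hT hk hi
  refine hasFDerivAt_integral_of_dominated_of_fderiv_le
    (F' := fun w ω => Real.exp (T ω w) • laplaceD T k ω)
    (bound := fun ω => Real.exp ((‖w‖ + 1) * ‖T ω‖) * ‖laplaceD T k ω‖)
    (Metric.ball_mem_nhds w one_pos) (.of_forall fun w' => aesm_exp_smul hT hk w')
    (laplaceT_integrable hT hk hi w) (aesm_exp_smul hT (aesm_laplaceD hT hk) w) ?_ (hi' _) ?_
  · refine .of_forall fun ω w' hw' => ?_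
    rw [norm_smul, Real.norm_of_nonneg (Real.exp_nonneg _)]
    gcongr
    apply Real.exp_le_exp.1 (exp_apply_le _)
    have := norm_add_le w (w' - w)
    rw [add_sub_cancel, ← dist_eq_norm] at this
    linarith [Metric.mem_ball.1 hw']
  · refine .of_forall fun ω w' _ => ?_
    have h1 : HasFDerivAt (fun w => Real.exp (T ω w)) (Real.exp (T ω w') • T ω) w' :=
      (T ω).hasFDerivAt.exp
    convert h1.smul_const (k ω) using 1
    ext v
    simp [laplaceD, smul_smul]

theorem laplaceT_contDiff (m : ℕ) : ∀ {F : Type} [NormedAddCommGroup F] [NormedSpace ℝ F]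
    {ν : Measure Ω} {T : Ω → (W →L[ℝ] ℝ)} {k : Ω → F}
    (_ : AEStronglyMeasurable T ν) (_ : AEStronglyMeasurable k ν)
    (_ : ∀ r : ℝ, Integrable (fun ω => Real.exp (r * ‖T ω‖) * ‖k ω‖) ν),
    ContDiff ℝ m (laplaceT ν T k) := by
  induction m with
  | zero =>
    intro F _ _ ν T k hT hk hi
    refine contDiff_zero.2 ?_
    exact continuous_iff_continuousAt.2 fun w => (laplaceT_hasFDerivAt hT hk hi w).continuousAt
  | succ m ih =>
    intro F _ _ ν T k hT hk hi
    have := ih hT (aesm_laplaceD hT hk) (laplaceD_integrable_exp hT hk hi)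
    exact_mod_cast contDiff_succ_iff_hasFDerivAt.2
      ⟨_, this, fun w => laplaceT_hasFDerivAt hT hk hi w⟩

end Laplace

/-! ### The Gaussian measure -/

/-- Euclidean space of dimension `n`. -/
abbrev Eu (n : ℕ) : Type := EuclideanSpace ℝ (Fin n)

/-- The density of the standard Gaussian measure. -/
def gaussDens (n : ℕ) (x : Eu n) : ℝ :=
  (2 * π) ^ (-(n : ℝ) / 2) * Real.exp (-‖x‖ ^ 2 / 2)

theorem gaussDens_pos {n : ℕ} (x : Eu n) : 0 < gaussDens n x := by
  unfold gaussDens; positivity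

theorem continuous_gaussDens (n : ℕ) : Continuous (gaussDens n) := by
  unfold gaussDens; fun_prop

theorem integral_gauss {n : ℕ} {F : Type} [NormedAddCommGroup F] [NormedSpace ℝ F]
    (h : Eu n → F) : ∫ x, h x ∂(stdGaussian n) = ∫ x, gaussDens n x • h x := by
  have := integral_withDensity_eq_integral_toReal_smul (μ := (volume : Measure (Eu n)))
    (f := fun x => ENNReal.ofReal (gaussDens n x))
    (continuous_gaussDens n).measurable.ennreal_ofReal (by simp) h
  simp only [ENNReal.toReal_ofReal (gaussDens_pos _).le] at this
  exact this

theorem integrable_gauss {n : ℕ} {F : Type} [NormedAddCommGroup F] [NormedSpace ℝ F]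
    {h : Eu n → F} : Integrable h (stdGaussian n) ↔
      Integrable (fun x => gaussDens n x • h x) volume := by
  have := integrable_withDensity_iff_integrable_smul' (μ := (volume : Measure (Eu n)))
    (f := fun x => ENNReal.ofReal (gaussDens n x))
    (continuous_gaussDens n).measurable.ennreal_ofReal (by simp) (g := h)
  simp only [ENNReal.toReal_ofReal (gaussDens_pos _).le] at this
  exact this

theorem integrable_exp_neg_sq {n : ℕ} {b : ℝ} (hb : 0 < b) :
    Integrable (fun x : Eu n => Real.exp (-b * ‖x‖ ^ 2)) volume := by
  have h := (GaussianFourier.integrable_cexp_neg_mul_sq_norm_add (b := (b : ℂ))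
    (V := Eu n) (by simpa using hb) 0 0).norm
  refine h.congr (.of_forall fun x => ?_)
  simp only [Complex.norm_exp]
  congr 1
  simp [← Complex.ofReal_pow, ← Complex.ofReal_mul]

theorem integral_gaussDens (n : ℕ) : ∫ x : Eu n, gaussDens n x = 1 := by
  unfold gaussDens
  rw [integral_const_mul]
  have h := GaussianFourier.integral_rexp_neg_mul_sq_norm (V := Eu n) (b := 1 / 2) (by norm_num)
  have h2 : (fun x : Eu n => Real.exp (-‖x‖ ^ 2 / 2)) =
      fun x => Real.exp (-(1 / 2) * ‖x‖ ^ 2) := by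
    ext x; congr 1; ring
  rw [h2, h, finrank_euclideanSpace_fin, show π / (1 / 2) = 2 * π by ring,
    ← Real.rpow_add (by positivity)]
  simp [neg_div]

instance isProbabilityMeasure_stdGaussian (n : ℕ) : IsProbabilityMeasure (stdGaussian n) := by
  constructor
  have h := integrable_exp_neg_sq (n := n) (b := 1 / 2) (by norm_num)
  have h1 : Integrable (gaussDens n) volume := by
    refine (h.const_mul ((2 * π) ^ (-(n : ℝ) / 2))).congr (.of_forall fun x => ?_)
    simp only [gaussDens]; congr 2; ring
  rw [stdGaussian, withDensity_apply _ MeasurableSet.univ, Measure.restrict_univ]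
  have := ofReal_integral_eq_lintegral_ofReal h1 (.of_forall fun x => (gaussDens_pos x).le)
  rw [integral_gaussDens] at this
  simpa [gaussDens] using this.symm

theorem integrable_exp_norm_gauss {n : ℕ} (r : ℝ) :
    Integrable (fun x : Eu n => Real.exp (r * ‖x‖)) (stdGaussian n) := by
  rw [integrable_gauss]
  have h := integrable_exp_neg_sq (n := n) (b := 1 / 4) (by norm_num)
  refine (h.const_mul ((2 * π) ^ (-(n : ℝ) / 2) * Real.exp (r ^ 2))).mono' ?_
    (.of_forall fun x => ?_)
  · exact ((continuous_gaussDens n).smul (by fun_prop)).aestronglyMeasurable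
  · rw [smul_eq_mul, Real.norm_of_nonneg (by have := gaussDens_pos x; positivity), gaussDens,
      mul_assoc, mul_assoc, ← Real.exp_add, ← Real.exp_add]
    refine mul_le_mul_of_nonneg_left (Real.exp_le_exp.2 ?_) (by positivity)
    nlinarith [sq_nonneg (r - ‖x‖ / 2)]

theorem integrable_gauss_of_exp {n : ℕ} {F : Type} [NormedAddCommGroup F] [NormedSpace ℝ F]
    {h : Eu n → F} (hm : AEStronglyMeasurable h (stdGaussian n)) {C r : ℝ}
    (hb : ∀ x, ‖h x‖ ≤ C * Real.exp (r * ‖x‖)) : Integrable h (stdGaussian n) :=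
  ((integrable_exp_norm_gauss r).const_mul C).mono' hm (.of_forall hb)

/-- Cameron–Martin formula. -/
theorem gauss_shift {n : ℕ} {F : Type} [NormedAddCommGroup F] [NormedSpace ℝ F]
    (h : Eu n → F) (v : Eu n) :
    ∫ y, h (y + v) ∂(stdGaussian n) =
      ∫ y, Real.exp (⟪v, y⟫ - ‖v‖ ^ 2 / 2) • h y ∂(stdGaussian n) := by
  rw [integral_gauss, integral_gauss,
    ← integral_add_right_eq_self (fun y => gaussDens n y • Real.exp (⟪v, y⟫ - ‖v‖ ^ 2 / 2) • h y) v]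
  refine integral_congr_ae (.of_forall fun y => ?_)
  simp only [smul_smul, gaussDens]
  congr 1
  rw [mul_assoc, ← Real.exp_add]
  congr 2
  rw [norm_add_sq_real, inner_add_right, real_inner_self_eq_norm_sq, real_inner_comm]
  ring

theorem integrable_gauss_shift {n : ℕ} {F : Type} [NormedAddCommGroup F] [NormedSpace ℝ F]
    {h : Eu n → F} {v : Eu n} :
    Integrable (fun y => h (y + v)) (stdGaussian n) ↔
      Integrable (fun y => Real.exp (⟪v, y⟫ - ‖v‖ ^ 2 / 2) • h y) (stdGaussian n) := by
  rw [integrable_gauss, integrable_gauss]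
  have key := (measurePreserving_add_right (volume : Measure (Eu n)) v).integrable_comp_emb
    (measurableEmbedding_addRight v)
    (g := fun y => gaussDens n y • Real.exp (⟪v, y⟫ - ‖v‖ ^ 2 / 2) • h y)
  rw [← key]
  refine integrable_congr (.of_forall fun y => ?_)
  simp only [smul_smul, gaussDens, Function.comp]
  congr 1
  rw [mul_assoc, ← Real.exp_add]
  congr 2
  rw [norm_add_sq_real, inner_add_right, real_inner_self_eq_norm_sq, real_inner_comm]
  ring

theorem gauss_isometry {n : ℕ} {F : Type} [NormedAddCommGroup F] [NormedSpace ℝ F]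
    (L : Eu n ≃ₗᵢ[ℝ] Eu n) (h : Eu n → F) :
    ∫ y, h (L y) ∂(stdGaussian n) = ∫ y, h y ∂(stdGaussian n) := by
  rw [integral_gauss, integral_gauss,
    ← L.measurePreserving.integral_comp L.toHomeomorph.measurableEmbedding
      (fun y => gaussDens n y • h y)]
  simp [gaussDens]

theorem gauss_neg {n : ℕ} {F : Type} [NormedAddCommGroup F] [NormedSpace ℝ F]
    (h : Eu n → F) :
    ∫ y, h (-y) ∂(stdGaussian n) = ∫ y, h y ∂(stdGaussian n) :=
  gauss_isometry (LinearIsometryEquiv.neg ℝ) h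

/-- Gaussian integration by parts. -/
theorem gauss_stein {n : ℕ} {f f' : Eu n → ℝ} (e : Eu n)
    (hd : ∀ x, HasLineDerivAt ℝ f (f' x) x e) (hf : Continuous f) (hf' : Continuous f')
    {C r : ℝ} (hb : ∀ x, |f x| ≤ C * Real.exp (r * ‖x‖))
    (hb' : ∀ x, |f' x| ≤ C * Real.exp (r * ‖x‖)) :
    ∫ y, ⟪e, y⟫ * f y ∂(stdGaussian n) = ∫ y, f' y ∂(stdGaussian n) := by
  have hC : 0 ≤ C := by
    have := (abs_nonneg _).trans (hb 0)
    simpa using this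
  have i1 : Integrable f (stdGaussian n) := integrable_gauss_of_exp hf.aestronglyMeasurable hb
  have i2 : Integrable f' (stdGaussian n) := integrable_gauss_of_exp hf'.aestronglyMeasurable hb'
  have i3 : Integrable (fun y => ⟪e, y⟫ * f y) (stdGaussian n) := by
    refine integrable_gauss_of_exp (C := ‖e‖ * C) (r := 1 + r)
      (Continuous.aestronglyMeasurable (by fun_prop)) fun x => ?_
    rw [Real.norm_eq_abs, abs_mul, one_add_mul, Real.exp_add]
    have h1 := abs_real_inner_le_norm e x
    have h2 : ‖x‖ ≤ Real.exp ‖x‖ := by linarith [Real.add_one_le_exp ‖x‖]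
    calc |⟪e, x⟫| * |f x| ≤ (‖e‖ * Real.exp ‖x‖) * (C * Real.exp (r * ‖x‖)) := by
          gcongr
          · exact h1.trans (by gcongr)
          · exact hb x
      _ = _ := by ring
  rw [integral_gauss, integral_gauss]
  rw [integrable_gauss] at i1 i2 i3
  have hρ : ∀ x : Eu n, HasLineDerivAt ℝ (gaussDens n) (-(⟪e, x⟫ * gaussDens n x)) x e := by
    intro x
    unfold HasLineDerivAt gaussDens
    have h1 : HasDerivAt (fun t : ℝ => ‖x + t • e‖ ^ 2) (2 * ⟪x, e⟫) 0 := by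
      have := ((hasDerivAt_id (0 : ℝ)).smul_const e).const_add x |>.norm_sq
      simpa using this
    have h2 := ((h1.neg.div_const 2).exp).const_mul ((2 * π) ^ (-(n : ℝ) / 2))
    refine h2.congr_deriv ?_
    simp only [Pi.neg_apply, zero_smul, add_zero, real_inner_comm x e]
    ring
  have := integral_bilinear_hasLineDerivAt_right_eq_neg_left_of_integrable
    (μ := (volume : Measure (Eu n))) (f := gaussDens n)
    (f' := fun x => -(⟪e, x⟫ * gaussDens n x)) (g := f) (g' := f') (v := e)
    (B := ContinuousLinearMap.mul ℝ ℝ) (by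
      refine i3.neg.congr (.of_forall fun x => ?_)
      simp; ring) (by simpa using i2) (by simpa using i1) (fun x _ => hρ x) (fun x _ => hd x)
  simp only [ContinuousLinearMap.mul_apply'] at this
  simp only [smul_eq_mul]
  rw [this, ← integral_neg]
  congr 1; ext x; ring

theorem norm_le_exp_norm {n : ℕ} (x : Eu n) : ‖x‖ ≤ Real.exp ‖x‖ := by
  linarith [Real.add_one_le_exp ‖x‖]

theorem pow_norm_le_exp {n : ℕ} (k : ℕ) (x : Eu n) : ‖x‖ ^ k ≤ Real.exp (k * ‖x‖) := by
  rw [Real.exp_nat_mul]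
  gcongr
  exact norm_le_exp_norm x

theorem gauss_pow_moment {n : ℕ} (e : Eu n) (k : ℕ) :
    ∫ y, ⟪e, y⟫ ^ (k + 2) ∂(stdGaussian n) =
      (k + 1) * ‖e‖ ^ 2 * ∫ y, ⟪e, y⟫ ^ k ∂(stdGaussian n) := by
  have := gauss_stein (n := n) (f := fun y => ⟪e, y⟫ ^ (k + 1))
    (f' := fun y => (k + 1) * ‖e‖ ^ 2 * ⟪e, y⟫ ^ k) e (by
      intro x
      unfold HasLineDerivAt
      have h1 : HasDerivAt (fun t : ℝ => ⟪e, x + t • e⟫) (‖e‖ ^ 2) 0 := by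
        have h0 : HasDerivAt (fun t : ℝ => ⟪e, x⟫ + t * ‖e‖ ^ 2) (‖e‖ ^ 2) 0 := by
          simpa using ((hasDerivAt_id (0 : ℝ)).mul_const (‖e‖ ^ 2)).const_add ⟪e, x⟫
        convert h0 using 2 with t
        rw [inner_add_right, inner_smul_right, real_inner_self_eq_norm_sq]
      refine (h1.pow (k + 1)).congr_deriv ?_
      simp only [zero_smul, add_zero, Nat.add_sub_cancel]
      push_cast
      ring) (by fun_prop) (by fun_prop)
    (C := max (‖e‖ ^ (k + 1)) ((k + 1) * ‖e‖ ^ 2 * ‖e‖ ^ k)) (r := k + 1) (by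
      intro x
      rw [abs_pow]
      calc |⟪e, x⟫| ^ (k + 1) ≤ (‖e‖ * ‖x‖) ^ (k + 1) := by
            gcongr; exact abs_real_inner_le_norm e x
        _ = ‖e‖ ^ (k + 1) * ‖x‖ ^ (k + 1) := by ring
        _ ≤ _ := by
          gcongr
          · exact le_max_left _ _
          · exact_mod_cast pow_norm_le_exp (k + 1) x) (by
      intro x
      rw [abs_mul, abs_pow, abs_of_nonneg (by positivity)]
      calc (k + 1) * ‖e‖ ^ 2 * |⟪e, x⟫| ^ k ≤ (k + 1) * ‖e‖ ^ 2 * (‖e‖ * ‖x‖) ^ k := by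
            gcongr; exact abs_real_inner_le_norm e x
        _ = (k + 1) * ‖e‖ ^ 2 * ‖e‖ ^ k * ‖x‖ ^ k := by ring
        _ ≤ _ := by
          gcongr
          · exact le_max_right _ _
          · refine (pow_norm_le_exp k x).trans ?_
            gcongr; linarith)
  rw [integral_const_mul] at this
  rw [← this]
  congr 1; ext y; ring

theorem gauss_sq_moment {n : ℕ} (e : Eu n) :
    ∫ y, ⟪e, y⟫ ^ 2 ∂(stdGaussian n) = ‖e‖ ^ 2 := by
  simpa using gauss_pow_moment e 0

theorem gauss_four_moment {n : ℕ} (e : Eu n) :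
    ∫ y, ⟪e, y⟫ ^ 4 ∂(stdGaussian n) = 3 * ‖e‖ ^ 4 := by
  rw [gauss_pow_moment e 2, gauss_sq_moment]; push_cast; ring

theorem integrable_gauss_of_poly {n : ℕ} {F : Type} [NormedAddCommGroup F] [NormedSpace ℝ F]
    {h : Eu n → F} (hm : AEStronglyMeasurable h (stdGaussian n)) {C : ℝ} {k : ℕ} (hC : 0 ≤ C)
    (hb : ∀ x, ‖h x‖ ≤ C * ‖x‖ ^ k) : Integrable h (stdGaussian n) :=
  integrable_gauss_of_exp hm fun x => (hb x).trans (by gcongr; exact pow_norm_le_exp k x)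

theorem gauss_abs_moment {n : ℕ} (e : Eu n) (he : ‖e‖ = 1) :
    1 / 2 ≤ ∫ y, |⟪e, y⟫| ∂(stdGaussian n) := by
  have hi : ∀ k : ℕ, Integrable (fun y => ⟪e, y⟫ ^ k) (stdGaussian n) := fun k =>
    integrable_gauss_of_poly (Continuous.aestronglyMeasurable (by fun_prop)) (C := 1)
      zero_le_one (k := k) (fun x => by
        rw [norm_pow, Real.norm_eq_abs, one_mul]
        gcongr
        simpa [he] using abs_real_inner_le_norm e x)
  have h1 : ∫ y, (⟪e, y⟫ ^ 2 - 4 / 27 * ⟪e, y⟫ ^ 4) ∂(stdGaussian n) = 15 / 27 := by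
    rw [integral_sub (hi 2) ((hi 4).const_mul _), integral_const_mul, gauss_sq_moment,
      gauss_four_moment, he]
    norm_num
  have h2 : ∫ y, (⟪e, y⟫ ^ 2 - 4 / 27 * ⟪e, y⟫ ^ 4) ∂(stdGaussian n) ≤
      ∫ y, |⟪e, y⟫| ∂(stdGaussian n) := by
    refine integral_mono ((hi 2).sub ((hi 4).const_mul _)) (by simpa using (hi 1).norm) fun y => ?_
    simp only
    have h4 : ⟪e, y⟫ ^ 4 = |⟪e, y⟫| ^ 4 := ((Even.pow_abs (by decide) _)).symm
    rw [← sq_abs, h4]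
    have hs := abs_nonneg ⟪e, y⟫
    set s := |⟪e, y⟫|
    have : s - (s ^ 2 - 4 / 27 * s ^ 4) = 4 / 27 * (s * ((s - 3 / 2) ^ 2 * (s + 3))) := by ring
    have h5 : 0 ≤ s * ((s - 3 / 2) ^ 2 * (s + 3)) := by positivity
    linarith
  linarith

/-! ### Gauge functions -/

section Gauge
variable {n : ℕ} {g : Eu n → ℝ}

theorem IsGauge.add_le (hg : IsGauge g) (x y : Eu n) : g (x + y) ≤ g x + g y := by
  have h := hg.2.1.2 (Set.mem_univ x) (Set.mem_univ y) (show (0 : ℝ) ≤ 1 / 2 by norm_num)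
    (show (0 : ℝ) ≤ 1 / 2 by norm_num) (by norm_num)
  rw [← smul_add, hg.2.2 _ (by norm_num)] at h
  simp only [smul_eq_mul] at h
  linarith

theorem IsGauge.continuous (hg : IsGauge g) : Continuous g :=
  continuousOn_univ.1 (hg.2.1.continuousOn isOpen_univ)

theorem IsGauge.exists_bound (hg : IsGauge g) : ∃ b, 0 ≤ b ∧ ∀ x, g x ≤ b * ‖x‖ := by
  obtain ⟨b, hb⟩ := (isCompact_closedBall (0 : Eu n) 1).bddAbove_image
    hg.continuous.continuousOn
  refine ⟨max b 0, le_max_right _ _, fun x => ?_⟩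
  rcases eq_or_ne x 0 with rfl | hx
  · have := hg.2.2 0 le_rfl 0
    simp at this; simp [this]
  · have hx' := norm_pos_iff.2 hx
    have h1 : g (‖x‖⁻¹ • x) ≤ b := hb (Set.mem_image_of_mem _ (by simp [norm_smul, hx'.ne']))
    have h2 : g x = ‖x‖ * g (‖x‖⁻¹ • x) := by
      rw [← hg.2.2 _ hx'.le, smul_smul, mul_inv_cancel₀ hx'.ne', one_smul]
    rw [h2, mul_comm]
    gcongr
    exact h1.trans (le_max_left _ _)

theorem IsGauge.integrable (hg : IsGauge g) : Integrable g (stdGaussian n) := by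
  obtain ⟨b, hb0, hb⟩ := hg.exists_bound
  refine integrable_gauss_of_poly hg.continuous.aestronglyMeasurable hb0 (k := 1) fun x => ?_
  rw [Real.norm_of_nonneg (hg.1 x), pow_one]
  exact hb x

/-- A gauge is controlled by its Gaussian mean: a multiple of `e` is the sum of a Gaussian vector
and of its reflection. -/
theorem IsGauge.le_gauss (hg : IsGauge g) (x : Eu n) :
    g x ≤ 4 * (∫ y, g y ∂(stdGaussian n)) * ‖x‖ := by
  have key : ∀ e : Eu n, ‖e‖ = 1 → g e ≤ 4 * ∫ y, g y ∂(stdGaussian n) := by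
    intro e he
    let L : Eu n ≃ₗᵢ[ℝ] Eu n := (Submodule.span ℝ {e}).reflection
    have hL : ∀ y, y + L y = (2 * ⟪e, y⟫) • e := by
      intro y
      simp only [L, Submodule.reflection_singleton_apply, he]
      simp [mul_smul, two_smul]
    have hcL : Continuous fun y => g (L y) := hg.continuous.comp L.continuous
    obtain ⟨b, hb0, hb⟩ := hg.exists_bound
    have hiL : Integrable (fun y => g (L y)) (stdGaussian n) := by
      refine integrable_gauss_of_poly hcL.aestronglyMeasurable hb0 (k := 1) fun x => ?_
      rw [Real.norm_of_nonneg (hg.1 _), pow_one]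
      simpa using hb (L x)
    have hpos : ∀ y, (2 * max ⟪e, y⟫ 0) * g e ≤ g y + g (L y) := by
      intro y
      rcases le_total ⟪e, y⟫ 0 with h | h
      · rw [max_eq_right h]; simpa using add_nonneg (hg.1 y) (hg.1 (L y))
      · rw [max_eq_left h, ← hg.2.2 _ (by positivity), ← hL]
        exact hg.add_le _ _
    have hineq : ∀ y : Eu n, ⟪e, y⟫ + |⟪e, y⟫| = 2 * max ⟪e, y⟫ 0 := by
      intro y
      rcases le_total ⟪e, y⟫ 0 with h | h
      · rw [max_eq_right h, abs_of_nonpos h]; ring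
      · rw [max_eq_left h, abs_of_nonneg h]; ring
    have i1 : Integrable (fun y => ⟪e, y⟫) (stdGaussian n) :=
      integrable_gauss_of_poly (Continuous.aestronglyMeasurable (by fun_prop)) (C := 1)
      zero_le_one (k := 1) (fun x => by simpa [he] using abs_real_inner_le_norm e x)
    have hodd : ∫ y, ⟪e, y⟫ ∂(stdGaussian n) = 0 := by
      have := gauss_neg (n := n) fun y => ⟪e, y⟫
      simp only [inner_neg_right, integral_neg] at this
      linarith
    have h1 : ∫ y, (⟪e, y⟫ + |⟪e, y⟫|) * g e ∂(stdGaussian n) ≤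
        ∫ y, (g y + g (L y)) ∂(stdGaussian n) := by
      refine integral_mono ((i1.add i1.abs).mul_const _) (hg.integrable.add hiL) fun y => ?_
      simp only
      rw [hineq]; exact hpos y
    rw [integral_mul_const, integral_add i1 i1.abs, hodd, integral_add hg.integrable hiL,
      gauss_isometry L] at h1
    have h2 := gauss_abs_moment e he
    nlinarith [hg.1 e]
  rcases eq_or_ne x 0 with rfl | hx
  · have := hg.2.2 0 le_rfl 0
    simp at this; simp [this]
  · have hx' := norm_pos_iff.2 hx
    have h1 := key (‖x‖⁻¹ • x) (by simp [norm_smul, hx'.ne'])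
    have h2 : g x = ‖x‖ * g (‖x‖⁻¹ • x) := by
      rw [← hg.2.2 _ hx'.le, smul_smul, mul_inv_cancel₀ hx'.ne', one_smul]
    rw [h2, mul_comm]
    gcongr

end Gauge

/-! ### Second derivatives along lines -/

section SecondDeriv
variable {W : Type} [NormedAddCommGroup W] [NormedSpace ℝ W]

theorem hasDerivAt_line (w e : W) (s : ℝ) : HasDerivAt (fun s : ℝ => w + s • e) e s := by
  simpa using ((hasDerivAt_id s).smul_const e).const_add w

theorem hasDerivAt_comp_line {Φ : W → ℝ} (h : ContDiff ℝ 2 Φ) (w e : W) (s : ℝ) :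
    HasDerivAt (fun s : ℝ => Φ (w + s • e)) (fderiv ℝ Φ (w + s • e) e) s :=
  (((h.differentiable (by norm_num)) (w + s • e)).hasFDerivAt).comp_hasDerivAt s
    (hasDerivAt_line w e s)

theorem hasDerivAt_fderiv_line {Φ : W → ℝ} (h : ContDiff ℝ 2 Φ) (w e v : W) (s : ℝ) :
    HasDerivAt (fun s : ℝ => fderiv ℝ Φ (w + s • e) v)
      (fderiv ℝ (fderiv ℝ Φ) (w + s • e) e v) s := by
  have h1 : ContDiff ℝ 1 (fderiv ℝ Φ) := h.fderiv_right (by norm_num)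
  have h2 := (((h1.differentiable (by norm_num)) (w + s • e)).hasFDerivAt).comp_hasDerivAt s
    (hasDerivAt_line w e s)
  exact ((ContinuousLinearMap.apply ℝ ℝ v).hasFDerivAt.comp_hasDerivAt s h2)

theorem snd_fderiv_eq {Φ : W → ℝ} (h : ContDiff ℝ 2 Φ) (w e : W) {c' : ℝ → ℝ} {c'' : ℝ}
    (h1 : ∀ s, HasDerivAt (fun s : ℝ => Φ (w + s • e)) (c' s) s) (h2 : HasDerivAt c' c'' 0) :
    fderiv ℝ (fderiv ℝ Φ) w e e = c'' := by
  have h3 := hasDerivAt_fderiv_line h w e e 0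
  have h4 : (fun s : ℝ => fderiv ℝ Φ (w + s • e) e) = c' := by
    ext s; exact (hasDerivAt_comp_line h w e s).unique (h1 s)
  rw [h4] at h3
  simpa using h3.unique h2

theorem snd_fderiv_nonneg {Φ : W → ℝ} (h : ContDiff ℝ 2 Φ) (hc : ConvexOn ℝ Set.univ Φ)
    (w e : W) : 0 ≤ fderiv ℝ (fderiv ℝ Φ) w e e := by
  have hc' : ConvexOn ℝ Set.univ (fun s : ℝ => Φ (w + s • e)) := by
    refine ⟨convex_univ, fun s _ t _ a b ha hb hab => ?_⟩
    have := hc.2 (Set.mem_univ (w + s • e)) (Set.mem_univ (w + t • e)) ha hb hab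
    rwa [show a • (w + s • e) + b • (w + t • e) = (a + b) • w + (a • s + b • t) • e by
      simp only [smul_eq_mul]; module, hab, one_smul] at this
  have hm : Monotone (fun s : ℝ => fderiv ℝ Φ (w + s • e) e) := by
    have h1 := hc'.monotoneOn_deriv (fun x _ => (hasDerivAt_comp_line h w e x).differentiableAt)
    have h2 : deriv (fun s : ℝ => Φ (w + s • e)) = fun s : ℝ => fderiv ℝ Φ (w + s • e) e := by
      ext s; exact (hasDerivAt_comp_line h w e s).deriv
    rw [h2] at h1
    exact monotoneOn_univ.1 h1
  have h3 := hasDerivAt_fderiv_line h w e e 0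
  have h4 := hm.deriv_nonneg (x := 0)
  rw [h3.deriv] at h4
  simpa using h4

end SecondDeriv

/-! ### Gaussian smoothing of a gauge -/

/-- The convolution of `g` with the standard Gaussian measure. -/
def gsm {n : ℕ} (g : Eu n → ℝ) (x : Eu n) : ℝ := ∫ y, g (x + y) ∂(stdGaussian n)

section Smoothing
variable {n : ℕ} {g : Eu n → ℝ}

theorem IsGauge.integrable_shift (hg : IsGauge g) (x : Eu n) :
    Integrable (fun y => g (x + y)) (stdGaussian n) := by
  have hc := hg.continuous
  refine ((integrable_const (g x)).add hg.integrable).mono' 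
    (Continuous.aestronglyMeasurable (by fun_prop)) (.of_forall fun y => ?_)
  rw [Real.norm_of_nonneg (hg.1 _)]
  exact hg.add_le x y

theorem gsm_le (hg : IsGauge g) (x z : Eu n) : gsm g (x + z) ≤ gsm g x + g z := by
  unfold gsm
  have : ∫ y, (g (x + y) + g z) ∂(stdGaussian n) = ∫ y, g (x + y) ∂(stdGaussian n) + g z := by
    rw [integral_add (hg.integrable_shift x) (integrable_const _)]; simp
  rw [← this]
  refine integral_mono (hg.integrable_shift _) ((hg.integrable_shift x).add (integrable_const _))
    fun y => ?_
  have := hg.add_le (x + y) z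
  simpa [add_right_comm] using this

theorem gsm_zero : gsm g 0 = ∫ y, g y ∂(stdGaussian n) := by simp [gsm]

theorem gsm_nonneg (hg : IsGauge g) (x : Eu n) : 0 ≤ gsm g x := integral_nonneg fun _ => hg.1 _

theorem gsm_ge (hg : IsGauge g) (x : Eu n) : g x ≤ gsm g x := by
  have h1 : gsm g x = ∫ y, g (x - y) ∂(stdGaussian n) := by
    have := gauss_neg (n := n) fun y => g (x + y)
    simpa [gsm, sub_eq_add_neg] using this.symm
  have hi : Integrable (fun y => g (x - y)) (stdGaussian n) := by
    obtain ⟨b, hb0, hb⟩ := hg.exists_bound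
    have hc := hg.continuous
    refine integrable_gauss_of_exp (C := b * Real.exp ‖x‖) (r := 1)
      (Continuous.aestronglyMeasurable (by fun_prop)) fun y => ?_
    rw [Real.norm_of_nonneg (hg.1 _), mul_assoc, ← Real.exp_add, one_mul]
    refine (hb _).trans ?_
    gcongr
    linarith [norm_sub_le x y, Real.add_one_le_exp (‖x‖ + ‖y‖)]
  have h2 : ∫ _y, 2 * g x ∂(stdGaussian n) ≤ ∫ y, (g (x + y) + g (x - y)) ∂(stdGaussian n) := by
    refine integral_mono (integrable_const _) ((hg.integrable_shift x).add hi) fun y => ?_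
    have := hg.add_le (x + y) (x - y)
    rw [show x + y + (x - y) = (2 : ℝ) • x by module, hg.2.2 2 (by norm_num)] at this
    exact this
  rw [integral_add (hg.integrable_shift x) hi, ← h1] at h2
  simp only [integral_const, probReal_univ, one_smul] at h2
  change 2 * g x ≤ gsm g x + gsm g x at h2
  linarith

theorem gsm_convex (hg : IsGauge g) : ConvexOn ℝ Set.univ (gsm g) := by
  refine ⟨convex_univ, fun x _ z _ a b ha hb hab => ?_⟩
  unfold gsm
  simp only [smul_eq_mul]
  rw [← integral_const_mul, ← integral_const_mul, ← integral_add
    ((hg.integrable_shift x).const_mul a) ((hg.integrable_shift z).const_mul b)]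
  refine integral_mono (hg.integrable_shift _) (((hg.integrable_shift x).const_mul a).add
    ((hg.integrable_shift z).const_mul b)) fun y => ?_
  have := hg.2.1.2 (Set.mem_univ (x + y)) (Set.mem_univ (z + y)) ha hb hab
  refine le_trans (le_of_eq ?_) this
  congr 1
  have h1 : y = (a + b) • y := by rw [hab, one_smul]
  nth_rewrite 1 [h1]
  module

/-- The Gaussian Laplace transform of `k`. -/
def gLap (k : Eu n → ℝ) (v : Eu n) : ℝ := ∫ y, Real.exp ⟪y, v⟫ * k y ∂(stdGaussian n)

/-- Continuous functions of at most exponential growth. -/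
def ExpCont (k : Eu n → ℝ) : Prop :=
  Continuous k ∧ ∃ C r : ℝ, ∀ x, ‖k x‖ ≤ C * Real.exp (r * ‖x‖)

theorem ExpCont.integrable_exp {k : Eu n → ℝ} (hk : ExpCont k) (r : ℝ) :
    Integrable (fun y => Real.exp (r * ‖innerSL ℝ y‖) * ‖k y‖) (stdGaussian n) := by
  obtain ⟨hc, C, r', hb⟩ := hk
  refine integrable_gauss_of_exp (C := C) (r := r + r')
    (Continuous.aestronglyMeasurable (by fun_prop)) fun x => ?_
  rw [norm_mul, norm_norm, innerSL_apply_norm, Real.norm_of_nonneg (Real.exp_nonneg _),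
    add_mul, Real.exp_add]
  calc Real.exp (r * ‖x‖) * ‖k x‖ ≤ Real.exp (r * ‖x‖) * (C * Real.exp (r' * ‖x‖)) := by
        gcongr; exact hb x
    _ = _ := by ring

theorem ExpCont.integrable {k : Eu n → ℝ} (hk : ExpCont k) (v : Eu n) :
    Integrable (fun y => Real.exp ⟪y, v⟫ * k y) (stdGaussian n) := by
  have := laplaceT_integrable (ν := stdGaussian n) (T := fun y : Eu n => innerSL ℝ y) (k := k)
    (innerSL ℝ).continuous.aestronglyMeasurable hk.1.aestronglyMeasurable hk.integrable_exp v
  simpa using this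

theorem gLap_eq (k : Eu n → ℝ) :
    gLap k = laplaceT (stdGaussian n) (fun y : Eu n => innerSL ℝ y) k := by
  ext v; simp [gLap, laplaceT]

theorem gLap_contDiff {k : Eu n → ℝ} (hk : ExpCont k) (m : ℕ) : ContDiff ℝ m (gLap k) := by
  rw [gLap_eq]
  exact laplaceT_contDiff m (innerSL ℝ).continuous.aestronglyMeasurable
    hk.1.aestronglyMeasurable hk.integrable_exp

theorem gLap_fderiv {k : Eu n → ℝ} (hk : ExpCont k) (v e : Eu n) :
    fderiv ℝ (gLap k) v e = gLap (fun y => ⟪y, e⟫ * k y) v := by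
  have h := laplaceT_hasFDerivAt (ν := stdGaussian n) (T := fun y : Eu n => innerSL ℝ y) (k := k)
    (innerSL ℝ).continuous.aestronglyMeasurable hk.1.aestronglyMeasurable hk.integrable_exp v
  rw [gLap_eq, h.fderiv]
  have h2 := laplaceT_integrable (ν := stdGaussian n) (T := fun y : Eu n => innerSL ℝ y)
    (innerSL ℝ).continuous.aestronglyMeasurable (aesm_laplaceD 
    (innerSL ℝ).continuous.aestronglyMeasurable hk.1.aestronglyMeasurable)
    (laplaceD_integrable_exp (innerSL ℝ).continuous.aestronglyMeasurable 
      hk.1.aestronglyMeasurable hk.integrable_exp) v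
  rw [laplaceT, ContinuousLinearMap.integral_apply h2]
  simp [gLap, laplaceD]

theorem ExpCont.inner_mul {k : Eu n → ℝ} (hk : ExpCont k) (e : Eu n) :
    ExpCont fun y => ⟪y, e⟫ * k y := by
  obtain ⟨hc, C, r', hb⟩ := hk
  refine ⟨by fun_prop, ‖e‖ * C, 1 + r', fun x => ?_⟩
  rw [norm_mul, add_mul, Real.exp_add, one_mul]
  calc ‖⟪x, e⟫‖ * ‖k x‖ ≤ (Real.exp ‖x‖ * ‖e‖) * (C * Real.exp (r' * ‖x‖)) := by
        gcongr
        · exact (norm_inner_le_norm x e).trans (by gcongr; exact norm_le_exp_norm x)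
        · exact hb x
    _ = _ := by ring

theorem gLap_line {k : Eu n → ℝ} (hk : ExpCont k) (v e : Eu n) (s : ℝ) :
    HasDerivAt (fun s : ℝ => gLap k (v + s • e)) (gLap (fun y => ⟪y, e⟫ * k y) (v + s • e)) s := by
  rw [← gLap_fderiv hk]
  exact hasDerivAt_comp_line (gLap_contDiff hk 2) v e s

theorem IsGauge.expCont (hg : IsGauge g) : ExpCont g := by
  obtain ⟨b, hb0, hb⟩ := hg.exists_bound
  refine ⟨hg.continuous, b, 1, fun x => ?_⟩
  rw [Real.norm_of_nonneg (hg.1 x), one_mul]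
  exact (hb x).trans (by gcongr; exact norm_le_exp_norm x)

theorem gsm_eq (g : Eu n → ℝ) (x : Eu n) :
    gsm g x = Real.exp (-(‖x‖ ^ 2 / 2)) * gLap g x := by
  have := gauss_shift g x
  simp only [add_comm _ x] at this
  rw [gsm, this, gLap, ← integral_const_mul]
  congr 1; ext y
  rw [smul_eq_mul, sub_eq_add_neg, Real.exp_add, real_inner_comm]
  ring

theorem gsm_contDiff (hg : IsGauge g) : ContDiff ℝ 2 (gsm g) := by
  rw [funext (gsm_eq g)]
  have h2 : ContDiff ℝ 2 (gLap g) := gLap_contDiff hg.expCont 2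
  have h1 : ContDiff ℝ 2 fun x : Eu n => Real.exp (-(‖x‖ ^ 2 / 2)) :=
    ((contDiff_norm_sq ℝ).div_const 2).neg.exp
  exact h1.mul h2

theorem gsm_psd (hg : IsGauge g) (x e : Eu n) : 0 ≤ fderiv ℝ (fderiv ℝ (gsm g)) x e e :=
  snd_fderiv_nonneg (gsm_contDiff hg) (gsm_convex hg) x e

theorem hasDerivAt_exp_line (x e : Eu n) (s : ℝ) :
    HasDerivAt (fun s : ℝ => Real.exp (-(‖x + s • e‖ ^ 2 / 2)))
      (-⟪x + s • e, e⟫ * Real.exp (-(‖x + s • e‖ ^ 2 / 2))) s := by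
  have h1 := (((hasDerivAt_line x e s).norm_sq).div_const 2).fun_neg.exp
  refine h1.congr_deriv ?_
  ring

theorem gsm_line (hg : IsGauge g) (x e : Eu n) (s : ℝ) :
    HasDerivAt (fun s : ℝ => gsm g (x + s • e))
      (Real.exp (-(‖x + s • e‖ ^ 2 / 2)) * (gLap (fun y => ⟪y, e⟫ * g y) (x + s • e)
        - ⟪x + s • e, e⟫ * gLap g (x + s • e))) s := by
  rw [funext (gsm_eq g)]
  have := (hasDerivAt_exp_line x e s).mul (gLap_line hg.expCont x e s)
  refine this.congr_deriv ?_
  ring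

theorem gsm_fderiv (hg : IsGauge g) (x e : Eu n) :
    fderiv ℝ (gsm g) x e = Real.exp (-(‖x‖ ^ 2 / 2)) * (gLap (fun y => ⟪y, e⟫ * g y) x
        - ⟪x, e⟫ * gLap g x) := by
  have h1 := hasDerivAt_comp_line (gsm_contDiff hg) x e 0
  have h2 := h1.unique (gsm_line hg x e 0)
  simpa using h2

theorem gsm_snd (hg : IsGauge g) (x e : Eu n) :
    fderiv ℝ (fderiv ℝ (gsm g)) x e e = Real.exp (-(‖x‖ ^ 2 / 2)) *
      (gLap (fun y => ⟪y, e⟫ * (⟪y, e⟫ * g y)) x - 2 * ⟪x, e⟫ * gLap (fun y => ⟪y, e⟫ * g y) x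
        + (⟪x, e⟫ ^ 2 - ‖e‖ ^ 2) * gLap g x) := by
  refine snd_fderiv_eq (gsm_contDiff hg) x e (gsm_line hg x e) ?_
  have hin : HasDerivAt (fun s : ℝ => ⟪x + s • e, e⟫) (‖e‖ ^ 2) 0 := by
    have := (hasDerivAt_line x e 0).inner ℝ (hasDerivAt_const (0 : ℝ) e)
    simpa using this
  have h := (hasDerivAt_exp_line x e 0).mul (((gLap_line (hg.expCont.inner_mul e) x e 0)).sub
    (hin.mul (gLap_line hg.expCont x e 0)))
  refine h.congr_deriv ?_
  simp only [zero_smul, add_zero, Pi.sub_apply, Pi.mul_apply]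
  ring

/-- Differentiating in the scaling parameter `r`, using that `g` is homogeneous. -/
theorem gauge_scaling (hg : IsGauge g) (v : Eu n) :
    ∫ y : Eu n, g y * (⟪y, v⟫ - ‖y‖ ^ 2) * Real.exp (⟪y, v⟫ - ‖y‖ ^ 2 / 2) =
      -(n + 1) * ∫ y : Eu n, g y * Real.exp (⟪y, v⟫ - ‖y‖ ^ 2 / 2) := by
  obtain ⟨b, hb0, hb⟩ := hg.exists_bound
  have hc := hg.continuous
  set J : ℝ → ℝ := fun r => ∫ y : Eu n, g y * Real.exp (r * ⟪y, v⟫ - r ^ 2 * (‖y‖ ^ 2 / 2)) with hJ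
  have hscale : ∀ r : ℝ, 0 < r → J r = r⁻¹ ^ (n + 1) * J 1 := by
    intro r hr
    have h := Measure.integral_comp_smul (volume : Measure (Eu n))
      (fun y => g y * Real.exp (⟪y, v⟫ - ‖y‖ ^ 2 / 2)) r
    have h' : ∀ y : Eu n, g (r • y) * Real.exp (⟪r • y, v⟫ - ‖r • y‖ ^ 2 / 2) =
        r * (g y * Real.exp (r * ⟪y, v⟫ - r ^ 2 * (‖y‖ ^ 2 / 2))) := by
      intro y
      rw [hg.2.2 r hr.le, norm_smul, Real.norm_of_nonneg hr.le, real_inner_smul_left, mul_assoc]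
      congr 4; ring
    simp only [h', integral_const_mul, finrank_euclideanSpace_fin] at h
    rw [abs_of_pos (by positivity)] at h
    have hJ1 : J 1 = ∫ y : Eu n, g y * Real.exp (⟪y, v⟫ - ‖y‖ ^ 2 / 2) := by simp [hJ]
    rw [← hJ1, smul_eq_mul] at h
    change r * J r = _ at h
    rw [pow_succ', inv_pow, mul_assoc, ← h, ← mul_assoc, inv_mul_cancel₀ hr.ne', one_mul]
  have hd1 : HasDerivAt J (-(n + 1) * J 1) 1 := by
    have h1 : HasDerivAt (fun r : ℝ => r⁻¹ ^ (n + 1) * J 1) (-(n + 1) * J 1) 1 := by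
      have := (((hasDerivAt_inv (one_ne_zero (α := ℝ))).fun_pow (n + 1))).mul_const (J 1)
      refine this.congr_deriv ?_
      simp
    exact h1.congr_of_eventuallyEq (by
      filter_upwards [Ioi_mem_nhds (show (0 : ℝ) < 1 by norm_num)] with r hr using hscale r hr)
  have hC : 0 ≤ b * (‖v‖ + 2) * Real.exp (4 * (3 + 2 * ‖v‖) ^ 2) := by positivity
  have key : ∀ r ∈ Metric.ball (1 : ℝ) (1 / 2), ∀ y : Eu n, ∀ c : ℝ,
      |c| ≤ b * (‖v‖ + 2) * Real.exp (3 * ‖y‖) →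
      |c * Real.exp (r * ⟪y, v⟫ - r ^ 2 * (‖y‖ ^ 2 / 2))| ≤
        b * (‖v‖ + 2) * Real.exp (4 * (3 + 2 * ‖v‖) ^ 2) * Real.exp (-(1 / 16) * ‖y‖ ^ 2) := by
    intro r hr y c hcb
    rw [Real.ball_eq_Ioo, Set.mem_Ioo] at hr
    rw [abs_mul, abs_of_pos (Real.exp_pos _)]
    calc _ ≤ (b * (‖v‖ + 2) * Real.exp (3 * ‖y‖)) *
          Real.exp (r * ⟪y, v⟫ - r ^ 2 * (‖y‖ ^ 2 / 2)) := by gcongr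
      _ = b * (‖v‖ + 2) * Real.exp (3 * ‖y‖ + (r * ⟪y, v⟫ - r ^ 2 * (‖y‖ ^ 2 / 2))) := by
          rw [Real.exp_add]; ring
      _ ≤ b * (‖v‖ + 2) * Real.exp (4 * (3 + 2 * ‖v‖) ^ 2 + -(1 / 16) * ‖y‖ ^ 2) := by
          refine mul_le_mul_of_nonneg_left (Real.exp_le_exp.2 ?_) (by positivity)
          have h1 : r * ⟪y, v⟫ ≤ 2 * (‖y‖ * ‖v‖) := by
            have h2 := abs_real_inner_le_norm y v
            have h3 : r * ⟪y, v⟫ ≤ r * |⟪y, v⟫| := by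
              gcongr
              · linarith
              · exact le_abs_self _
            nlinarith [abs_nonneg ⟪y, v⟫]
          have h4 : 1 / 4 ≤ r ^ 2 := by nlinarith
          nlinarith [sq_nonneg (2 * (3 + 2 * ‖v‖) - ‖y‖ / 4), sq_nonneg ‖y‖]
      _ = _ := by rw [Real.exp_add]; ring
  have hd2 := (hasDerivAt_integral_of_dominated_loc_of_deriv_le (𝕜 := ℝ)
    (μ := (volume : Measure (Eu n)))
    (F := fun r y => g y * Real.exp (r * ⟪y, v⟫ - r ^ 2 * (‖y‖ ^ 2 / 2)))
    (F' := fun r y => g y * (⟪y, v⟫ - r * ‖y‖ ^ 2) *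
      Real.exp (r * ⟪y, v⟫ - r ^ 2 * (‖y‖ ^ 2 / 2)))
    (x₀ := 1) (s := Metric.ball (1 : ℝ) (1 / 2))
    (bound := fun y => b * (‖v‖ + 2) * Real.exp (4 * (3 + 2 * ‖v‖) ^ 2) *
      Real.exp (-(1 / 16) * ‖y‖ ^ 2))
    (Metric.ball_mem_nhds _ (by norm_num))
    (.of_forall fun r => Continuous.aestronglyMeasurable (by fun_prop)) ?_
    (Continuous.aestronglyMeasurable (by fun_prop)) ?_
    ((integrable_exp_neg_sq (by norm_num)).const_mul _) ?_).2
  · have h3 := hd2.unique hd1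
    simp only [one_mul, one_pow] at h3
    rw [h3, hJ]
    simp
  · refine ((integrable_exp_neg_sq (by norm_num)).const_mul _).mono'
      (Continuous.aestronglyMeasurable (by fun_prop)) (.of_forall fun y => 
        key 1 (Metric.mem_ball_self (by norm_num)) y _ ?_)
    rw [abs_of_nonneg (hg.1 y)]
    calc g y ≤ b * 1 * ‖y‖ := by rw [mul_one]; exact hb y
      _ ≤ _ := by
        gcongr
        · linarith [norm_nonneg v]
        · linarith [Real.add_one_le_exp (3 * ‖y‖), norm_nonneg y]
  · refine .of_forall fun y r hr => key r hr y _ ?_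
    have hr' := hr
    rw [Real.ball_eq_Ioo, Set.mem_Ioo] at hr'
    rw [abs_mul, abs_of_nonneg (hg.1 y)]
    have h2 : ‖y‖ ^ 2 ≤ Real.exp (3 * ‖y‖) := (pow_norm_le_exp 2 y).trans (by
      gcongr; norm_num)
    have h3 : ‖y‖ ^ 3 ≤ Real.exp (3 * ‖y‖) := by exact_mod_cast pow_norm_le_exp 3 y
    have h4 : |⟪y, v⟫ - r * ‖y‖ ^ 2| ≤ ‖y‖ * ‖v‖ + 2 * ‖y‖ ^ 2 := by
      refine (abs_sub _ _).trans (add_le_add (abs_real_inner_le_norm y v) ?_)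
      rw [abs_of_nonneg (by have : 0 ≤ r := by linarith
                            positivity)]
      gcongr
      linarith
    calc g y * |⟪y, v⟫ - r * ‖y‖ ^ 2| ≤ (b * ‖y‖) * (‖y‖ * ‖v‖ + 2 * ‖y‖ ^ 2) := by
          gcongr
          exact hb y
      _ = b * (‖v‖ * ‖y‖ ^ 2 + 2 * ‖y‖ ^ 3) := by ring
      _ ≤ b * (‖v‖ * Real.exp (3 * ‖y‖) + 2 * Real.exp (3 * ‖y‖)) := by gcongr
      _ = _ := by ring
  · refine .of_forall fun y r _ => ?_
    have h1 : HasDerivAt (fun r : ℝ => r * ⟪y, v⟫ - r ^ 2 * (‖y‖ ^ 2 / 2))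
        (⟪y, v⟫ - r * ‖y‖ ^ 2) r := by
      refine (((hasDerivAt_id r).mul_const ⟪y, v⟫).sub
        (((hasDerivAt_id r).fun_pow 2).mul_const (‖y‖ ^ 2 / 2))).congr_deriv ?_
      simp; ring
    refine ((h1.exp).const_mul (g y)).congr_deriv ?_
    ring

theorem gauge_scaling_gauss (hg : IsGauge g) (v : Eu n) :
    gLap (fun y => (⟪y, v⟫ - ‖y‖ ^ 2) * g y) v = -(n + 1) * gLap g v := by
  have h := gauge_scaling hg v
  unfold gLap
  rw [integral_gauss, integral_gauss]
  have e1 : ∀ k : Eu n → ℝ, (∫ y : Eu n, gaussDens n y • (Real.exp ⟪y, v⟫ * k y)) =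
      (2 * π) ^ (-(n : ℝ) / 2) * ∫ y : Eu n, k y * Real.exp (⟪y, v⟫ - ‖y‖ ^ 2 / 2) := by
    intro k
    rw [← integral_const_mul]
    congr 1; ext y
    rw [smul_eq_mul, gaussDens, sub_eq_add_neg, Real.exp_add, ← neg_div]
    ring
  rw [e1, e1]
  simp only [mul_comm _ (g _)]
  rw [h]; ring

theorem sum_sq_basis (y : Eu n) : ∑ i, ⟪y, EuclideanSpace.single i (1 : ℝ)⟫ ^ 2 = ‖y‖ ^ 2 := by
  simp [EuclideanSpace.inner_single_right, EuclideanSpace.norm_sq_eq]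

theorem sum_basis_smul (x : Eu n) :
    ∑ i, x i • EuclideanSpace.single i (1 : ℝ) = x := by
  ext j
  simp [Finset.sum_apply, Pi.single_apply]

theorem gLap_sum {ι : Type} (s : Finset ι) {k : ι → Eu n → ℝ} (hk : ∀ i ∈ s, ExpCont (k i))
    (v : Eu n) : gLap (fun y => ∑ i ∈ s, k i y) v = ∑ i ∈ s, gLap (k i) v := by
  unfold gLap
  rw [← integral_finsetSum _ fun i hi => (hk i hi).integrable v]
  simp [Finset.mul_sum]

/-- Euler's relation for the smoothing: the Laplacian is `P - DP x`. -/
theorem gsm_laplacian (hg : IsGauge g) (x : Eu n) :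
    ∑ i, fderiv ℝ (fderiv ℝ (gsm g)) x (EuclideanSpace.single i 1) (EuclideanSpace.single i 1) =
      gsm g x - fderiv ℝ (gsm g) x x := by
  set e : Fin n → Eu n := fun i => EuclideanSpace.single i (1 : ℝ) with he
  have hek : ∀ i, ExpCont fun y => ⟪y, e i⟫ * g y := fun i => hg.expCont.inner_mul _
  have hek2 : ∀ i, ExpCont fun y => ⟪y, e i⟫ * (⟪y, e i⟫ * g y) := fun i => (hek i).inner_mul _
  have s1 : ∑ i, gLap (fun y => ⟪y, e i⟫ * (⟪y, e i⟫ * g y)) x =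
      gLap (fun y => ‖y‖ ^ 2 * g y) x := by
    rw [← gLap_sum _ fun i _ => hek2 i]
    congr 1; ext y
    rw [← sum_sq_basis, Finset.sum_mul]
    exact Finset.sum_congr rfl fun i _ => by ring
  have hx : ∀ y : Eu n, ∑ i, ⟪x, e i⟫ * ⟪y, e i⟫ = ⟪y, x⟫ := by
    intro y
    simp [he, PiLp.inner_apply]
  have s2 : ∑ i, 2 * ⟪x, e i⟫ * gLap (fun y => ⟪y, e i⟫ * g y) x =
      2 * gLap (fun y => ⟪y, x⟫ * g y) x := by
    have : (fun y => ⟪y, x⟫ * g y) = fun y => ∑ i, ⟪x, e i⟫ * (⟪y, e i⟫ * g y) := by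
      ext y; rw [← hx, Finset.sum_mul]; exact Finset.sum_congr rfl fun i _ => by ring
    rw [this, gLap_sum _ fun i _ => ?_, Finset.mul_sum]
    · refine Finset.sum_congr rfl fun i _ => ?_
      rw [mul_assoc]; congr 1
      unfold gLap
      rw [← integral_const_mul]; congr 1; ext y; ring
    · obtain ⟨hc, C, r, hb⟩ := hek i
      refine ⟨by fun_prop, ‖⟪x, e i⟫‖ * C, r, fun y => ?_⟩
      rw [norm_mul, mul_assoc]; gcongr; exact hb y
  have s3 : ∑ i, (⟪x, e i⟫ ^ 2 - ‖e i‖ ^ 2) * gLap g x = (‖x‖ ^ 2 - n) * gLap g x := by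
    rw [← Finset.sum_mul, Finset.sum_sub_distrib, sum_sq_basis]
    simp [he]
  have s4 : gLap (fun y => (⟪y, x⟫ - ‖y‖ ^ 2) * g y) x =
      gLap (fun y => ⟪y, x⟫ * g y) x - gLap (fun y => ‖y‖ ^ 2 * g y) x := by
    unfold gLap
    rw [← integral_sub ((hg.expCont.inner_mul x).integrable x) (ExpCont.integrable ?_ x)]
    · congr 1; ext y; ring
    · have : (fun y => ‖y‖ ^ 2 * g y) = fun y => ∑ i, ⟪y, e i⟫ * (⟪y, e i⟫ * g y) := by
        ext y; rw [← sum_sq_basis, Finset.sum_mul]; exact Finset.sum_congr rfl fun i _ => by ring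
      obtain ⟨b, hb0, hb⟩ := hg.exists_bound
      have hc := hg.continuous
      refine ⟨by fun_prop, b, 3, fun y => ?_⟩
      rw [norm_mul, Real.norm_of_nonneg (by positivity), Real.norm_of_nonneg (hg.1 y)]
      have h3 : ‖y‖ ^ 3 ≤ Real.exp (3 * ‖y‖) := by exact_mod_cast pow_norm_le_exp 3 y
      calc ‖y‖ ^ 2 * g y ≤ ‖y‖ ^ 2 * (b * ‖y‖) := by gcongr; exact hb y
        _ = b * ‖y‖ ^ 3 := by ring
        _ ≤ _ := by gcongr
  rw [gauge_scaling_gauss hg] at s4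
  simp only [gsm_snd hg]
  rw [← Finset.mul_sum, Finset.sum_add_distrib, Finset.sum_sub_distrib, s1, s2, s3,
    gsm_fderiv hg, gsm_eq, real_inner_self_eq_norm_sq]
  have : gLap (fun y => ‖y‖ ^ 2 * g y) x =
      gLap (fun y => ⟪y, x⟫ * g y) x + (n + 1) * gLap g x := by linarith
  rw [this]; ring

/-- By convexity `P 0 ≥ P x - DP x`, and `P 0` is the Gaussian mean of `g`. -/
theorem gsm_laplacian_le (hg : IsGauge g) (x : Eu n) :
    ∑ i, fderiv ℝ (fderiv ℝ (gsm g)) x (EuclideanSpace.single i 1) (EuclideanSpace.single i 1) ≤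
      ∫ y, g y ∂(stdGaussian n) := by
  rw [gsm_laplacian hg, ← gsm_zero]
  have h1 := hasDerivAt_comp_line (gsm_contDiff hg) x (-x) 0
  have hc : ConvexOn ℝ Set.univ (fun s : ℝ => gsm g (x + s • (-x))) := by
    refine ⟨convex_univ, fun s _ t _ a b ha hb hab => ?_⟩
    have := (gsm_convex hg).2 (Set.mem_univ (x + s • (-x))) (Set.mem_univ (x + t • (-x)))
      ha hb hab
    rwa [show a • (x + s • (-x)) + b • (x + t • (-x)) = (a + b) • x + (a • s + b • t) • (-x) by
      simp only [smul_eq_mul]; module, hab, one_smul] at this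
  have h2 := hc.le_slope_of_hasDerivAt (Set.mem_univ 0) (Set.mem_univ 1) one_pos h1
  simp [slope] at h2
  linarith

/-- By convexity and subadditivity, `DP x ≤ P (2 x) - P x ≤ g x`. -/
theorem gsm_laplacian_ge (hg : IsGauge g) (x : Eu n) :
    gsm g x - g x ≤
    ∑ i, fderiv ℝ (fderiv ℝ (gsm g)) x (EuclideanSpace.single i 1)
      (EuclideanSpace.single i 1) := by
  rw [gsm_laplacian hg]
  have h1 := hasDerivAt_comp_line (gsm_contDiff hg) x x 0
  have hc : ConvexOn ℝ Set.univ (fun s : ℝ => gsm g (x + s • x)) := by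
    refine ⟨convex_univ, fun s _ t _ a b ha hb hab => ?_⟩
    have := (gsm_convex hg).2 (Set.mem_univ (x + s • x)) (Set.mem_univ (x + t • x))
      ha hb hab
    rwa [show a • (x + s • x) + b • (x + t • x) = (a + b) • x + (a • s + b • t) • x by
      simp only [smul_eq_mul]; module, hab, one_smul] at this
  have h2 := hc.le_slope_of_hasDerivAt (Set.mem_univ 0) (Set.mem_univ 1) one_pos h1
  simp [slope] at h2
  linarith [gsm_le hg x x]

end Smoothing

/-! ### Exponential tilts of a compactly supported measure -/

/-- The exponent `⟪x, θ⟫ - t ‖x‖² / 2` of the tilt, as a linear form in `(t, θ)`. -/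
def tlin {n : ℕ} (x : Eu n) : ℝ × Eu n →L[ℝ] ℝ :=
  (innerSL ℝ x).comp (ContinuousLinearMap.snd ℝ ℝ (Eu n)) -
    (‖x‖ ^ 2 / 2) • ContinuousLinearMap.fst ℝ ℝ (Eu n)

/-- The unnormalised integral of `k` against the tilt of `μ` by the parameter `p = (t, θ)`. -/
def tl {n : ℕ} {W : Type} [NormedAddCommGroup W] [NormedSpace ℝ W]
    (μ : Measure (Eu n)) (k : Eu n → W) (p : ℝ × Eu n) : W :=
  ∫ x, Real.exp (tlin x p) • k x ∂μ

/-- The partition function of the tilt. -/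
def tZ {n : ℕ} (μ : Measure (Eu n)) (p : ℝ × Eu n) : ℝ := tl μ (fun _ => (1 : ℝ)) p

/-- The mean of `k` under the tilted probability measure. -/
def tE {n : ℕ} {W : Type} [NormedAddCommGroup W] [NormedSpace ℝ W]
    (μ : Measure (Eu n)) (k : Eu n → W) (p : ℝ × Eu n) : W := (tZ μ p)⁻¹ • tl μ k p

section Tilt
variable {n : ℕ} {W : Type} [NormedAddCommGroup W] [NormedSpace ℝ W]
  {μ : Measure (Eu n)} [IsProbabilityMeasure μ] {R : ℝ}

theorem tlin_apply (x : Eu n) (p : ℝ × Eu n) :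
    tlin x p = ⟪x, p.2⟫ - ‖x‖ ^ 2 / 2 * p.1 := by simp [tlin]

theorem continuous_tlin : Continuous (tlin : Eu n → (ℝ × Eu n →L[ℝ] ℝ)) := by
  unfold tlin
  refine Continuous.sub ?_ (by fun_prop)
  exact ((innerSL ℝ).continuous.clm_comp_const _)

theorem continuous_tlin_apply (d : ℝ × Eu n) : Continuous fun x : Eu n => tlin x d := by
  simp only [tlin_apply]; fun_prop

theorem exists_bound_ball {k : Eu n → W} (hk : Continuous k) (hR : ∀ᵐ x ∂μ, ‖x‖ ≤ R) :
    ∃ C, 0 ≤ C ∧ ∀ᵐ x ∂μ, ‖k x‖ ≤ C := by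
  obtain ⟨C, hC⟩ := (isCompact_closedBall (0 : Eu n) R).exists_bound_of_continuousOn
    hk.continuousOn
  refine ⟨max C 0, le_max_right _ _, ?_⟩
  filter_upwards [hR] with x hx
  exact (hC x (by simpa using hx)).trans (le_max_left _ _)

theorem tl_exp_integrable {k : Eu n → W} (hk : Continuous k) (hR : ∀ᵐ x ∂μ, ‖x‖ ≤ R) (r : ℝ) :
    Integrable (fun x => Real.exp (r * ‖tlin x‖) * ‖k x‖) μ := by
  have hc : Continuous (fun x => Real.exp (r * ‖tlin x‖) * ‖k x‖) := by
    have := continuous_tlin (n := n)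
    fun_prop
  obtain ⟨C, -, hC⟩ := exists_bound_ball hc hR
  exact Integrable.of_bound hc.aestronglyMeasurable C hC

theorem tl_integrable {k : Eu n → W} (hk : Continuous k) (hR : ∀ᵐ x ∂μ, ‖x‖ ≤ R)
    (p : ℝ × Eu n) : Integrable (fun x => Real.exp (tlin x p) • k x) μ :=
  laplaceT_integrable continuous_tlin.aestronglyMeasurable hk.aestronglyMeasurable
    (tl_exp_integrable hk hR) p

theorem tl_hasFDerivAt {k : Eu n → W} (hk : Continuous k) (hR : ∀ᵐ x ∂μ, ‖x‖ ≤ R)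
    (p : ℝ × Eu n) : HasFDerivAt (tl μ k) (fderiv ℝ (tl μ k) p) p :=
  (laplaceT_hasFDerivAt continuous_tlin.aestronglyMeasurable hk.aestronglyMeasurable
    (tl_exp_integrable hk hR) p).differentiableAt.hasFDerivAt

theorem tl_contDiff {k : Eu n → W} (hk : Continuous k) (hR : ∀ᵐ x ∂μ, ‖x‖ ≤ R) (m : ℕ) :
    ContDiff ℝ m (tl μ k) :=
  laplaceT_contDiff m continuous_tlin.aestronglyMeasurable hk.aestronglyMeasurable
    (tl_exp_integrable hk hR)

theorem tl_continuous {k : Eu n → W} (hk : Continuous k) (hR : ∀ᵐ x ∂μ, ‖x‖ ≤ R) :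
    Continuous (tl μ k) := (tl_contDiff hk hR 0).continuous

theorem tl_fderiv {k : Eu n → W} (hk : Continuous k) (hR : ∀ᵐ x ∂μ, ‖x‖ ≤ R)
    (p d : ℝ × Eu n) : fderiv ℝ (tl μ k) p d = tl μ (fun x => tlin x d • k x) p := by
  have hT := (continuous_tlin (n := n)).aestronglyMeasurable (μ := μ)
  have h := laplaceT_hasFDerivAt hT hk.aestronglyMeasurable (tl_exp_integrable hk hR) p
  have h0 : fderiv ℝ (tl μ k) p = _ := h.fderiv
  have h2 := laplaceT_integrable hT (aesm_laplaceD hT hk.aestronglyMeasurable)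
    (laplaceD_integrable_exp hT hk.aestronglyMeasurable (tl_exp_integrable hk hR)) p
  rw [h0, laplaceT, ContinuousLinearMap.integral_apply h2]
  rfl

theorem tl_line {k : Eu n → W} (hk : Continuous k) (hR : ∀ᵐ x ∂μ, ‖x‖ ≤ R)
    (p d : ℝ × Eu n) (s : ℝ) :
    HasDerivAt (fun s : ℝ => tl μ k (p + s • d)) (tl μ (fun x => tlin x d • k x) (p + s • d)) s := by
  rw [← tl_fderiv hk hR]
  exact (tl_hasFDerivAt hk hR _).comp_hasDerivAt s (hasDerivAt_line p d s)

theorem tZ_pos (hR : ∀ᵐ x ∂μ, ‖x‖ ≤ R) (p : ℝ × Eu n) : 0 < tZ μ p := by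
  have h := tl_integrable (continuous_const (y := (1 : ℝ))) hR p
  unfold tZ tl
  rw [integral_pos_iff_support_of_nonneg (fun x => by positivity) h]
  have : (Function.support fun x : Eu n => Real.exp (tlin x p) • (1 : ℝ)) = Set.univ := by
    ext x; simp [Real.exp_ne_zero]
  rw [this]; simp

theorem tZ_line (hR : ∀ᵐ x ∂μ, ‖x‖ ≤ R) (p d : ℝ × Eu n) (s : ℝ) :
    HasDerivAt (fun s : ℝ => tZ μ (p + s • d)) (tl μ (fun x => tlin x d) (p + s • d)) s := by
  refine (tl_line (continuous_const (y := (1 : ℝ))) hR p d s).congr_deriv ?_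
  simp only [smul_eq_mul, mul_one]

theorem norm_tl_le {k : Eu n → W} {C : ℝ} (hR : ∀ᵐ x ∂μ, ‖x‖ ≤ R)
    (hC : ∀ᵐ x ∂μ, ‖k x‖ ≤ C) (p : ℝ × Eu n) : ‖tl μ k p‖ ≤ C * tZ μ p := by
  unfold tZ tl
  rw [← integral_const_mul]
  refine norm_integral_le_of_norm_le
    ((tl_integrable (continuous_const (y := (1 : ℝ))) hR p).const_mul C) ?_
  filter_upwards [hC] with x hx
  rw [norm_smul, Real.norm_of_nonneg (Real.exp_nonneg _), smul_eq_mul, mul_one, mul_comm]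
  gcongr

theorem norm_tE_le {k : Eu n → W} {C : ℝ} (hR : ∀ᵐ x ∂μ, ‖x‖ ≤ R)
    (hC : ∀ᵐ x ∂μ, ‖k x‖ ≤ C) (p : ℝ × Eu n) : ‖tE μ k p‖ ≤ C := by
  have hZ := tZ_pos hR p
  rw [tE, norm_smul, norm_inv, Real.norm_of_nonneg hZ.le, inv_mul_le_iff₀ hZ, mul_comm]
  exact norm_tl_le hR hC p

theorem tZ_smul_tE {k : Eu n → W} (hR : ∀ᵐ x ∂μ, ‖x‖ ≤ R) (p : ℝ × Eu n) :
    tZ μ p • tE μ k p = tl μ k p := by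
  rw [tE, smul_smul, mul_inv_cancel₀ (tZ_pos hR p).ne', one_smul]

theorem tZ_le (hR : ∀ᵐ x ∂μ, ‖x‖ ≤ R) {p : ℝ × Eu n} (hp : 0 ≤ p.1) :
    tZ μ p ≤ Real.exp (R * ‖p.2‖) := by
  have h1 : ∫ _x, Real.exp (R * ‖p.2‖) ∂μ = Real.exp (R * ‖p.2‖) := by simp
  rw [← h1]
  unfold tZ tl
  refine integral_mono_ae (tl_integrable (continuous_const (y := (1 : ℝ))) hR p)
    (integrable_const _) ?_
  filter_upwards [hR] with x hx
  rw [smul_eq_mul, mul_one]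
  refine Real.exp_le_exp.2 ?_
  rw [tlin_apply]
  have h2 := real_inner_le_norm x p.2
  have h3 : ‖x‖ * ‖p.2‖ ≤ R * ‖p.2‖ := by gcongr
  have h4 : 0 ≤ ‖x‖ ^ 2 / 2 * p.1 := by positivity
  linarith

theorem tE_continuous {k : Eu n → W} (hk : Continuous k) (hR : ∀ᵐ x ∂μ, ‖x‖ ≤ R) :
    Continuous (tE μ k) :=
  ((tl_continuous continuous_const hR).inv₀ fun p => (tZ_pos hR p).ne').smul
    (tl_continuous hk hR)

theorem tE_line {k : Eu n → W} (hk : Continuous k) (hR : ∀ᵐ x ∂μ, ‖x‖ ≤ R)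
    (p d : ℝ × Eu n) (s : ℝ) :
    HasDerivAt (fun s : ℝ => tE μ k (p + s • d))
      (tE μ (fun x => tlin x d • k x) (p + s • d) -
        tE μ (fun x => tlin x d) (p + s • d) • tE μ k (p + s • d)) s := by
  have hZ := (tZ_pos hR (p + s • d)).ne'
  have h1 := ((tZ_line hR p d s).inv hZ).smul (tl_line hk hR p d s)
  refine h1.congr_deriv ?_
  simp only [tE, smul_smul, smul_eq_mul, Pi.inv_apply]
  rw [sub_eq_add_neg, ← neg_smul]
  congr 2
  field_simp

end Tilt

/-! ### The evolution of functions of tilted means -/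

section Ito
variable {n : ℕ} {W : Type} [NormedAddCommGroup W] [NormedSpace ℝ W] [FiniteDimensional ℝ W]
  {μ : Measure (Eu n)} [IsProbabilityMeasure μ] {R : ℝ}

/-- A continuous function of a bounded tilted mean is bounded. -/
theorem exists_bound_comp_tE {V : Type} [NormedAddCommGroup V] {Ψ : W → V} (hΨ : Continuous Ψ)
    {k : Eu n → W} (hk : Continuous k)
    (hR : ∀ᵐ x ∂μ, ‖x‖ ≤ R) : ∃ C, 0 ≤ C ∧ ∀ p, ‖Ψ (tE μ k p)‖ ≤ C := by
  obtain ⟨C, -, hC⟩ := exists_bound_ball hk hR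
  have : ProperSpace W := FiniteDimensional.proper ℝ W
  obtain ⟨M, hM⟩ := (isCompact_closedBall (0 : W) C).exists_bound_of_continuousOn
    hΨ.continuousOn
  exact ⟨max M 0, le_max_right _ _, fun p =>
    (hM _ (by simpa using norm_tE_le hR hC p)).trans (le_max_left _ _)⟩

/-- The expectation of `f (t, θ)` when `θ` is distributed as `t x + √t y`, with `x` of law `μ` and
`y` Gaussian; this law has density `tZ` with respect to the Gaussian measure of variance `t`. -/
def Em (μ : Measure (Eu n)) (f : ℝ × Eu n → ℝ) (t : ℝ) : ℝ :=
  ∫ z, tZ μ (t, √t • z) * f (t, √t • z) ∂(stdGaussian n)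

/-- The covariance of `k` and of the `i`-th coordinate under the tilt. -/
def tCov (μ : Measure (Eu n)) (k : Eu n → W) (i : Fin n) (p : ℝ × Eu n) : W :=
  tE μ (fun x => x i • k x) p - tE μ (fun x => x i) p • tE μ k p

theorem Em_integrable (hR : ∀ᵐ x ∂μ, ‖x‖ ≤ R) {f : ℝ × Eu n → ℝ} (hf : Continuous f) {C : ℝ}
    (hC : ∀ p, |f p| ≤ C) {t : ℝ} (ht : 0 ≤ t) :
    Integrable (fun z => tZ μ (t, √t • z) * f (t, √t • z)) (stdGaussian n) := by
  have hZ := tl_continuous (continuous_const (y := (1 : ℝ))) hR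
  refine integrable_gauss_of_exp (C := C) (r := R * √t) (Continuous.aestronglyMeasurable ?_) ?_
  · exact (hZ.comp (by fun_prop)).mul (hf.comp (by fun_prop))
  · intro z
    rw [norm_mul, Real.norm_of_nonneg (tZ_pos hR _).le, mul_comm, mul_assoc]
    have := tZ_le (μ := μ) hR (p := (t, √t • z)) ht
    rw [norm_smul, Real.norm_of_nonneg (Real.sqrt_nonneg _)] at this
    have hC0 : 0 ≤ C := (abs_nonneg _).trans (hC 0)
    gcongr
    · exact (tZ_pos hR _).le
    · exact hC _

/-- The heat equation: the derivative of `∫ H (t, √t z) dγ(z)`. -/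
theorem heat_deriv {H : ℝ × Eu n → ℝ} (hH : ContDiff ℝ 1 H) (H2 : Fin n → ℝ × Eu n → ℝ)
    (h2 : ∀ i t θ, HasLineDerivAt ℝ
      (fun θ' => fderiv ℝ H (t, θ') (0, EuclideanSpace.single i 1)) (H2 i (t, θ)) θ
      (EuclideanSpace.single i 1)) (h2c : ∀ i, Continuous (H2 i)) {C r : ℝ} (hr : 0 ≤ r)
    (b0 : ∀ p : ℝ × Eu n, 0 ≤ p.1 → |H p| ≤ C * Real.exp (r * ‖p.2‖))
    (b1 : ∀ p : ℝ × Eu n, 0 ≤ p.1 → ‖fderiv ℝ H p‖ ≤ C * Real.exp (r * ‖p.2‖))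
    (b2 : ∀ i, ∀ p : ℝ × Eu n, 0 ≤ p.1 → |H2 i p| ≤ C * Real.exp (r * ‖p.2‖))
    {t : ℝ} (ht : 0 < t) :
    HasDerivAt (fun t => ∫ z, H (t, √t • z) ∂(stdGaussian n))
      (∫ z, (fderiv ℝ H (t, √t • z) (1, 0) + 1 / 2 * ∑ i, H2 i (t, √t • z)) ∂(stdGaussian n)) t := by
  have hC : 0 ≤ C := by simpa using (abs_nonneg _).trans (b0 0 le_rfl)
  have hHc := hH.continuous
  have hH'c : Continuous (fderiv ℝ H) := hH.continuous_fderiv (by norm_num)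
  have hH'c2 : ∀ d, Continuous fun p => fderiv ℝ H p d := fun d => by fun_prop
  have hHd : ∀ p, HasFDerivAt H (fderiv ℝ H p) p := fun p =>
    (hH.differentiable (by norm_num) p).hasFDerivAt
  set e : Fin n → Eu n := fun i => EuclideanSpace.single i (1 : ℝ) with he
  have hst : 0 < √t := Real.sqrt_pos.2 ht
  have hns : ∀ (z : Eu n), ‖√t • z‖ = √t * ‖z‖ := fun z => by
    rw [norm_smul, Real.norm_of_nonneg hst.le]
  have key := (hasDerivAt_integral_of_dominated_loc_of_deriv_le (𝕜 := ℝ)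
    (μ := stdGaussian n) (F := fun t z => H (t, √t • z))
    (F' := fun t z => fderiv ℝ H (t, √t • z) (1, (1 / (2 * √t)) • z))
    (x₀ := t) (s := Metric.ball t (t / 2))
    (bound := fun z => C * (1 + 1 / √t) * Real.exp ((r * √(2 * t) + 1) * ‖z‖))
    (Metric.ball_mem_nhds _ (by positivity))
    (.of_forall fun s => (Continuous.aestronglyMeasurable (by fun_prop))) ?_
    (Continuous.aestronglyMeasurable (by fun_prop)) ?_
    ((integrable_exp_norm_gauss _).const_mul _) ?_).2
  · refine key.congr_deriv ?_
    have hi1 : Integrable (fun z => fderiv ℝ H (t, √t • z) (1, 0)) (stdGaussian n) := by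
      refine integrable_gauss_of_exp (C := C) (r := r * √t)
        (Continuous.aestronglyMeasurable (by fun_prop)) fun z => ?_
      refine ((fderiv ℝ H (t, √t • z)).le_opNorm _).trans ?_
      have := b1 (t, √t • z) ht.le
      simp only [hns] at this
      simpa [mul_assoc] using this
    have hi2 : ∀ i, Integrable (fun z => H2 i (t, √t • z)) (stdGaussian n) := fun i => by
      have := h2c i
      refine integrable_gauss_of_exp (C := C) (r := r * √t)
        (Continuous.aestronglyMeasurable (by fun_prop)) fun z => ?_
      have := b2 i (t, √t • z) ht.le
      simp only [hns] at this
      simpa [mul_assoc] using this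
    have hst' : ∀ i, ∫ z, ⟪e i, z⟫ * fderiv ℝ H (t, √t • z) (0, e i) ∂(stdGaussian n) =
        ∫ z, √t * H2 i (t, √t • z) ∂(stdGaussian n) := by
      intro i
      have := h2c i
      refine gauss_stein (e i) ?_ (by fun_prop) (by fun_prop) (C := (1 + √t) * C) (r := r * √t) ?_ ?_
      · intro z
        have h3 := h2 i t (√t • z)
        unfold HasLineDerivAt at h3 ⊢
        have h4 : HasDerivAt (fun s : ℝ => √t * s) (√t) 0 := by
          simpa using (hasDerivAt_id (0 : ℝ)).const_mul (√t)
        have h5 := HasDerivAt.comp (h₂ := fun s : ℝ =>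
          fderiv ℝ H (t, √t • z + s • e i) (0, e i)) (0 : ℝ) (by simpa using h3) h4
        refine HasDerivAt.congr_deriv (f := fun s : ℝ =>
          fderiv ℝ H (t, √t • (z + s • e i)) (0, e i)) ?_ (mul_comm _ _)
        have hfun : (fun s : ℝ => fderiv ℝ H (t, √t • (z + s • e i)) (0, e i)) =
            (fun s : ℝ => fderiv ℝ H (t, √t • z + s • e i) (0, e i)) ∘ fun s => √t * s := by
          ext s
          simp only [smul_add, smul_smul, Function.comp_apply]
        rw [hfun]
        exact h5
      · intro z
        have h3 := ((fderiv ℝ H (t, √t • z)).le_opNorm (0, e i))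
        have h4 := b1 (t, √t • z) ht.le
        simp only [hns] at h4
        simp only [he] at h3
        have h5 : ‖((0 : ℝ), (EuclideanSpace.single i (1 : ℝ) : Eu n))‖ = 1 := by
          simp [Prod.norm_def]
        rw [h5, mul_one] at h3
        calc _ ≤ 1 * (C * Real.exp (r * (√t * ‖z‖))) := by rw [one_mul]; exact h3.trans h4
          _ ≤ (1 + √t) * (C * Real.exp (r * (√t * ‖z‖))) := by gcongr; linarith
          _ = _ := by ring_nf
      · intro z
        have h4 := b2 i (t, √t • z) ht.le
        simp only [hns] at h4
        rw [abs_mul, abs_of_pos hst]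
        calc _ ≤ (1 + √t) * (C * Real.exp (r * (√t * ‖z‖))) := by gcongr; linarith
          _ = _ := by ring_nf
    have hi3 : ∀ i, Integrable (fun z => ⟪e i, z⟫ * fderiv ℝ H (t, √t • z) (0, e i))
        (stdGaussian n) := by
      intro i
      refine integrable_gauss_of_exp (C := C) (r := 1 + r * √t)
        (Continuous.aestronglyMeasurable (by fun_prop)) fun z => ?_
      have h3 := ((fderiv ℝ H (t, √t • z)).le_opNorm (0, e i))
      have h4 := b1 (t, √t • z) ht.le
      simp only [hns] at h4
      simp only [he] at h3
      have h5 : ‖((0 : ℝ), (EuclideanSpace.single i (1 : ℝ) : Eu n))‖ = 1 := by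
        simp [Prod.norm_def]
      rw [h5, mul_one] at h3
      have h6 : |⟪e i, z⟫| ≤ Real.exp ‖z‖ := by
        refine (abs_real_inner_le_norm _ _).trans ?_
        simpa [he] using norm_le_exp_norm z
      rw [norm_mul, one_add_mul, Real.exp_add]
      calc _ ≤ Real.exp ‖z‖ * (C * Real.exp (r * (√t * ‖z‖))) := by
            gcongr
            · exact h6
            · exact h3.trans h4
        _ = _ := by ring_nf
    have e1 : ∀ z : Eu n, fderiv ℝ H (t, √t • z) (1, (1 / (2 * √t)) • z) =
        fderiv ℝ H (t, √t • z) (1, 0) +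
          (1 / (2 * √t)) * ∑ i, ⟪e i, z⟫ * fderiv ℝ H (t, √t • z) (0, e i) := by
      intro z
      have h6 : ((1 : ℝ), (1 / (2 * √t)) • z) = (1, 0) + (1 / (2 * √t)) •
          ∑ i, z i • ((0 : ℝ), e i) := by
        ext1
        · simp [Prod.fst_sum]
        · simp only [Prod.snd_add, Prod.smul_snd, Prod.snd_sum, zero_add]
          rw [he, sum_basis_smul]
      rw [h6, map_add, map_smul, map_sum, smul_eq_mul]
      congr 2
      refine Finset.sum_congr rfl fun i _ => ?_
      rw [map_smul, smul_eq_mul]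
      simp [he, EuclideanSpace.inner_single_left]
    simp only [e1]
    rw [integral_add hi1 ((integrable_finsetSum _ fun i _ => hi3 i).const_mul _),
      integral_add hi1 ((integrable_finsetSum _ fun i _ => hi2 i).const_mul _),
      integral_const_mul, integral_const_mul, integral_finsetSum _ fun i _ => hi3 i,
      integral_finsetSum _ fun i _ => hi2 i]
    congr 1
    simp only [hst', integral_const_mul]
    rw [← Finset.mul_sum, ← mul_assoc]
    congr 1
    field_simp
  · refine integrable_gauss_of_exp (C := C) (r := r * √t)
      (Continuous.aestronglyMeasurable (by fun_prop)) fun z => ?_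
    have := b0 (t, √t • z) ht.le
    simp only [hns] at this
    simpa [mul_assoc] using this
  · refine .of_forall fun z s hs => ?_
    rw [Real.ball_eq_Ioo, Set.mem_Ioo] at hs
    have hs0 : 0 < s := by linarith
    have hss : 0 < √s := Real.sqrt_pos.2 hs0
    refine ((fderiv ℝ H _).le_opNorm _).trans ?_
    have h3 := b1 (s, √s • z) hs0.le
    rw [norm_smul, Real.norm_of_nonneg (Real.sqrt_nonneg s)] at h3
    have h4 : √s ≤ √(2 * t) := Real.sqrt_le_sqrt (by linarith)
    have h5 : 1 / (2 * √s) ≤ 1 / √t := by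
      apply one_div_le_one_div_of_le hst
      rw [show (2 : ℝ) * √s = √(4 * s) by
        rw [Real.sqrt_mul (by norm_num), show (4 : ℝ) = 2 ^ 2 by norm_num,
          Real.sqrt_sq (by norm_num)]]
      exact Real.sqrt_le_sqrt (by linarith)
    have h6 : ‖((1 : ℝ), (1 / (2 * √s)) • z)‖ ≤ (1 + 1 / √t) * Real.exp ‖z‖ := by
      have h7 : (1 : ℝ) ≤ Real.exp ‖z‖ := Real.one_le_exp (norm_nonneg z)
      have h8 : 0 ≤ 1 / √t := by positivity
      rw [Prod.norm_def]
      refine max_le ?_ ?_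
      · simp only [norm_one]; nlinarith
      · simp only [norm_smul]
        rw [Real.norm_of_nonneg (by positivity)]
        calc 1 / (2 * √s) * ‖z‖ ≤ 1 / √t * Real.exp ‖z‖ := by
              gcongr; exact norm_le_exp_norm z
          _ ≤ _ := by gcongr; linarith
    calc _ ≤ (C * Real.exp (r * (√(2 * t) * ‖z‖))) * ((1 + 1 / √t) * Real.exp ‖z‖) := by
          refine mul_le_mul (h3.trans ?_) h6 (norm_nonneg _) (by positivity)
          gcongr
      _ = _ := by
          rw [show (r * √(2 * t) + 1) * ‖z‖ = r * (√(2 * t) * ‖z‖) + ‖z‖ by ring, Real.exp_add]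
          ring
  · refine .of_forall fun z s hs => ?_
    rw [Real.ball_eq_Ioo, Set.mem_Ioo] at hs
    have hs0 : 0 < s := by linarith
    have h3 : HasDerivAt (fun s : ℝ => (s, √s • z)) (1, (1 / (2 * √s)) • z) s :=
      (hasDerivAt_id s).prodMk ((Real.hasDerivAt_sqrt hs0.ne').smul_const z)
    exact (hHd _).comp_hasDerivAt s h3

end Ito

section Ito2
set_option linter.unusedSectionVars false
variable {n : ℕ} {W : Type} [NormedAddCommGroup W] [NormedSpace ℝ W] [FiniteDimensional ℝ W]
  {μ : Measure (Eu n)} [IsProbabilityMeasure μ] {R : ℝ}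

/-- The covariance of `w` and `k` under the tilt. -/
def tC (μ : Measure (Eu n)) (k : Eu n → W) (w : Eu n → ℝ) (p : ℝ × Eu n) : W :=
  tE μ (fun x => w x • k x) p - tE μ w p • tE μ k p

/-- The function `Z Φ(Y)`, whose Gaussian averages are the expectations of `Φ(Y)`. -/
def itoH (μ : Measure (Eu n)) (k : Eu n → W) (Φ : W → ℝ) (p : ℝ × Eu n) : ℝ :=
  tZ μ p * Φ (tE μ k p)

theorem tE_contDiff {k : Eu n → W} (hk : Continuous k) (hR : ∀ᵐ x ∂μ, ‖x‖ ≤ R) (m : ℕ) :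
    ContDiff ℝ m (tE μ k) :=
  ((tl_contDiff continuous_const hR m).inv fun p => (tZ_pos hR p).ne').smul (tl_contDiff hk hR m)

theorem tE_line' {k : Eu n → W} (hk : Continuous k) (hR : ∀ᵐ x ∂μ, ‖x‖ ≤ R)
    (p d : ℝ × Eu n) (s : ℝ) :
    HasDerivAt (fun s : ℝ => tE μ k (p + s • d)) (tC μ k (fun x => tlin x d) (p + s • d)) s :=
  tE_line hk hR p d s

theorem itoH_contDiff {k : Eu n → W} (hk : Continuous k) (hR : ∀ᵐ x ∂μ, ‖x‖ ≤ R) {Φ : W → ℝ}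
    (hΦ : ContDiff ℝ 2 Φ) : ContDiff ℝ 2 (itoH μ k Φ) :=
  (tl_contDiff continuous_const hR 2).mul (hΦ.comp (tE_contDiff hk hR 2))

theorem itoH_fderiv {k : Eu n → W} (hk : Continuous k) (hR : ∀ᵐ x ∂μ, ‖x‖ ≤ R) {Φ : W → ℝ}
    (hΦ : ContDiff ℝ 2 Φ) (p d : ℝ × Eu n) :
    fderiv ℝ (itoH μ k Φ) p d = tl μ (fun x => tlin x d) p * Φ (tE μ k p) +
      fderiv ℝ Φ (tE μ k p) (tl μ (fun x => tlin x d • k x) p -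
        tl μ (fun x => tlin x d) p • tE μ k p) := by
  have h1 := hasDerivAt_comp_line (itoH_contDiff hk hR hΦ) p d 0
  have hd := (hΦ.differentiable (by norm_num) (tE μ k (p + (0 : ℝ) • d))).hasFDerivAt
  have h2 := (tZ_line hR p d 0).mul (hd.comp_hasDerivAt (0 : ℝ) (tE_line' hk hR p d 0))
  have h3 := h1.unique h2
  simp only [zero_smul, add_zero, Function.comp_apply] at h3
  rw [h3, ← smul_eq_mul (tZ μ p), ← map_smul, tC, smul_sub, tZ_smul_tE hR, smul_smul,
    ← smul_eq_mul (tZ μ p) (tE μ _ p), tZ_smul_tE hR]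

/-- The second derivative of `Z Φ(Y)` in a fixed direction. -/
def itoH2 (μ : Measure (Eu n)) (k : Eu n → W) (Φ : W → ℝ) (w : Eu n → ℝ) (p : ℝ × Eu n) : ℝ :=
  tl μ (fun x => w x ^ 2) p * Φ (tE μ k p) +
    fderiv ℝ Φ (tE μ k p) (tl μ (fun x => w x ^ 2 • k x) p -
      tl μ (fun x => w x ^ 2) p • tE μ k p) +
    tZ μ p * fderiv ℝ (fderiv ℝ Φ) (tE μ k p) (tC μ k w p) (tC μ k w p)

/-- The derivative of `u Φ(Y) + DΦ(Y)(v - u Y)`, the shape taken by the first derivative of `Z Φ(Y)`.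
The hypothesis `hz` identifies `v - u Y` with a multiple of the derivative of `Y`, and
makes the mixed terms cancel. -/
theorem line_product_deriv {Φ : W → ℝ} (hΦ : ContDiff ℝ 2 Φ) {u : ℝ → ℝ} {v Y : ℝ → W} {u' z s : ℝ}
    {v' Y' : W} (hu : HasDerivAt u u' s) (hv : HasDerivAt v v' s) (hY : HasDerivAt Y Y' s)
    (hz : v s - u s • Y s = z • Y') :
    HasDerivAt (fun s => u s * Φ (Y s) + fderiv ℝ Φ (Y s) (v s - u s • Y s))
      (u' * Φ (Y s) + fderiv ℝ Φ (Y s) (v' - u' • Y s) +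
        z * fderiv ℝ (fderiv ℝ Φ) (Y s) Y' Y') s := by
  have hd := (hΦ.differentiable (by norm_num) (Y s)).hasFDerivAt
  have hF1 : ContDiff ℝ 1 (fderiv ℝ Φ) := hΦ.fderiv_right (by norm_num)
  have hF := (hF1.differentiable (by norm_num) (Y s)).hasFDerivAt
  have a1 := hu.mul (hd.comp_hasDerivAt s hY)
  have a2 := (hF.comp_hasDerivAt s hY).clm_apply (hv.sub (hu.smul hY))
  refine (a1.add a2).congr_deriv ?_
  simp only [Function.comp_apply, Pi.sub_apply, Pi.smul_apply', hz]
  simp only [map_smul, map_sub, map_add, smul_eq_mul]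
  ring

theorem itoH_snd {k : Eu n → W} (hk : Continuous k) (hR : ∀ᵐ x ∂μ, ‖x‖ ≤ R) {Φ : W → ℝ}
    (hΦ : ContDiff ℝ 2 Φ) (p d : ℝ × Eu n) :
    HasDerivAt (fun s : ℝ => fderiv ℝ (itoH μ k Φ) (p + s • d) d)
      (itoH2 μ k Φ (fun x => tlin x d) p) 0 := by
  have hw := continuous_tlin_apply d
  have hwk : Continuous fun x => tlin x d • k x := hw.smul hk
  simp only [itoH_fderiv hk hR hΦ]
  have e1 : ∀ p, tl μ (fun x => tlin x d • k x) p - tl μ (fun x => tlin x d) p • tE μ k p =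
      tZ μ p • tC μ k (fun x => tlin x d) p := by
    intro p
    rw [tC, smul_sub, tZ_smul_tE hR, smul_smul, ← smul_eq_mul (tZ μ p) (tE μ _ p), tZ_smul_tE hR]
  have h := line_product_deriv hΦ (tl_line hw hR p d 0) (tl_line hwk hR p d 0)
    (tE_line' hk hR p d 0) (e1 _)
  refine h.congr_deriv ?_
  simp only [zero_smul, add_zero, itoH2, smul_eq_mul, smul_smul, pow_two]

/-- The operator `∂ₜ + Δ / 2` applied to `Z Φ(Y)`. All the first order terms cancel, because the
exponential weight of the tilt satisfies the backward heat equation; only the Hessian of `Φ`, evaluated on the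
covariances, is left. -/
theorem itoH_cancel {k : Eu n → W} (hk : Continuous k) (hR : ∀ᵐ x ∂μ, ‖x‖ ≤ R) {Φ : W → ℝ}
    (hΦ : ContDiff ℝ 2 Φ) (p : ℝ × Eu n) :
    fderiv ℝ (itoH μ k Φ) p (1, 0) + 1 / 2 * ∑ i, itoH2 μ k Φ (fun x => x i) p =
      tZ μ p * (1 / 2 * ∑ i, fderiv ℝ (fderiv ℝ Φ) (tE μ k p) (tCov μ k i p) (tCov μ k i p)) := by
  have hs : ∀ {V : Type} [NormedAddCommGroup V] [NormedSpace ℝ V] (f : Eu n → V)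
      (hf : Continuous f), tl μ (fun x => tlin x (1, 0) • f x) p =
        (-(1 / 2 : ℝ)) • ∑ i, tl μ (fun x => x i ^ 2 • f x) p := by
    intro V _ _ f hf
    unfold tl
    rw [← integral_finsetSum _ fun i _ => ?_, ← integral_smul]
    · congr 1
      ext x
      have hx : tlin x (1, 0) = -(1 / 2) * ∑ i, x i ^ 2 := by
        simp only [tlin_apply, EuclideanSpace.real_norm_sq_eq, inner_zero_right]
        ring
      rw [← Finset.smul_sum, ← Finset.sum_smul]
      simp only [smul_smul, hx]
      congr 1
      ring
    · refine tl_integrable (k := fun x => x i ^ 2 • f x) (by fun_prop) hR p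
  have h1 := hs (fun _ => (1 : ℝ)) continuous_const
  have h2 := hs k hk
  simp only [smul_eq_mul, mul_one] at h1
  rw [itoH_fderiv hk hR hΦ, h1, h2]
  simp only [itoH2, Finset.sum_add_distrib, ← Finset.sum_mul, map_sub, map_smul, map_sum,
    Finset.sum_sub_distrib, smul_eq_mul, ← Finset.mul_sum]
  simp only [tC, tCov]
  ring

theorem itoH2_continuous {k : Eu n → W} (hk : Continuous k) (hR : ∀ᵐ x ∂μ, ‖x‖ ≤ R) {Φ : W → ℝ}
    (hΦ : ContDiff ℝ 2 Φ) {w : Eu n → ℝ} (hw : Continuous w) : Continuous (itoH2 μ k Φ w) := by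
  have h0 := tE_continuous hk hR
  have h1 := tl_continuous (hw.pow 2) hR
  have h2 := tl_continuous ((hw.pow 2).smul hk) hR
  have h3 : Continuous (tC μ k w) :=
    (tE_continuous (hw.smul hk) hR).sub ((tE_continuous hw hR).smul h0)
  have h4 : Continuous (tZ μ) := tl_continuous continuous_const hR
  have hF1 : ContDiff ℝ 1 (fderiv ℝ Φ) := hΦ.fderiv_right (by norm_num)
  have h5 := hF1.continuous
  have h6 : Continuous (fderiv ℝ (fderiv ℝ Φ)) := hF1.continuous_fderiv (by norm_num)
  have h7 := hΦ.continuous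
  unfold itoH2
  refine ((h1.mul (h7.comp h0)).add ((h5.comp h0).clm_apply (h2.sub (h1.smul h0)))).add
    (h4.mul (((h6.comp h0).clm_apply h3).clm_apply h3))

theorem norm_tC_le {k : Eu n → W} {w : Eu n → ℝ} (hR : ∀ᵐ x ∂μ, ‖x‖ ≤ R) {C D : ℝ} (hD0 : 0 ≤ D)
    (hC : ∀ᵐ x ∂μ, ‖k x‖ ≤ C) (hD : ∀ᵐ x ∂μ, |w x| ≤ D) (p : ℝ × Eu n) :
    ‖tC μ k w p‖ ≤ 2 * (D * C) := by
  have h1 : ‖tE μ (fun x => w x • k x) p‖ ≤ D * C := norm_tE_le hR (by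
    filter_upwards [hC, hD] with x hx hx'
    rw [norm_smul]
    exact mul_le_mul hx' hx (norm_nonneg _) hD0) p
  have h2 := norm_tE_le hR hC p
  have h3 := norm_tE_le hR (k := w) hD p
  rw [tC]
  refine (norm_sub_le _ _).trans ?_
  rw [norm_smul]
  have := mul_le_mul h3 h2 (norm_nonneg _) hD0
  linarith

theorem itoH2_bound {k : Eu n → W} (hk : Continuous k) (hR : ∀ᵐ x ∂μ, ‖x‖ ≤ R) {Φ : W → ℝ}
    (hΦ : ContDiff ℝ 2 Φ) {w : Eu n → ℝ} (hw : Continuous w) :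
    ∃ C, 0 ≤ C ∧ ∀ p, |itoH2 μ k Φ w p| ≤ C * tZ μ p := by
  have hF1 : ContDiff ℝ 1 (fderiv ℝ Φ) := hΦ.fderiv_right (by norm_num)
  have h6 : Continuous (fderiv ℝ (fderiv ℝ Φ)) := hF1.continuous_fderiv (by norm_num)
  obtain ⟨C0, hC0, b0⟩ := exists_bound_comp_tE hΦ.continuous hk hR
  obtain ⟨C1, hC1, b1⟩ := exists_bound_comp_tE hF1.continuous hk hR
  obtain ⟨C2, hC2, b2⟩ := exists_bound_comp_tE (V := W →L[ℝ] W →L[ℝ] ℝ) h6 hk hR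
  obtain ⟨Ck, hCk, bk⟩ := exists_bound_ball hk hR
  obtain ⟨Cw, hCw, bw⟩ := exists_bound_ball hw hR
  obtain ⟨D1, hD1, d1⟩ := exists_bound_ball (hw.pow 2) hR
  obtain ⟨D2, hD2, d2⟩ := exists_bound_ball ((hw.pow 2).smul hk) hR
  refine ⟨D1 * C0 + C1 * (D2 + D1 * Ck) + C2 * (2 * (Cw * Ck)) ^ 2, by positivity, fun p => ?_⟩
  have hZ := tZ_pos hR p
  have e1 := norm_tl_le hR d1 p
  have e2 := norm_tl_le hR d2 p
  have e3 := norm_tE_le hR bk p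
  have e4 := norm_tC_le hR hCw bk bw p
  have f1 : ‖tl μ (fun x => w x ^ 2) p * Φ (tE μ k p)‖ ≤ D1 * tZ μ p * C0 := by
    rw [norm_mul]; exact mul_le_mul e1 (b0 p) (norm_nonneg _) (by positivity)
  have f2 : ‖tl μ (fun x => w x ^ 2 • k x) p - tl μ (fun x => w x ^ 2) p • tE μ k p‖ ≤
      D2 * tZ μ p + D1 * tZ μ p * Ck := by
    refine (norm_sub_le _ _).trans (add_le_add e2 ?_)
    rw [norm_smul]; exact mul_le_mul e1 e3 (norm_nonneg _) (by positivity)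
  have f3 := (fderiv ℝ Φ (tE μ k p)).le_of_opNorm_le_of_le (b1 p) f2
  have f4 := (fderiv ℝ (fderiv ℝ Φ) (tE μ k p)).le_of_opNorm_le_of_le (b2 p) e4
  have f5 := (fderiv ℝ (fderiv ℝ Φ) (tE μ k p) (tC μ k w p)).le_of_opNorm_le_of_le f4 e4
  have f6 : ‖tZ μ p * fderiv ℝ (fderiv ℝ Φ) (tE μ k p) (tC μ k w p) (tC μ k w p)‖ ≤
      tZ μ p * (C2 * (2 * (Cw * Ck)) * (2 * (Cw * Ck))) := by
    rw [norm_mul, Real.norm_of_nonneg hZ.le]; gcongr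
  rw [← Real.norm_eq_abs]
  unfold itoH2
  refine (norm_add_le _ _).trans ?_
  have := norm_add_le (tl μ (fun x => w x ^ 2) p * Φ (tE μ k p))
    (fderiv ℝ Φ (tE μ k p) (tl μ (fun x => w x ^ 2 • k x) p -
      tl μ (fun x => w x ^ 2) p • tE μ k p))
  linarith

theorem itoH_bound1 {k : Eu n → W} (hk : Continuous k) (hR : ∀ᵐ x ∂μ, ‖x‖ ≤ R) {Φ : W → ℝ}
    (hΦ : ContDiff ℝ 2 Φ) : ∃ C, 0 ≤ C ∧ ∀ p, ‖fderiv ℝ (itoH μ k Φ) p‖ ≤ C * tZ μ p := by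
  have hF1 : ContDiff ℝ 1 (fderiv ℝ Φ) := hΦ.fderiv_right (by norm_num)
  obtain ⟨C0, hC0, b0⟩ := exists_bound_comp_tE hΦ.continuous hk hR
  obtain ⟨C1, hC1, b1⟩ := exists_bound_comp_tE hF1.continuous hk hR
  obtain ⟨Ck, hCk, bk⟩ := exists_bound_ball hk hR
  obtain ⟨T, hT, bT⟩ := exists_bound_ball continuous_tlin hR
  refine ⟨T * C0 + C1 * (T * Ck + T * Ck), by positivity, fun p => ?_⟩
  have hZ := tZ_pos hR p
  refine ContinuousLinearMap.opNorm_le_bound _ (by positivity) fun d => ?_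
  have d1 : ∀ᵐ x ∂μ, ‖tlin x d‖ ≤ T * ‖d‖ := by
    filter_upwards [bT] with x hx
    exact (tlin x).le_of_opNorm_le hx d
  have d2 : ∀ᵐ x ∂μ, ‖tlin x d • k x‖ ≤ T * ‖d‖ * Ck := by
    filter_upwards [d1, bk] with x hx hx'
    rw [norm_smul]; exact mul_le_mul hx hx' (norm_nonneg _) (by positivity)
  have e1 := norm_tl_le hR d1 p
  have e2 := norm_tl_le hR d2 p
  have e3 := norm_tE_le hR bk p
  have f1 : ‖tl μ (fun x => tlin x d) p * Φ (tE μ k p)‖ ≤ T * ‖d‖ * tZ μ p * C0 := by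
    rw [norm_mul]; exact mul_le_mul e1 (b0 p) (norm_nonneg _) (by positivity)
  have f2 : ‖tl μ (fun x => tlin x d • k x) p - tl μ (fun x => tlin x d) p • tE μ k p‖ ≤
      T * ‖d‖ * Ck * tZ μ p + T * ‖d‖ * tZ μ p * Ck := by
    refine (norm_sub_le _ _).trans (add_le_add e2 ?_)
    rw [norm_smul]; exact mul_le_mul e1 e3 (norm_nonneg _) (by positivity)
  have f3 := (fderiv ℝ Φ (tE μ k p)).le_of_opNorm_le_of_le (b1 p) f2
  rw [itoH_fderiv hk hR hΦ]
  refine (norm_add_le _ _).trans ?_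
  linarith

/-- Itô's formula in expectation for functions of the tilted means. -/
theorem ito {k : Eu n → W} (hk : Continuous k) (hR : ∀ᵐ x ∂μ, ‖x‖ ≤ R) (hR0 : 0 ≤ R) {Φ : W → ℝ}
    (hΦ : ContDiff ℝ 2 Φ) {t : ℝ} (ht : 0 < t) :
    HasDerivAt (Em μ fun p => Φ (tE μ k p))
      (Em μ (fun p => 1 / 2 * ∑ i, fderiv ℝ (fderiv ℝ Φ) (tE μ k p) (tCov μ k i p)
        (tCov μ k i p)) t) t := by
  obtain ⟨C0, hC0, b0⟩ := exists_bound_comp_tE hΦ.continuous hk hR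
  obtain ⟨C1, hC1, b1⟩ := itoH_bound1 hk hR hΦ
  have hwi : ∀ i : Fin n, Continuous fun x : Eu n => x i := fun i => by fun_prop
  choose C2 hC2 b2 using fun i : Fin n => itoH2_bound hk hR hΦ (hwi i)
  set C := C0 + C1 + ∑ i, C2 i with hC
  have hs : 0 ≤ ∑ i, C2 i := Finset.sum_nonneg fun i _ => hC2 i
  have hb : ∀ (a : ℝ) (p : ℝ × Eu n), a ≤ C → 0 ≤ a → 0 ≤ p.1 →
      a * tZ μ p ≤ C * Real.exp (R * ‖p.2‖) := fun a p ha ha0 hp =>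
    mul_le_mul ha (tZ_le hR hp) (tZ_pos hR p).le (ha0.trans ha)
  have key := heat_deriv (n := n) (H := itoH μ k Φ) ((itoH_contDiff hk hR hΦ).of_le (by norm_num))
    (fun i => itoH2 μ k Φ fun x => x i) ?_ (fun i => itoH2_continuous hk hR hΦ (hwi i))
    (C := C) hR0 ?_ ?_ ?_ ht
  · refine key.congr_deriv ?_
    simp only [itoH_cancel hk hR hΦ]
    rfl
  · intro i t θ
    have h := itoH_snd hk hR hΦ (t, θ) (0, EuclideanSpace.single i 1)
    unfold HasLineDerivAt
    have e1 : (fun x : Eu n => tlin x (0, EuclideanSpace.single i 1)) = fun x => x i := by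
      ext x; simp [tlin_apply, EuclideanSpace.inner_single_right]
    rw [e1] at h
    have e2 : (fun s : ℝ => fderiv ℝ (itoH μ k Φ) (t, θ + s • EuclideanSpace.single i (1 : ℝ))
        (0, EuclideanSpace.single i 1)) = fun s : ℝ => fderiv ℝ (itoH μ k Φ)
        ((t, θ) + s • ((0 : ℝ), EuclideanSpace.single i (1 : ℝ)))
        (0, EuclideanSpace.single i 1) := by
      ext s
      simp
    rw [e2]
    exact h
  · intro p hp
    refine le_trans ?_ (hb C0 p (by linarith) hC0 hp)
    rw [itoH, abs_mul, abs_of_pos (tZ_pos hR p), mul_comm]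
    exact mul_le_mul_of_nonneg_right (b0 p) (tZ_pos hR p).le
  · intro p hp
    exact (b1 p).trans (hb C1 p (by linarith) hC1 hp)
  · intro i p hp
    refine (b2 i p).trans (hb (C2 i) p ?_ (hC2 i) hp)
    have := Finset.single_le_sum (f := C2) (fun i _ => hC2 i) (Finset.mem_univ i)
    linarith

theorem Em_continuousOn (hR : ∀ᵐ x ∂μ, ‖x‖ ≤ R) (hR0 : 0 ≤ R) {f : ℝ × Eu n → ℝ}
    (hf : Continuous f) {C : ℝ} (hC : ∀ p, |f p| ≤ C) :
    ContinuousOn (Em μ f) (Set.Ici 0) := by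
  have hZ : Continuous (tZ μ) := tl_continuous (continuous_const (y := (1 : ℝ))) hR
  have hC0 : 0 ≤ C := (abs_nonneg _).trans (hC 0)
  intro t₀ ht₀
  have key : Filter.Tendsto (Em μ f) (nhdsWithin t₀ (Set.Ici 0)) (nhds (Em μ f t₀)) := by
    refine tendsto_integral_filter_of_dominated_convergence
      (fun z => C * Real.exp (R * √(t₀ + 1) * ‖z‖)) ?_ ?_
      ((integrable_exp_norm_gauss _).const_mul _) ?_
    · exact .of_forall fun t => Continuous.aestronglyMeasurable (by fun_prop)
    · have h1 : ∀ᶠ t in nhdsWithin t₀ (Set.Ici 0), t < t₀ + 1 :=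
        mem_nhdsWithin_of_mem_nhds (Iio_mem_nhds (by linarith))
      filter_upwards [h1, self_mem_nhdsWithin] with t ht ht0
      refine .of_forall fun z => ?_
      rw [norm_mul, Real.norm_of_nonneg (tZ_pos hR _).le, mul_comm]
      refine mul_le_mul (hC _) ?_ (tZ_pos hR _).le hC0
      refine (tZ_le hR (p := (t, √t • z)) ht0).trans (Real.exp_le_exp.2 ?_)
      rw [norm_smul, Real.norm_of_nonneg (Real.sqrt_nonneg _), mul_assoc]
      have := Real.sqrt_le_sqrt ht.le
      gcongr
    · refine .of_forall fun z => ?_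
      have : Continuous fun t : ℝ => tZ μ (t, √t • z) * f (t, √t • z) := by fun_prop
      exact this.continuousAt.tendsto.mono_left nhdsWithin_le_nhds
  exact key

theorem Em_mono (hR : ∀ᵐ x ∂μ, ‖x‖ ≤ R) {f g : ℝ × Eu n → ℝ} (hf : Continuous f)
    (hg : Continuous g) {C D : ℝ} (hC : ∀ p, |f p| ≤ C) (hD : ∀ p, |g p| ≤ D)
    {t : ℝ} (ht : 0 ≤ t) (hfg : ∀ θ, f (t, θ) ≤ g (t, θ)) : Em μ f t ≤ Em μ g t :=
  integral_mono (Em_integrable hR hf hC ht) (Em_integrable hR hg hD ht) fun _ =>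
    mul_le_mul_of_nonneg_left (hfg _) (tZ_pos hR _).le

theorem Em_const_mul (c : ℝ) (f : ℝ × Eu n → ℝ) (t : ℝ) :
    Em μ (fun p => c * f p) t = c * Em μ f t := by
  unfold Em
  rw [← integral_const_mul]
  congr 1; ext z; ring

theorem Em_add (hR : ∀ᵐ x ∂μ, ‖x‖ ≤ R) {f g : ℝ × Eu n → ℝ} (hf : Continuous f)
    (hg : Continuous g) {C D : ℝ} (hC : ∀ p, |f p| ≤ C) (hD : ∀ p, |g p| ≤ D)
    {t : ℝ} (ht : 0 ≤ t) : Em μ (fun p => f p + g p) t = Em μ f t + Em μ g t := by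
  unfold Em
  rw [← integral_add (Em_integrable hR hf hC ht) (Em_integrable hR hg hD ht)]
  congr 1; ext z; ring

/-- Averaging first over the Gaussian: `Em` of a tilted mean. -/
theorem Em_tE (hR : ∀ᵐ x ∂μ, ‖x‖ ≤ R) {h : Eu n → ℝ} (hh : Continuous h)
    {t : ℝ} (ht : 0 ≤ t) : Em μ (fun p => tE μ h p) t = ∫ x, h x ∂μ := by
  have e1 : ∀ z : Eu n, tZ μ (t, √t • z) * tE μ h (t, √t • z) = ∫ x, Real.exp
      (⟪√t • x, z⟫ - ‖√t • x‖ ^ 2 / 2) * h x ∂μ := by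
    intro z
    rw [← smul_eq_mul, tZ_smul_tE hR, tl]
    refine integral_congr_ae (.of_forall fun x => ?_)
    simp only [tlin_apply, smul_eq_mul, inner_smul_right, inner_smul_left, norm_smul, mul_pow,
      Real.norm_of_nonneg (Real.sqrt_nonneg t), Real.sq_sqrt ht]
    simp only [conj_trivial]
    ring_nf
  unfold Em
  simp only [e1]
  obtain ⟨C, hC0, hC⟩ := exists_bound_ball hh hR
  rw [integral_integral_swap]
  · refine integral_congr_ae (.of_forall fun x => ?_)
    have h2 := gauss_shift (n := n) (v := √t • x) (h := fun _ => (1 : ℝ))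
    simp only [smul_eq_mul, mul_one, integral_const, probReal_univ] at h2
    simp only [integral_mul_const, ← h2, one_mul]
  · have hc : Continuous (Function.uncurry fun (z x : Eu n) =>
        Real.exp (⟪√t • x, z⟫ - ‖√t • x‖ ^ 2 / 2) * h x) := by
      unfold Function.uncurry; fun_prop
    refine Integrable.mono' (g := fun q : Eu n × Eu n => Real.exp (√t * R * ‖q.1‖) * C) 
      ((integrable_exp_norm_gauss (n := n) (√t * R)).mul_prod (integrable_const (μ := μ) C))
      hc.aestronglyMeasurable ?_
    have h3 : ∀ᵐ q ∂((stdGaussian n).prod μ), ‖q.2‖ ≤ R ∧ ‖h q.2‖ ≤ C :=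
      Measure.quasiMeasurePreserving_snd.ae (hR.and hC)
    filter_upwards [h3] with q hq
    rw [Function.uncurry, norm_mul, Real.norm_of_nonneg (Real.exp_nonneg _)]
    refine mul_le_mul (Real.exp_le_exp.2 ?_) hq.2 (norm_nonneg _) (Real.exp_nonneg _)
    have h4 := real_inner_le_norm (√t • q.2) q.1
    rw [norm_smul, Real.norm_of_nonneg (Real.sqrt_nonneg t)] at h4
    have h5 : √t * ‖q.2‖ * ‖q.1‖ ≤ √t * R * ‖q.1‖ := by gcongr; exact hq.1
    have : 0 ≤ ‖√t • q.2‖ ^ 2 / 2 := by positivity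
    linarith

end Ito2

/-! ### Traces of powers of symmetric matrices -/

section MatrixTrace
open Matrix
variable {n : ℕ}

theorem exists_diag {D : Matrix (Fin n) (Fin n) ℝ} (hD : Dᵀ = D) :
    ∃ (U : Matrix (Fin n) (Fin n) ℝ) (l : Fin n → ℝ), Uᵀ * U = 1 ∧ U * Uᵀ = 1 ∧
      ∀ j : ℕ, D ^ j = U * diagonal (fun i => l i ^ j) * Uᵀ := by
  have hH : D.IsHermitian := by rw [IsHermitian, conjTranspose_eq_transpose_of_trivial, hD]
  have h1 : (hH.eigenvectorUnitary : Matrix (Fin n) (Fin n) ℝ)ᵀ * hH.eigenvectorUnitary = 1 := by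
    have := Unitary.coe_star_mul_self hH.eigenvectorUnitary
    simpa [star_eq_conjTranspose, conjTranspose_eq_transpose_of_trivial] using this
  have h2 := mul_eq_one_comm.1 h1
  refine ⟨hH.eigenvectorUnitary, hH.eigenvalues, h1, h2, fun j => ?_⟩
  have h3 : D = (hH.eigenvectorUnitary : Matrix (Fin n) (Fin n) ℝ) * diagonal hH.eigenvalues *
      (hH.eigenvectorUnitary : Matrix (Fin n) (Fin n) ℝ)ᵀ := by
    have h4 := hH.spectral_theorem
    rw [Unitary.conjStarAlgAut_apply, star_eq_conjTranspose,
      conjTranspose_eq_transpose_of_trivial] at h4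
    exact h4
  set U : Matrix (Fin n) (Fin n) ℝ := (hH.eigenvectorUnitary : Matrix (Fin n) (Fin n) ℝ)
  induction j with
  | zero => simp [h2]
  | succ j ih =>
    rw [pow_succ, ih]
    calc _ = U * diagonal (fun i => hH.eigenvalues i ^ j) * Uᵀ *
          (U * diagonal hH.eigenvalues * Uᵀ) := congrArg _ h3
      _ = U * diagonal (fun i => hH.eigenvalues i ^ j) * (Uᵀ * U) * diagonal hH.eigenvalues * Uᵀ := by
          simp only [Matrix.mul_assoc]
      _ = _ := by
          rw [h1, Matrix.mul_one, Matrix.mul_assoc U, diagonal_mul_diagonal]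
          simp only [pow_succ]

theorem trace_pow_eq {D U : Matrix (Fin n) (Fin n) ℝ} {l : Fin n → ℝ} (hU : Uᵀ * U = 1) (j : ℕ)
    (h : D ^ j = U * diagonal (fun i => l i ^ j) * Uᵀ) : (D ^ j).trace = ∑ i, l i ^ j := by
  rw [h, trace_mul_comm, ← Matrix.mul_assoc, hU, Matrix.one_mul, trace_diagonal]

theorem trace_pow_nonneg {D : Matrix (Fin n) (Fin n) ℝ} (hD : Dᵀ = D) {q : ℕ} (hq : Even q) :
    0 ≤ (D ^ q).trace := by
  obtain ⟨U, l, h1, h2, h3⟩ := exists_diag hD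
  rw [trace_pow_eq h1 q (h3 q)]
  exact Finset.sum_nonneg fun i _ => hq.pow_nonneg _

theorem trace_conj_pow {D U M : Matrix (Fin n) (Fin n) ℝ} {l : Fin n → ℝ} (j : ℕ)
    (h : D ^ j = U * diagonal (fun i => l i ^ j) * Uᵀ) :
    (D ^ j * M).trace = ∑ i, l i ^ j * (Uᵀ * M * U) i i := by
  rw [h, Matrix.mul_assoc, Matrix.mul_assoc, trace_mul_comm, Matrix.mul_assoc, Matrix.trace]
  simp only [diag_apply, diagonal_mul, Matrix.mul_assoc]

theorem abs_pow_mul_le (a b : ℝ) (j k r : ℕ) (h : j + k = 2 * r) :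
    a ^ j * b ^ k ≤ a ^ (2 * r) + b ^ (2 * r) := by
  have h1 : a ^ j * b ^ k ≤ |a| ^ j * |b| ^ k := by
    rw [← abs_pow, ← abs_pow, ← abs_mul]; exact le_abs_self _
  refine h1.trans ?_
  have ha : a ^ (2 * r) = |a| ^ (2 * r) := by rw [pow_mul, pow_mul, sq_abs]
  have hb : b ^ (2 * r) = |b| ^ (2 * r) := by rw [pow_mul, pow_mul, sq_abs]
  rw [ha, hb, ← h]
  rcases le_total |a| |b| with h2 | h2
  · calc |a| ^ j * |b| ^ k ≤ |b| ^ j * |b| ^ k := by gcongr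
      _ ≤ _ := by rw [← pow_add]; linarith [pow_nonneg (abs_nonneg a) (j + k)]
  · calc |a| ^ j * |b| ^ k ≤ |a| ^ j * |a| ^ k := by gcongr
      _ ≤ _ := by rw [← pow_add]; linarith [pow_nonneg (abs_nonneg b) (j + k)]

/-- In an eigenbasis of `D` this is `λᵢ^j λₖ^k ≤ λᵢ^(2r) + λₖ^(2r)`, weighted by `Hᵢₖ²`. -/
theorem trace_pow_mul_pow_le {D H : Matrix (Fin n) (Fin n) ℝ} (hD : Dᵀ = D) (hH : Hᵀ = H)
    {j k r : ℕ} (h : j + k = 2 * r) :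
    (D ^ j * H * D ^ k * H).trace ≤ 2 * (D ^ (2 * r) * (H * H)).trace := by
  obtain ⟨U, l, h1, h2, h3⟩ := exists_diag hD
  set G := Uᵀ * H * U with hG
  have hGs : Gᵀ = G := by
    rw [hG, transpose_mul, transpose_mul, transpose_transpose, hH, Matrix.mul_assoc]
  have hGs' : ∀ i i', G i i' = G i' i := fun i i' => by
    conv_lhs => rw [← hGs]
    rfl
  have e1 : (D ^ j * H * D ^ k * H).trace = ∑ i, ∑ i', l i ^ j * l i' ^ k * G i i' ^ 2 := by
    rw [Matrix.mul_assoc, Matrix.mul_assoc, trace_conj_pow j (h3 j)]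
    have e2 : Uᵀ * (H * (D ^ k * H)) * U = G * (diagonal (fun i => l i ^ k) * G) := by
      rw [h3 k, hG]; simp only [Matrix.mul_assoc]
    rw [e2]
    refine Finset.sum_congr rfl fun i _ => ?_
    rw [Matrix.mul_apply, Finset.mul_sum]
    refine Finset.sum_congr rfl fun i' _ => ?_
    rw [diagonal_mul, hGs' i' i]; ring
  have e3 : (D ^ (2 * r) * (H * H)).trace = ∑ i, ∑ i', l i ^ (2 * r) * G i i' ^ 2 := by
    rw [trace_conj_pow (2 * r) (h3 _)]
    have e2 : Uᵀ * (H * H) * U = G * G := by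
      calc _ = Uᵀ * H * 1 * H * U := by simp only [Matrix.mul_assoc, Matrix.one_mul]
        _ = _ := by rw [← h2, hG]; simp only [Matrix.mul_assoc]
    rw [e2]
    refine Finset.sum_congr rfl fun i _ => ?_
    rw [Matrix.mul_apply, Finset.mul_sum]
    refine Finset.sum_congr rfl fun i' _ => ?_
    rw [hGs' i' i]; ring
  have e4 : (D ^ (2 * r) * (H * H)).trace = ∑ i, ∑ i', l i' ^ (2 * r) * G i i' ^ 2 := by
    rw [e3, Finset.sum_comm]
    refine Finset.sum_congr rfl fun i _ => Finset.sum_congr rfl fun i' _ => ?_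
    rw [hGs' i' i]
  rw [two_mul]
  nth_rewrite 1 [e3]
  rw [e4, e1, ← Finset.sum_add_distrib]
  refine Finset.sum_le_sum fun i _ => ?_
  rw [← Finset.sum_add_distrib]
  refine Finset.sum_le_sum fun i' _ => ?_
  rw [← add_mul]
  exact mul_le_mul_of_nonneg_right (abs_pow_mul_le _ _ _ _ _ h) (sq_nonneg _)

/-- `|λ|^(q-i) ≤ β⁻ⁱ (λ^q + β^q)` for even `q`. -/
theorem abs_pow_sub_le {b : ℝ} (hb : 0 < b) (a : ℝ) {i j q : ℕ} (hq : Even q) (h : j + i = q) :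
    |a| ^ j ≤ (b ^ i)⁻¹ * (a ^ q + b ^ q) := by
  rw [← hq.pow_abs a, inv_mul_eq_div, le_div_iff₀ (by positivity), ← h]
  rcases le_total |a| b with h2 | h2
  · calc |a| ^ j * b ^ i ≤ b ^ j * b ^ i := by gcongr
      _ ≤ _ := by rw [← pow_add]; linarith [pow_nonneg (abs_nonneg a) (j + i)]
  · calc |a| ^ j * b ^ i ≤ |a| ^ j * |a| ^ i := by gcongr
      _ ≤ _ := by rw [← pow_add]; linarith [pow_nonneg hb.le (j + i)]

/-- In an eigenbasis of `D` the diagonal entries of `M` are at most `c`; the powers of the eigenvalues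
are then raised to the exponent `q` at the price of the additive term `n b^q`. -/
theorem abs_trace_pow_mul_le {D M : Matrix (Fin n) (Fin n) ℝ} (hD : Dᵀ = D) {b c : ℝ} (hb : 0 < b)
    (hM : ∀ v : Fin n → ℝ, |v ⬝ᵥ M *ᵥ v| ≤ c * (v ⬝ᵥ v)) {i j q : ℕ} (hq : Even q)
    (h : j + i = q) :
    |(D ^ j * M).trace| ≤ c * (b ^ i)⁻¹ * ((D ^ q).trace + n * b ^ q) := by
  obtain ⟨U, l, h1, h2, h3⟩ := exists_diag hD
  rw [trace_conj_pow j (h3 j), trace_pow_eq h1 q (h3 q)]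
  have h4 : ∀ k, |(Uᵀ * M * U) k k| ≤ c := by
    intro k
    have h5 := hM (fun r => U r k)
    have h6 : ((fun r => U r k) ⬝ᵥ fun r => U r k) = 1 := by
      have := congrFun (congrFun h1 k) k
      simpa [Matrix.mul_apply, dotProduct] using this
    rw [h6, mul_one] at h5
    convert h5 using 2
    rw [Matrix.mul_assoc, Matrix.mul_apply]
    simp only [dotProduct, mulVec, Matrix.mul_apply, transpose_apply]
  have hc : ∀ k : Fin n, 0 ≤ c := fun k => (abs_nonneg _).trans (h4 k)
  have h7 : (∑ k, l k ^ q + n * b ^ q) = ∑ k : Fin n, (l k ^ q + b ^ q) := by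
    rw [Finset.sum_add_distrib]; simp
  rw [h7, Finset.mul_sum]
  refine (Finset.abs_sum_le_sum_abs _ _).trans (Finset.sum_le_sum fun k _ => ?_)
  rw [abs_mul, abs_pow, mul_comm (|l k| ^ j), mul_assoc c]
  exact mul_le_mul (h4 k) (abs_pow_sub_le hb (l k) hq h) (by positivity) (hc k)

/-- For even `q`, the trace of `D ^ q` bounds the `q`-th power of the operator norm. -/
theorem quad_le_of_pow_trace_le {D : Matrix (Fin n) (Fin n) ℝ} (hD : Dᵀ = D) {q : ℕ} (hq : Even q)
    (hq0 : q ≠ 0) {r : ℝ} (hr : 0 ≤ r) (h : (D ^ q).trace ≤ r ^ q) (v : Fin n → ℝ) :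
    |v ⬝ᵥ D *ᵥ v| ≤ r * (v ⬝ᵥ v) := by
  obtain ⟨U, l, h1, h2, h3⟩ := exists_diag hD
  rw [trace_pow_eq h1 q (h3 q)] at h
  have h4 : ∀ i, |l i| ≤ r := fun i => by
    have h5 := (Finset.single_le_sum (f := fun i => l i ^ q) (fun i _ => hq.pow_nonneg _)
      (Finset.mem_univ i)).trans h
    rw [← hq.pow_abs] at h5
    exact (pow_le_pow_iff_left₀ (abs_nonneg _) hr hq0).1 h5
  have h6 := h3 1
  simp only [pow_one] at h6
  set w := Uᵀ *ᵥ v with hw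
  have e1 : v ⬝ᵥ D *ᵥ v = ∑ i, l i * w i ^ 2 := by
    rw [h6, ← mulVec_mulVec, ← mulVec_mulVec, dotProduct_mulVec, ← mulVec_transpose, ← hw,
      dotProduct]
    refine Finset.sum_congr rfl fun i _ => ?_
    rw [mulVec_diagonal]; ring
  have e2 : v ⬝ᵥ v = ∑ i, w i ^ 2 := by
    calc v ⬝ᵥ v = v ⬝ᵥ (U * Uᵀ) *ᵥ v := by rw [h2, one_mulVec]
      _ = w ⬝ᵥ w := by rw [← mulVec_mulVec, dotProduct_mulVec, ← mulVec_transpose, ← hw]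
      _ = _ := by simp [dotProduct, pow_two]
  rw [e1, e2, Finset.mul_sum]
  refine (Finset.abs_sum_le_sum_abs _ _).trans (Finset.sum_le_sum fun i _ => ?_)
  rw [abs_mul, abs_of_nonneg (sq_nonneg (w i))]
  exact mul_le_mul_of_nonneg_right (h4 i) (sq_nonneg _)

theorem hasDerivAt_matrix_pow {D : ℝ → Matrix (Fin n) (Fin n) ℝ} {D' : Matrix (Fin n) (Fin n) ℝ}
    {s : ℝ} (h : ∀ i j, HasDerivAt (fun s => D s i j) (D' i j) s) (q : ℕ) (i j : Fin n) :
    HasDerivAt (fun s => (D s ^ q) i j)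
      ((∑ r ∈ Finset.range q, D s ^ r * D' * D s ^ (q - 1 - r)) i j) s := by
  revert i j
  induction q with
  | zero => intro i j; simpa using hasDerivAt_const s _
  | succ q ih =>
    intro i j
    have h2 : HasDerivAt (fun s => ∑ k, (D s ^ q) i k * D s k j)
        (∑ k, ((∑ r ∈ Finset.range q, D s ^ r * D' * D s ^ (q - 1 - r)) i k * D s k j +
          (D s ^ q) i k * D' k j)) s :=
      HasDerivAt.fun_sum fun k _ => (ih i k).mul (h k j)
    have e1 : (fun s => (D s ^ (q + 1)) i j) = fun s => ∑ k, (D s ^ q) i k * D s k j := by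
      ext s; rw [pow_succ, Matrix.mul_apply]
    rw [e1]
    refine h2.congr_deriv ?_
    rw [Finset.sum_add_distrib, ← Matrix.mul_apply, ← Matrix.mul_apply, ← Matrix.add_apply,
      Finset.sum_range_succ]
    have e2 : (∑ r ∈ Finset.range q, D s ^ r * D' * D s ^ (q - 1 - r)) * D s =
        ∑ r ∈ Finset.range q, D s ^ r * D' * D s ^ (q + 1 - 1 - r) := by
      rw [Finset.sum_mul]
      refine Finset.sum_congr rfl fun r hr => ?_
      rw [Finset.mem_range] at hr
      rw [Matrix.mul_assoc _ _ (D s), ← pow_succ]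
      congr 2; omega
    rw [e2]
    simp

/-- Polynomial path of matrices: first and second derivative of `tr (D(s)^q)`. -/
theorem hasDerivAt_trace_pow {D : ℝ → Matrix (Fin n) (Fin n) ℝ} {D' : Matrix (Fin n) (Fin n) ℝ}
    {s : ℝ} (h : ∀ i j, HasDerivAt (fun s => D s i j) (D' i j) s) (q : ℕ) :
    HasDerivAt (fun s => (D s ^ (q + 1)).trace) ((q + 1 : ℕ) * (D s ^ q * D').trace) s := by
  have h1 := hasDerivAt_matrix_pow h
  have h3 : HasDerivAt (fun s => ∑ i, (D s ^ (q + 1)) i i)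
      (∑ i, (∑ r ∈ Finset.range (q + 1), D s ^ r * D' * D s ^ (q + 1 - 1 - r)) i i) s :=
    HasDerivAt.fun_sum fun i _ => h1 (q + 1) i i
  refine h3.congr_deriv ?_
  have e2 : ∀ r ∈ Finset.range (q + 1), (D s ^ r * D' * D s ^ (q + 1 - 1 - r)).trace =
      (D s ^ q * D').trace := by
    intro r hr
    rw [Finset.mem_range] at hr
    rw [trace_mul_comm, ← Matrix.mul_assoc, ← pow_add]
    congr 3; omega
  calc _ = (∑ r ∈ Finset.range (q + 1), D s ^ r * D' * D s ^ (q + 1 - 1 - r)).trace := rfl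
    _ = _ := by rw [trace_sum, Finset.sum_congr rfl e2]; simp

theorem hasDerivAt_trace_pow_mul {D E : ℝ → Matrix (Fin n) (Fin n) ℝ}
    {D' E' : Matrix (Fin n) (Fin n) ℝ}
    {s : ℝ} (h : ∀ i j, HasDerivAt (fun s => D s i j) (D' i j) s)
    (hE : ∀ i j, HasDerivAt (fun s => E s i j) (E' i j) s) (q : ℕ) :
    HasDerivAt (fun s => (D s ^ q * E s).trace)
      (∑ r ∈ Finset.range q, (D s ^ r * D' * D s ^ (q - 1 - r) * E s).trace +
        (D s ^ q * E').trace) s := by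
  have h1 := hasDerivAt_matrix_pow h
  have h3 : HasDerivAt (fun s => ∑ i, ∑ k, (D s ^ q) i k * E s k i)
      (∑ i, ∑ k, ((∑ r ∈ Finset.range q, D s ^ r * D' * D s ^ (q - 1 - r)) i k * E s k i +
        (D s ^ q) i k * E' k i)) s :=
    HasDerivAt.fun_sum fun i _ => HasDerivAt.fun_sum fun k _ => (h1 q i k).mul (hE k i)
  refine h3.congr_deriv ?_
  simp only [Finset.sum_add_distrib]
  rw [← trace_sum, ← Finset.sum_mul]
  rfl

end MatrixTrace

/-! ### Second and third moments under a quadratic Poincaré inequality -/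

section Moments
set_option linter.unusedSectionVars false
open Matrix
variable {n : ℕ} {ν : Measure (Eu n)} [IsProbabilityMeasure ν] {R : ℝ}

/-- The barycenter of a measure, in coordinates. -/
def bar (ν : Measure (Eu n)) (i : Fin n) : ℝ := ∫ x, x i ∂ν

/-- The point `x` re-centred at the barycenter, in coordinates. -/
def ctr (ν : Measure (Eu n)) (x : Eu n) (i : Fin n) : ℝ := x i - bar ν i

/-- The covariance matrix. -/
def covM (ν : Measure (Eu n)) : Matrix (Fin n) (Fin n) ℝ :=
  Matrix.of fun i j => ∫ x, ctr ν x i * ctr ν x j ∂ν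

/-- The `l`-th slice of the tensor of third central moments. -/
def thirdM (ν : Measure (Eu n)) (l : Fin n) : Matrix (Fin n) (Fin n) ℝ :=
  Matrix.of fun i j => ∫ x, ctr ν x l * (ctr ν x i * ctr ν x j) ∂ν

/-- The Poincaré inequality for quadratic forms, with a constant which is `ψ²` times a bound for
the covariance. -/
def QuadPoincare (ν : Measure (Eu n)) (ψ : ℝ) : Prop :=
  ∀ M : Matrix (Fin n) (Fin n) ℝ, Mᵀ = M → ∀ κ : ℝ, 0 ≤ κ →
    (∀ v : Fin n → ℝ, v ⬝ᵥ covM ν *ᵥ v ≤ κ * (v ⬝ᵥ v)) →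
    ∃ c : ℝ, ∫ x, (ctr ν x ⬝ᵥ M *ᵥ ctr ν x - c) ^ 2 ∂ν ≤
      4 * ψ ^ 2 * κ * ∫ x, (M *ᵥ ctr ν x) ⬝ᵥ (M *ᵥ ctr ν x) ∂ν

theorem integrable_of_cont {W : Type} [NormedAddCommGroup W] [NormedSpace ℝ W] {f : Eu n → W}
    (hf : Continuous f) (hR : ∀ᵐ x ∂ν, ‖x‖ ≤ R) : Integrable f ν := by
  obtain ⟨C, -, hC⟩ := exists_bound_ball hf hR
  exact Integrable.of_bound hf.aestronglyMeasurable C hC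

theorem continuous_ctr : Continuous (ctr ν) := by
  refine continuous_pi fun i => ?_
  unfold ctr; fun_prop

theorem continuous_ctr_apply (i : Fin n) : Continuous fun x => ctr ν x i := by
  unfold ctr; fun_prop

theorem integral_cauchy_schwarz {f g : Eu n → ℝ} (hf : Continuous f) (hg : Continuous g)
    (hR : ∀ᵐ x ∂ν, ‖x‖ ≤ R) :
    (∫ x, f x * g x ∂ν) ^ 2 ≤ (∫ x, f x ^ 2 ∂ν) * ∫ x, g x ^ 2 ∂ν := by
  have hff := integrable_of_cont (ν := ν) (hf.fun_pow 2) hR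
  have hgg := integrable_of_cont (ν := ν) (hg.fun_pow 2) hR
  have hfg := integrable_of_cont (ν := ν) (hf.fun_mul hg) hR
  have h : ∀ s : ℝ, 0 ≤ (∫ x, g x ^ 2 ∂ν) * (s * s) + (2 * ∫ x, f x * g x ∂ν) * s +
      ∫ x, f x ^ 2 ∂ν := by
    intro s
    have h1 : ∫ x, (f x + s * g x) ^ 2 ∂ν = (∫ x, g x ^ 2 ∂ν) * (s * s) +
        (2 * ∫ x, f x * g x ∂ν) * s + ∫ x, f x ^ 2 ∂ν := by
      have e : ∀ x, (f x + s * g x) ^ 2 = (s * s) * g x ^ 2 + (2 * s) * (f x * g x) + f x ^ 2 :=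
        fun x => by ring
      simp only [e]
      rw [integral_add ((hgg.const_mul _).fun_add (hfg.const_mul _)) hff,
        integral_add (hgg.const_mul _) (hfg.const_mul _), integral_const_mul, integral_const_mul]
      ring
    rw [← h1]
    exact integral_nonneg fun x => sq_nonneg _
  have := discrim_le_zero h
  rw [discrim] at this
  nlinarith

theorem dot_ctr_integral (hR : ∀ᵐ x ∂ν, ‖x‖ ≤ R) (v : Fin n → ℝ) :
    ∫ x, ctr ν x ⬝ᵥ v ∂ν = 0 := by
  simp only [dotProduct]
  rw [integral_finsetSum _ fun i _ => integrable_of_cont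
    ((continuous_ctr_apply i).fun_mul continuous_const) hR]
  refine Finset.sum_eq_zero fun i _ => ?_
  rw [integral_mul_const]
  have : ∫ x, ctr ν x i ∂ν = 0 := by
    unfold ctr
    rw [integral_sub (integrable_of_cont (by fun_prop) hR) (integrable_const _)]
    simp [bar]
  rw [this, zero_mul]

theorem covM_quad (hR : ∀ᵐ x ∂ν, ‖x‖ ≤ R) (u v : Fin n → ℝ) :
    u ⬝ᵥ covM ν *ᵥ v = ∫ x, (ctr ν x ⬝ᵥ u) * (ctr ν x ⬝ᵥ v) ∂ν := by
  have e : ∀ x, (ctr ν x ⬝ᵥ u) * (ctr ν x ⬝ᵥ v) =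
      ∑ i, ∑ j, u i * v j * (ctr ν x i * ctr ν x j) := by
    intro x
    rw [dotProduct, dotProduct, Finset.sum_mul_sum]
    refine Finset.sum_congr rfl fun i _ => Finset.sum_congr rfl fun j _ => by ring
  simp only [e]
  have hc : ∀ i j, Integrable (fun x => u i * v j * (ctr ν x i * ctr ν x j)) ν := fun i j =>
    integrable_of_cont (continuous_const.fun_mul
      ((continuous_ctr_apply i).fun_mul (continuous_ctr_apply j))) hR
  rw [integral_finsetSum _ fun i _ => integrable_finsetSum _ fun j _ => hc i j]
  simp only [dotProduct, mulVec, covM, of_apply]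
  refine Finset.sum_congr rfl fun i _ => ?_
  rw [integral_finsetSum _ fun j _ => hc i j, Finset.mul_sum]
  refine Finset.sum_congr rfl fun j _ => ?_
  rw [integral_const_mul]; ring

theorem covM_symm : (covM ν)ᵀ = covM ν := by
  ext i j
  simp only [covM, transpose_apply, of_apply, mul_comm]

theorem thirdM_symm (l : Fin n) : (thirdM ν l)ᵀ = thirdM ν l := by
  ext i j
  simp only [thirdM, transpose_apply, of_apply]
  congr 1; ext x; ring

theorem covM_nonneg (hR : ∀ᵐ x ∂ν, ‖x‖ ≤ R) (v : Fin n → ℝ) : 0 ≤ v ⬝ᵥ covM ν *ᵥ v := by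
  rw [covM_quad hR]
  exact integral_nonneg fun x => mul_self_nonneg _

/-- The form bound `Cov ≤ κ` gives `Cov² ≤ κ²`, by the Cauchy–Schwarz inequality for the form `Cov`. -/
theorem covM_sq_le (hR : ∀ᵐ x ∂ν, ‖x‖ ≤ R) {κ : ℝ} (hκ : 0 ≤ κ)
    (h : ∀ v : Fin n → ℝ, v ⬝ᵥ covM ν *ᵥ v ≤ κ * (v ⬝ᵥ v)) (v : Fin n → ℝ) :
    (covM ν *ᵥ v) ⬝ᵥ (covM ν *ᵥ v) ≤ κ ^ 2 * (v ⬝ᵥ v) := by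
  set w := covM ν *ᵥ v with hw
  have hcd : ∀ u : Fin n → ℝ, Continuous fun x => ctr ν x ⬝ᵥ u := fun u =>
    continuous_ctr.dotProduct continuous_const
  have h1 : w ⬝ᵥ w = ∫ x, (ctr ν x ⬝ᵥ w) * (ctr ν x ⬝ᵥ v) ∂ν := by rw [← covM_quad hR]
  have h2 := integral_cauchy_schwarz (hcd w) (hcd v) hR
  simp only [pow_two (ctr _ _ ⬝ᵥ _), ← covM_quad hR] at h2
  rw [← hw] at h2
  have h0 : 0 ≤ w ⬝ᵥ w := by simpa using dotProduct_star_self_nonneg w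
  have h0' : 0 ≤ v ⬝ᵥ v := by simpa using dotProduct_star_self_nonneg v
  have h3 : (w ⬝ᵥ w) ^ 2 ≤ (κ * (w ⬝ᵥ w)) * (κ * (v ⬝ᵥ v)) := by
    refine h2.trans ?_
    exact mul_le_mul (h w) (h v) (covM_nonneg hR v) (by positivity)
  rcases h0.eq_or_lt with h4 | h4
  · rw [← h4]; positivity
  · nlinarith

/-- The third moments in the direction `v` are controlled by the Poincaré inequality applied to the
quadratic form `B_v = E ⟨y, v⟩ y yᵀ`. -/
theorem thirdM_vec_le (hR : ∀ᵐ x ∂ν, ‖x‖ ≤ R) {ψ κ : ℝ} (hP : QuadPoincare ν ψ) (hκ : 0 ≤ κ)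
    (h : ∀ v : Fin n → ℝ, v ⬝ᵥ covM ν *ᵥ v ≤ κ * (v ⬝ᵥ v)) (v : Fin n → ℝ) :
    ∑ l, (thirdM ν l *ᵥ v) ⬝ᵥ (thirdM ν l *ᵥ v) ≤ 4 * ψ ^ 2 * κ ^ 3 * (v ⬝ᵥ v) := by
  have hcd : ∀ u : Fin n → ℝ, Continuous fun x => ctr ν x ⬝ᵥ u := fun u =>
    continuous_ctr.dotProduct continuous_const
  have hci := continuous_ctr_apply (ν := ν)
  set B : Matrix (Fin n) (Fin n) ℝ := Matrix.of fun l i => (thirdM ν l *ᵥ v) i with hB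
  have hBi : ∀ l i, B l i = ∫ x, (ctr ν x ⬝ᵥ v) * (ctr ν x l * ctr ν x i) ∂ν := by
    intro l i
    simp only [hB, of_apply, mulVec, dotProduct, thirdM]
    simp only [Finset.sum_mul]
    rw [integral_finsetSum _ fun j _ => integrable_of_cont
      (((hci j).fun_mul continuous_const).fun_mul ((hci l).fun_mul (hci i))) hR]
    refine Finset.sum_congr rfl fun j _ => ?_
    rw [← integral_mul_const]
    congr 1; ext x; ring
  have hBs : Bᵀ = B := by
    ext i j
    rw [transpose_apply, hBi, hBi]
    congr 1; ext x; ring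
  set S := ∑ l, ∑ i, B l i ^ 2 with hS
  have hS1 : ∑ l, (thirdM ν l *ᵥ v) ⬝ᵥ (thirdM ν l *ᵥ v) = S := by
    simp only [hS, hB, of_apply, dotProduct, pow_two]
  have hS0 : 0 ≤ S := Finset.sum_nonneg fun l _ => Finset.sum_nonneg fun i _ => sq_nonneg _
  have hq : Continuous fun x => ctr ν x ⬝ᵥ B *ᵥ ctr ν x :=
    continuous_ctr.dotProduct (continuous_const.matrix_mulVec continuous_ctr)
  obtain ⟨c, hc⟩ := hP B hBs κ hκ h
  have hS2 : S = ∫ x, (ctr ν x ⬝ᵥ v) * (ctr ν x ⬝ᵥ B *ᵥ ctr ν x - c) ∂ν := by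
    simp only [mul_sub]
    rw [integral_sub (integrable_of_cont ((hcd v).fun_mul hq) hR)
      (integrable_of_cont ((hcd v).fun_mul continuous_const) hR), integral_mul_const,
      dot_ctr_integral hR, zero_mul, sub_zero]
    have e : ∀ x, (ctr ν x ⬝ᵥ v) * (ctr ν x ⬝ᵥ B *ᵥ ctr ν x) =
        ∑ l, ∑ i, B l i * ((ctr ν x ⬝ᵥ v) * (ctr ν x l * ctr ν x i)) := by
      intro x
      have e0 : ctr ν x ⬝ᵥ B *ᵥ ctr ν x = ∑ l, ctr ν x l * ∑ i, B l i * ctr ν x i := rfl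
      rw [e0, Finset.mul_sum]
      refine Finset.sum_congr rfl fun l _ => ?_
      rw [Finset.mul_sum, Finset.mul_sum]
      refine Finset.sum_congr rfl fun i _ => by ring
    simp only [e]
    have hi : ∀ l i, Integrable (fun x => B l i * ((ctr ν x ⬝ᵥ v) * (ctr ν x l * ctr ν x i))) ν :=
      fun l i => integrable_of_cont
        (continuous_const.fun_mul ((hcd v).fun_mul ((hci l).fun_mul (hci i)))) hR
    rw [integral_finsetSum _ fun l _ => integrable_finsetSum _ fun i _ => hi l i]
    refine Finset.sum_congr rfl fun l _ => ?_
    rw [integral_finsetSum _ fun i _ => hi l i]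
    refine Finset.sum_congr rfl fun i _ => ?_
    rw [integral_const_mul, ← hBi, pow_two]
  have h1 := integral_cauchy_schwarz (hcd v) (hq.fun_sub (continuous_const (y := c))) hR
  rw [← hS2] at h1
  have h2 : ∫ x, (ctr ν x ⬝ᵥ v) ^ 2 ∂ν ≤ κ * (v ⬝ᵥ v) := by
    simp only [pow_two (ctr _ _ ⬝ᵥ _), ← covM_quad hR]; exact h v
  have h3 : ∫ x, (B *ᵥ ctr ν x) ⬝ᵥ (B *ᵥ ctr ν x) ∂ν ≤ κ * S := by
    have e : ∀ x, (B *ᵥ ctr ν x) ⬝ᵥ (B *ᵥ ctr ν x) = ∑ l, (ctr ν x ⬝ᵥ B l) * (ctr ν x ⬝ᵥ B l) := by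
      intro x
      simp only [dotProduct, mulVec]
      simp only [mul_comm]
    simp only [e]
    rw [integral_finsetSum _ fun l _ => integrable_of_cont ((hcd (B l)).fun_mul (hcd (B l))) hR, hS,
      Finset.mul_sum]
    refine Finset.sum_le_sum fun l _ => ?_
    rw [← covM_quad hR]
    refine (h (B l)).trans (le_of_eq ?_)
    simp only [dotProduct, pow_two]
  have hv0 : 0 ≤ v ⬝ᵥ v := by simpa using dotProduct_star_self_nonneg v
  have h4 : S ^ 2 ≤ (κ * (v ⬝ᵥ v)) * (4 * ψ ^ 2 * κ * (κ * S)) := by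
    refine h1.trans (mul_le_mul h2 (hc.trans ?_) (integral_nonneg fun x => sq_nonneg _)
      (by positivity))
    exact mul_le_mul_of_nonneg_left h3 (by positivity)
  rw [hS1]
  rcases hS0.eq_or_lt with h5 | h5
  · rw [← h5]; positivity
  · nlinarith

/-- The third moments, weighted by an even power of `D`: the columns of `D ^ r` are inserted in the
bound for a single direction. -/
theorem thirdM_trace_le (hR : ∀ᵐ x ∂ν, ‖x‖ ≤ R) {ψ κ : ℝ} (hP : QuadPoincare ν ψ) (hκ : 0 ≤ κ)
    (h : ∀ v : Fin n → ℝ, v ⬝ᵥ covM ν *ᵥ v ≤ κ * (v ⬝ᵥ v)) {D : Matrix (Fin n) (Fin n) ℝ}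
    (hD : Dᵀ = D) (r : ℕ) :
    ∑ l, (D ^ (2 * r) * (thirdM ν l * thirdM ν l)).trace ≤
      4 * ψ ^ 2 * κ ^ 3 * (D ^ (2 * r)).trace := by
  have hN : (D ^ r)ᵀ = D ^ r := by rw [transpose_pow, hD]
  have e1 : ∀ l, (D ^ (2 * r) * (thirdM ν l * thirdM ν l)).trace =
      ∑ k, (thirdM ν l *ᵥ fun j => (D ^ r) j k) ⬝ᵥ (thirdM ν l *ᵥ fun j => (D ^ r) j k) := by
    intro l
    have e3 : (D ^ (2 * r) * (thirdM ν l * thirdM ν l)).trace =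
        ((thirdM ν l * D ^ r)ᵀ * (thirdM ν l * D ^ r)).trace := by
      rw [transpose_mul, hN, thirdM_symm, two_mul, pow_add, Matrix.mul_assoc, trace_mul_comm]
      simp only [Matrix.mul_assoc]
    rw [e3]
    simp only [Matrix.trace, diag_apply]
    refine Finset.sum_congr rfl fun k _ => ?_
    rw [Matrix.mul_apply, dotProduct]
    simp only [transpose_apply, Matrix.mul_apply, mulVec, dotProduct]
  have e2 : (D ^ (2 * r)).trace = ∑ k, (fun j => (D ^ r) j k) ⬝ᵥ fun j => (D ^ r) j k := by
    have : D ^ (2 * r) = (D ^ r)ᵀ * D ^ r := by rw [hN, two_mul, pow_add]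
    rw [this]
    simp only [Matrix.trace, diag_apply, Matrix.mul_apply, dotProduct, transpose_apply]
  simp only [e1]
  rw [Finset.sum_comm, e2, Finset.mul_sum]
  exact Finset.sum_le_sum fun k _ => thirdM_vec_le hR hP hκ h _

end Moments

/-! ### The tilted measures -/

section TiltMeasure
set_option linter.unusedSectionVars false
variable {n : ℕ} {W : Type} [NormedAddCommGroup W] [NormedSpace ℝ W]
  {μ : Measure (Eu n)} [IsProbabilityMeasure μ] {R : ℝ}

/-- The tilted probability measure. -/
def tilt (μ : Measure (Eu n)) (p : ℝ × Eu n) : Measure (Eu n) := μ.tilted fun x => tlin x p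

theorem tE_eq (k : Eu n → W) (p : ℝ × Eu n) : tE μ k p = ∫ x, k x ∂(tilt μ p) := by
  rw [tilt, integral_tilted, tE, tZ, tl, tl, ← integral_smul]
  refine integral_congr_ae (.of_forall fun x => ?_)
  simp only [smul_smul, smul_eq_mul, mul_one]
  congr 1; ring

theorem isProbabilityMeasure_tilt (hR : ∀ᵐ x ∂μ, ‖x‖ ≤ R) (p : ℝ × Eu n) :
    IsProbabilityMeasure (tilt μ p) := by
  refine isProbabilityMeasure_tilted ?_
  simpa using tl_integrable (continuous_const (y := (1 : ℝ))) hR p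

theorem tilt_ae (hR : ∀ᵐ x ∂μ, ‖x‖ ≤ R) (p : ℝ × Eu n) : ∀ᵐ x ∂(tilt μ p), ‖x‖ ≤ R :=
  (tilted_absolutelyContinuous μ _).ae_le hR

theorem tilt_zero (p : ℝ × Eu n) (hp : p = 0) : tilt μ p = μ := by
  subst hp
  simp [tilt]

end TiltMeasure

/-! ### The potential -/

section Potential
open Matrix
variable {n : ℕ}

/-- The space of pairs consisting of a vector (a first moment) and a matrix (second moments). -/
abbrev MomSp (n : ℕ) : Type := (Fin n → ℝ) × (Fin n → Fin n → ℝ)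

/-- The first and second order monomials. -/
def momK (x : Eu n) : MomSp n := (fun i => x i, fun i j => x i * x j)

/-- The deviation of the covariance attached to a pair of moments from a reference matrix `S`. -/
def devM (S : Matrix (Fin n) (Fin n) ℝ) (w : MomSp n) : Matrix (Fin n) (Fin n) ℝ :=
  Matrix.of fun i j => (w.2 i j + w.2 j i) / 2 - w.1 i * w.1 j - S i j

/-- The derivative of `devM` at `w` in the direction `e`. -/
def devM' (w e : MomSp n) : Matrix (Fin n) (Fin n) ℝ :=
  Matrix.of fun i j => (e.2 i j + e.2 j i) / 2 - w.1 i * e.1 j - e.1 i * w.1 j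

/-- The trace of the `q`-th power of the deviation. -/
def potG (S : Matrix (Fin n) (Fin n) ℝ) (q : ℕ) (w : MomSp n) : ℝ := (devM S w ^ q).trace

/-- The bounded potential `(Γ + η) / (Γ + M)`. -/
def potV (S : Matrix (Fin n) (Fin n) ℝ) (q : ℕ) (η M : ℝ) (w : MomSp n) : ℝ :=
  (potG S q w + η) / (potG S q w + M)

theorem devM_symm {S : Matrix (Fin n) (Fin n) ℝ} (hS : Sᵀ = S) (w : MomSp n) :
    (devM S w)ᵀ = devM S w := by
  ext i j
  have : S j i = S i j := by
    conv_rhs => rw [← hS]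
    rfl
  simp only [transpose_apply, devM, of_apply, this]
  ring

theorem potG_nonneg {S : Matrix (Fin n) (Fin n) ℝ} (hS : Sᵀ = S) {q : ℕ} (hq : Even q)
    (w : MomSp n) : 0 ≤ potG S q w := trace_pow_nonneg (devM_symm hS w) hq

theorem potG_contDiff (S : Matrix (Fin n) (Fin n) ℝ) (q : ℕ) : ContDiff ℝ 2 (potG S q) := by
  have h0 : ∀ i j, ContDiff ℝ 2 fun w : MomSp n => devM S w i j := by
    intro i j
    simp only [devM, of_apply]
    fun_prop
  have h1 : ∀ q : ℕ, ∀ i j, ContDiff ℝ 2 fun w : MomSp n => (devM S w ^ q) i j := by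
    intro q
    induction q with
    | zero => intro i j; simpa using contDiff_const
    | succ q ih =>
      intro i j
      simp only [pow_succ, Matrix.mul_apply]
      exact ContDiff.sum fun k _ => (ih i k).mul (h0 k j)
  unfold potG
  simp only [Matrix.trace, diag_apply]
  exact ContDiff.sum fun i _ => h1 q i i

theorem potV_contDiff {S : Matrix (Fin n) (Fin n) ℝ} (hS : Sᵀ = S) {q : ℕ} (hq : Even q)
    {η M : ℝ} (hM : 0 < M) : ContDiff ℝ 2 (potV S q η M) := by
  have := potG_contDiff S q
  refine ContDiff.div (by fun_prop) (by fun_prop) fun w => ?_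
  have := potG_nonneg hS hq w
  positivity

theorem potV_bound {S : Matrix (Fin n) (Fin n) ℝ} (hS : Sᵀ = S) {q : ℕ} (hq : Even q)
    {η M : ℝ} (hη : 0 ≤ η) (hM : η < M) (w : MomSp n) : |potV S q η M w| ≤ 1 := by
  have := potG_nonneg hS hq w
  have hM0 : 0 < M := by linarith
  rw [potV, abs_of_nonneg (by positivity), div_le_one (by positivity)]
  linarith

/-- The second derivative of `tr D^q` along a line, `q = r + 2`. -/
def potG2 (S : Matrix (Fin n) (Fin n) ℝ) (r : ℕ) (w e : MomSp n) : ℝ :=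
  ((r + 1 + 1 : ℕ) : ℝ) * (∑ k ∈ Finset.range (r + 1), (devM S w ^ k * devM' w e *
    devM S w ^ (r - k) * devM' w e).trace -
      2 * (devM S w ^ (r + 1) * Matrix.vecMulVec e.1 e.1).trace)

/-- Since `x ↦ (x + η) / (x + M)` is concave, composing with it only costs its first derivative
`(M - η) / (x + M)²`. -/
theorem potV_snd_le {S : Matrix (Fin n) (Fin n) ℝ} (hS : Sᵀ = S) {r : ℕ} (hr : Even (r + 2))
    {η M : ℝ} (hη : 0 ≤ η) (hM : η < M) (w e : MomSp n) :
    fderiv ℝ (fderiv ℝ (potV S (r + 2) η M)) w e e ≤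
      (M - η) / (potG S (r + 2) w + M) ^ 2 * potG2 S r w e := by
  have hM0 : 0 < M := by linarith
  set D' : ℝ → Matrix (Fin n) (Fin n) ℝ := fun s =>
    Matrix.of fun i j => devM' w e i j - 2 * s * (e.1 i * e.1 j) with hD'
  have hd : ∀ s i j, HasDerivAt (fun s : ℝ => devM S (w + s • e) i j) (D' s i j) s := by
    intro s i j
    have e1 : (fun s : ℝ => devM S (w + s • e) i j) = fun s => devM S w i j + s * devM' w e i j -
        s ^ 2 * (e.1 i * e.1 j) := by
      ext s
      simp only [devM, devM', of_apply, Prod.fst_add, Prod.snd_add, Prod.smul_fst, Prod.smul_snd,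
        Pi.add_apply, Pi.smul_apply, smul_eq_mul]
      ring
    rw [e1]
    have h1 := ((hasDerivAt_id s).mul_const (devM' w e i j)).const_add (devM S w i j)
    have h2 := ((hasDerivAt_id s).fun_pow 2).mul_const (e.1 i * e.1 j)
    refine (h1.sub h2).congr_deriv ?_
    simp [hD']
  have hdd : ∀ i j, HasDerivAt (fun s : ℝ => D' s i j) ((-2 : ℝ) * Matrix.vecMulVec e.1 e.1 i j) 0 := by
    intro i j
    simp only [hD', of_apply]
    have h1 := (((hasDerivAt_id (0 : ℝ)).const_mul 2).mul_const (e.1 i * e.1 j)).const_sub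
      (devM' w e i j)
    refine h1.congr_deriv ?_
    simp [vecMulVec_apply]
  have hG : ∀ s, HasDerivAt (fun s : ℝ => potG S (r + 2) (w + s • e))
      (((r + 1 + 1 : ℕ) : ℝ) * (devM S (w + s • e) ^ (r + 1) * D' s).trace) s := fun s =>
    hasDerivAt_trace_pow (hd s) (r + 1)
  have hG2 : HasDerivAt (fun s : ℝ => ((r + 1 + 1 : ℕ) : ℝ) *
      (devM S (w + s • e) ^ (r + 1) * D' s).trace) (potG2 S r w e) 0 := by
    have h1 := (hasDerivAt_trace_pow_mul (hd 0) (E' := (-2 : ℝ) • Matrix.vecMulVec e.1 e.1)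
      hdd (r + 1)).const_mul ((r + 1 + 1 : ℕ) : ℝ)
    refine h1.congr_deriv ?_
    have e0 : D' 0 = devM' w e := by ext i j; simp [hD']
    simp only [zero_smul, add_zero, e0, potG2, Matrix.mul_smul, trace_smul, smul_eq_mul,
      Nat.add_sub_cancel]
    ring
  have hpos : ∀ w, 0 < potG S (r + 2) w + M := fun w => by
    have := potG_nonneg hS hr w
    positivity
  have hc1 : ∀ s, HasDerivAt (fun s : ℝ => potV S (r + 2) η M (w + s • e))
      ((M - η) * ((((r + 1 + 1 : ℕ) : ℝ) * (devM S (w + s • e) ^ (r + 1) * D' s).trace) /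
        (potG S (r + 2) (w + s • e) + M) ^ 2)) s := by
    intro s
    have h1 := ((hG s).add_const η).div ((hG s).add_const M) (hpos _).ne'
    refine h1.congr_deriv ?_
    rw [← mul_div_assoc]
    congr 1
    ring
  have hc2 := (hG2.div (((hG 0).add_const M).fun_pow 2) (pow_ne_zero 2 (hpos _).ne')).const_mul
    (M - η)
  rw [snd_fderiv_eq (potV_contDiff hS hr hM0) w e hc1 hc2]
  simp only [zero_smul, add_zero]
  have hp := hpos w
  set a := potG S (r + 2) w + M
  set b := (((r + 1 + 1 : ℕ) : ℝ) * (devM S w ^ (r + 1) * D' 0).trace)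
  have h5 : (M - η) / a ^ 2 * potG2 S r w e - (M - η) * ((potG2 S r w e * a ^ 2 -
      b * (↑2 * a ^ (2 - 1) * b)) / (a ^ 2) ^ 2) = 2 * (M - η) * b ^ 2 / a ^ 3 := by
    norm_num
    field_simp
    ring
  have h6 : 0 ≤ 2 * (M - η) * b ^ 2 / a ^ 3 := by
    have : 0 ≤ M - η := by linarith
    positivity
  norm_num at h5 ⊢
  linarith

end Potential

/-! ### The drift of the potential -/

section Drift
open Matrix
set_option linter.unusedSectionVars false
variable {n : ℕ} {μ : Measure (Eu n)} [IsProbabilityMeasure μ] {R : ℝ}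

theorem int_sub {α : Type*} [MeasurableSpace α] {ν : Measure α} {f g : α → ℝ}
    (hf : Integrable f ν) (hg : Integrable g ν) : Integrable (fun x => f x - g x) ν := hf.sub hg

theorem int_add {α : Type*} [MeasurableSpace α] {ν : Measure α} {f g : α → ℝ}
    (hf : Integrable f ν) (hg : Integrable g ν) : Integrable (fun x => f x + g x) ν := hf.add hg

theorem continuous_momK : Continuous (momK : Eu n → MomSp n) := by
  unfold momK
  fun_prop

theorem integral_momSp {ν : Measure (Eu n)} {k : Eu n → MomSp n} (hk : Integrable k ν) :
    (∀ i, (∫ x, k x ∂ν).1 i = ∫ x, (k x).1 i ∂ν) ∧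
      ∀ i j, (∫ x, k x ∂ν).2 i j = ∫ x, (k x).2 i j ∂ν := by
  constructor
  · intro i
    exact (ContinuousLinearMap.integral_comp_comm ((ContinuousLinearMap.proj (R := ℝ)
      (φ := fun _ : Fin n => ℝ) i).comp
      (ContinuousLinearMap.fst ℝ (Fin n → ℝ) (Fin n → Fin n → ℝ))) hk).symm
  · intro i j
    exact (ContinuousLinearMap.integral_comp_comm ((ContinuousLinearMap.proj (R := ℝ)
      (φ := fun _ : Fin n => ℝ) j).comp ((ContinuousLinearMap.proj (R := ℝ)
      (φ := fun _ : Fin n => Fin n → ℝ) i).comp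
      (ContinuousLinearMap.snd ℝ (Fin n → ℝ) (Fin n → Fin n → ℝ)))) hk).symm

section Moments
variable {ν : Measure (Eu n)} [IsProbabilityMeasure ν]

theorem covM_expand (hR : ∀ᵐ x ∂ν, ‖x‖ ≤ R) (i j : Fin n) :
    covM ν i j = ∫ x, x i * x j ∂ν - bar ν i * bar ν j := by
  have h1 : ∀ i : Fin n, Integrable (fun x : Eu n => x i) ν := fun i =>
    integrable_of_cont (by fun_prop) hR
  have h2 : Integrable (fun x : Eu n => x i * x j) ν := integrable_of_cont (by fun_prop) hR
  have e : ∀ x : Eu n, ctr ν x i * ctr ν x j = x i * x j - bar ν j * x i - bar ν i * x j +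
      bar ν i * bar ν j := fun x => by unfold ctr; ring
  simp only [covM, of_apply, e]
  rw [integral_add (int_sub (int_sub h2 ((h1 i).const_mul _)) ((h1 j).const_mul _)) (integrable_const _),
    integral_sub (int_sub h2 ((h1 i).const_mul _)) ((h1 j).const_mul _),
    integral_sub h2 ((h1 i).const_mul _), integral_const_mul, integral_const_mul]
  simp only [integral_const, probReal_univ, one_smul]
  simp only [bar]
  ring

theorem thirdM_expand (hR : ∀ᵐ x ∂ν, ‖x‖ ≤ R) (l i j : Fin n) :
    thirdM ν l i j = ∫ x, x l * (x i * x j) ∂ν - bar ν l * ∫ x, x i * x j ∂ν -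
      bar ν i * (∫ x, x l * x j ∂ν - bar ν l * bar ν j) -
      (∫ x, x l * x i ∂ν - bar ν l * bar ν i) * bar ν j := by
  have h1 : ∀ i : Fin n, Integrable (fun x : Eu n => x i) ν := fun i =>
    integrable_of_cont (by fun_prop) hR
  have h2 : ∀ i j : Fin n, Integrable (fun x : Eu n => x i * x j) ν := fun i j =>
    integrable_of_cont (by fun_prop) hR
  have h3 : Integrable (fun x : Eu n => x l * (x i * x j)) ν :=
    integrable_of_cont (by fun_prop) hR
  have e : ∀ x : Eu n, ctr ν x l * (ctr ν x i * ctr ν x j) = x l * (x i * x j)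
      - bar ν l * (x i * x j) - bar ν i * (ctr ν x l * ctr ν x j) - bar ν j * (ctr ν x l * ctr ν x i)
      + (- bar ν i * bar ν j) * x l + bar ν l * bar ν i * bar ν j := fun x => by unfold ctr; ring
  have hc : ∀ i j : Fin n, Integrable (fun x : Eu n => ctr ν x i * ctr ν x j) ν := fun i j =>
    integrable_of_cont (by have := continuous_ctr_apply (ν := ν); fun_prop) hR
  have hce : ∀ i j, ∫ x, ctr ν x i * ctr ν x j ∂ν = ∫ x, x i * x j ∂ν - bar ν i * bar ν j :=
    fun i j => by rw [← covM_expand hR]; rfl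
  simp only [thirdM, of_apply, e]
  have i1 := int_sub h3 ((h2 i j).const_mul (bar ν l))
  have i2 := int_sub i1 ((hc l j).const_mul (bar ν i))
  have i3 := int_sub i2 ((hc l i).const_mul (bar ν j))
  have i4 := int_add i3 ((h1 l).const_mul (- bar ν i * bar ν j))
  rw [integral_add i4 (integrable_const _), integral_add i3 ((h1 l).const_mul _),
    integral_sub i2 ((hc l i).const_mul _), integral_sub i1 ((hc l j).const_mul _),
    integral_sub h3 ((h2 i j).const_mul _), integral_const_mul, integral_const_mul,
    integral_const_mul, integral_const_mul, hce, hce]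
  simp only [integral_const, probReal_univ, one_smul]
  simp only [bar]
  ring

end Moments

theorem tE_momK (hR : ∀ᵐ x ∂μ, ‖x‖ ≤ R) (p : ℝ × Eu n) :
    (∀ i, (tE μ momK p).1 i = bar (tilt μ p) i) ∧
      ∀ i j, (tE μ momK p).2 i j = ∫ x, x i * x j ∂(tilt μ p) := by
  have := isProbabilityMeasure_tilt hR p
  have h := integral_momSp (integrable_of_cont continuous_momK (tilt_ae hR p))
  rw [tE_eq]
  exact ⟨h.1, h.2⟩

theorem tCov_momK (hR : ∀ᵐ x ∂μ, ‖x‖ ≤ R) (l : Fin n) (p : ℝ × Eu n) :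
    (∀ i, (tCov μ momK l p).1 i = ∫ x, x l * x i ∂(tilt μ p) -
      bar (tilt μ p) l * bar (tilt μ p) i) ∧
    ∀ i j, (tCov μ momK l p).2 i j = ∫ x, x l * (x i * x j) ∂(tilt μ p) -
      bar (tilt μ p) l * ∫ x, x i * x j ∂(tilt μ p) := by
  have := isProbabilityMeasure_tilt hR p
  have hc : Continuous fun x : Eu n => x l • momK x := by
    have := continuous_momK (n := n)
    fun_prop
  have h := integral_momSp (integrable_of_cont hc (tilt_ae hR p))
  have h' := tE_momK hR p
  have hb : tE μ (fun x : Eu n => x l) p = bar (tilt μ p) l := tE_eq _ p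
  unfold tCov
  rw [tE_eq (fun x : Eu n => x l • momK x), hb]
  constructor
  · intro i
    rw [Prod.fst_sub, Pi.sub_apply, h.1, Prod.smul_fst, Pi.smul_apply, h'.1]
    rfl
  · intro i j
    rw [Prod.snd_sub, Pi.sub_apply, Pi.sub_apply, h.2, Prod.smul_snd, Pi.smul_apply, Pi.smul_apply,
      h'.2]
    rfl

theorem devM_tE (hR : ∀ᵐ x ∂μ, ‖x‖ ≤ R) (S : Matrix (Fin n) (Fin n) ℝ) (p : ℝ × Eu n) :
    devM S (tE μ momK p) = covM (tilt μ p) - S := by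
  have := isProbabilityMeasure_tilt hR p
  obtain ⟨h1, h2⟩ := tE_momK hR p
  ext i j
  simp only [devM, of_apply, h1, h2, Matrix.sub_apply, covM_expand (tilt_ae hR p)]
  have : ∫ x : Eu n, x j * x i ∂(tilt μ p) = ∫ x : Eu n, x i * x j ∂(tilt μ p) := by
    simp only [mul_comm]
  rw [this]; ring

theorem devM'_tE (hR : ∀ᵐ x ∂μ, ‖x‖ ≤ R) (l : Fin n) (p : ℝ × Eu n) :
    devM' (tE μ momK p) (tCov μ momK l p) = thirdM (tilt μ p) l := by
  have := isProbabilityMeasure_tilt hR p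
  obtain ⟨h1, h2⟩ := tE_momK hR p
  obtain ⟨h3, h4⟩ := tCov_momK hR l p
  ext i j
  simp only [devM', of_apply, h1, h3, h4, thirdM_expand (tilt_ae hR p)]
  have : ∀ j i : Fin n, ∫ x : Eu n, x j * x i ∂(tilt μ p) = ∫ x : Eu n, x i * x j ∂(tilt μ p) :=
    fun j i => by simp only [mul_comm]
  have e : ∫ x : Eu n, x l * (x j * x i) ∂(tilt μ p) = ∫ x : Eu n, x l * (x i * x j) ∂(tilt μ p) := by
    congr 1; ext x; ring
  rw [this j i, e]
  ring

theorem tCov_fst (hR : ∀ᵐ x ∂μ, ‖x‖ ≤ R) (l i : Fin n) (p : ℝ × Eu n) :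
    (tCov μ momK l p).1 i = covM (tilt μ p) l i := by
  have := isProbabilityMeasure_tilt hR p
  rw [(tCov_momK hR l p).1, covM_expand (tilt_ae hR p)]

/-- The cube of the bound `κ = 2 + ρ` for the covariance is absorbed by the denominator of the
potential, as soon as `q ≥ 3`. -/
theorem kappa_cube_le {ρ : ℝ} (hρ : 0 ≤ ρ) {q : ℕ} (hq : 3 ≤ q) :
    (2 + ρ) ^ 3 * (1 / 4 : ℝ) ^ q ≤ 12 * (ρ ^ q + (1 / 4 : ℝ) ^ q) := by
  have e : ρ ^ q = (4 * ρ) ^ q * (1 / 4 : ℝ) ^ q := by rw [← mul_pow]; congr 1; ring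
  rw [e]
  have h : (2 + ρ) ^ 3 ≤ 12 * ((4 * ρ) ^ q + 1) := by
    set u := 4 * ρ with hu
    have hu0 : 0 ≤ u := by positivity
    have e2 : ρ = u / 4 := by rw [hu]; ring
    rw [e2]
    rcases le_total u 1 with h1 | h1
    · have : (2 + u / 4) ^ 3 ≤ (9 / 4 : ℝ) ^ 3 := by gcongr; linarith
      have h2 : 0 ≤ u ^ q := by positivity
      norm_num at this
      linarith
    · have h3 : u ^ 3 ≤ u ^ q := pow_le_pow_right₀ h1 hq
      have : (2 + u / 4) ^ 3 ≤ (9 / 4 * u) ^ 3 := by gcongr; linarith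
      rw [mul_pow] at this
      norm_num at this
      have h2 : 0 ≤ u ^ 3 := by positivity
      linarith
  have h0 : (0 : ℝ) ≤ (1 / 4 : ℝ) ^ q := by positivity
  nlinarith [mul_le_mul_of_nonneg_right h h0]

/-- The covariance of a tilt is controlled by the potential. -/
theorem covM_le_of_pot (hR : ∀ᵐ x ∂μ, ‖x‖ ≤ R) {S : Matrix (Fin n) (Fin n) ℝ} (hS : Sᵀ = S)
    {q : ℕ} (hq : Even q) (hq0 : q ≠ 0) {ρ : ℝ} (hρ : 0 ≤ ρ) (p : ℝ × Eu n)
    (h : potG S q (tE μ momK p) ≤ ρ ^ q) (v : Fin n → ℝ) :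
    |v ⬝ᵥ covM (tilt μ p) *ᵥ v - v ⬝ᵥ S *ᵥ v| ≤ ρ * (v ⬝ᵥ v) := by
  have h1 := quad_le_of_pow_trace_le (devM_symm hS (tE μ momK p)) hq hq0 hρ h v
  rwa [devM_tE hR, Matrix.sub_mulVec, dotProduct_sub] at h1

/-- The drift of `Γ = tr (Cov - S)^q`, with `q = 2 m + 2`. The quadratic part in the derivative of the
covariance is a trace of third moments, estimated by the Poincaré inequality; the remaining part is
a trace against `Cov²`. -/
theorem potG2_sum_le (hR : ∀ᵐ x ∂μ, ‖x‖ ≤ R) {S : Matrix (Fin n) (Fin n) ℝ} (hS : Sᵀ = S)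
    {m : ℕ} {ψ κ β : ℝ} (hψ : 1 ≤ ψ) (hκ1 : 1 ≤ κ) (hβ0 : 0 < β) (hβ1 : β ≤ 1) (p : ℝ × Eu n)
    (hP : QuadPoincare (tilt μ p) ψ)
    (hκ : ∀ v : Fin n → ℝ, v ⬝ᵥ covM (tilt μ p) *ᵥ v ≤ κ * (v ⬝ᵥ v)) :
    ∑ l, potG2 S (2 * m) (tE μ momK p) (tCov μ momK l p) ≤
      8 * ((2 * m + 2 : ℕ) : ℝ) ^ 2 * ψ ^ 2 * κ ^ 3 * (β ^ 2)⁻¹ *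
        (potG S (2 * m + 2) (tE μ momK p) + n * β ^ (2 * m + 2)) := by
  have := isProbabilityMeasure_tilt hR p
  have hR' := tilt_ae hR p
  set ν := tilt μ p with hν
  set Y := tE μ momK p with hY
  set D := devM S Y with hD
  have hDs : Dᵀ = D := devM_symm hS Y
  have hqe : Even (2 * m + 2) := ⟨m + 1, by ring⟩
  set G := potG S (2 * m + 2) Y + n * β ^ (2 * m + 2) with hG
  have hG0 : 0 ≤ G := by
    have := potG_nonneg hS hqe Y
    positivity
  have hκ0 : 0 ≤ κ := by linarith
  -- the trace of `D ^ r`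
  have t1 : (D ^ (2 * m)).trace ≤ (β ^ 2)⁻¹ * G := by
    have h1 := abs_trace_pow_mul_le (M := 1) (c := 1) hDs hβ0 (fun v => by
      rw [one_mulVec, one_mul, abs_of_nonneg]
      exact Finset.sum_nonneg fun i _ => mul_self_nonneg _) hqe (i := 2) (j := 2 * m) rfl
    rw [Matrix.mul_one, one_mul] at h1
    exact (le_abs_self _).trans h1
  have t2 : |(D ^ (2 * m + 1) * (covM ν * covM ν)).trace| ≤ κ ^ 2 * (β ^ 1)⁻¹ * G := by
    refine abs_trace_pow_mul_le hDs hβ0 (fun v => ?_) hqe rfl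
    have h1 : v ⬝ᵥ (covM ν * covM ν) *ᵥ v = (covM ν *ᵥ v) ⬝ᵥ (covM ν *ᵥ v) := by
      rw [← mulVec_mulVec, dotProduct_mulVec, ← mulVec_transpose, covM_symm]
    rw [h1, abs_of_nonneg (Finset.sum_nonneg fun i _ => mul_self_nonneg _)]
    exact covM_sq_le hR' hκ0 hκ v
  have t3 := thirdM_trace_le hR' hP hκ0 hκ hDs m
  have e1 : ∑ l, (D ^ (2 * m + 1) * Matrix.vecMulVec (tCov μ momK l p).1
      (tCov μ momK l p).1).trace = (D ^ (2 * m + 1) * (covM ν * covM ν)).trace := by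
    rw [← trace_sum, ← Finset.mul_sum]
    congr 2
    ext i j
    rw [Matrix.sum_apply, Matrix.mul_apply]
    refine Finset.sum_congr rfl fun l _ => ?_
    rw [vecMulVec_apply, tCov_fst hR, tCov_fst hR]
    congr 1
    exact congrFun (congrFun (covM_symm (ν := ν)) i) l
  have t4 : ∑ l, ∑ k ∈ Finset.range (2 * m + 1), (D ^ k * devM' Y (tCov μ momK l p) *
      D ^ (2 * m - k) * devM' Y (tCov μ momK l p)).trace ≤
      (2 * m + 1 : ℕ) * (2 * (4 * ψ ^ 2 * κ ^ 3 * ((β ^ 2)⁻¹ * G))) := by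
    rw [Finset.sum_comm]
    have : ∀ k ∈ Finset.range (2 * m + 1), ∑ l, (D ^ k * devM' Y (tCov μ momK l p) *
      D ^ (2 * m - k) * devM' Y (tCov μ momK l p)).trace ≤
        2 * (4 * ψ ^ 2 * κ ^ 3 * ((β ^ 2)⁻¹ * G)) := by
      intro k hk
      rw [Finset.mem_range] at hk
      calc _ ≤ ∑ l, 2 * (D ^ (2 * m) * (thirdM ν l * thirdM ν l)).trace := by
            refine Finset.sum_le_sum fun l _ => ?_
            rw [devM'_tE hR]
            exact trace_pow_mul_pow_le hDs (thirdM_symm l) (by omega)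
        _ ≤ 2 * (4 * ψ ^ 2 * κ ^ 3 * (D ^ (2 * m)).trace) := by
            rw [← Finset.mul_sum]; linarith
        _ ≤ _ := by gcongr
    refine (Finset.sum_le_sum this).trans ?_
    rw [Finset.sum_const, Finset.card_range, nsmul_eq_mul]
  unfold potG2
  rw [← Finset.mul_sum, Finset.sum_sub_distrib, ← Finset.mul_sum, e1]
  have t5 := (abs_le.1 t2).1
  have hX : κ ^ 2 * (β ^ 1)⁻¹ * G ≤ ψ ^ 2 * κ ^ 3 * ((β ^ 2)⁻¹ * G) := by
    have a1 : κ ^ 2 ≤ κ ^ 3 := pow_le_pow_right₀ hκ1 (by norm_num)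
    have a2 : (β ^ 1)⁻¹ ≤ (β ^ 2)⁻¹ := by
      gcongr 1
      exact pow_le_pow_of_le_one hβ0.le hβ1 (by norm_num)
    have a3 : 1 ≤ ψ ^ 2 := one_le_pow₀ hψ
    calc κ ^ 2 * (β ^ 1)⁻¹ * G ≤ κ ^ 3 * (β ^ 2)⁻¹ * G := by gcongr
      _ = 1 * (κ ^ 3 * (β ^ 2)⁻¹ * G) := by ring
      _ ≤ ψ ^ 2 * (κ ^ 3 * (β ^ 2)⁻¹ * G) := by gcongr
      _ = _ := by ring
  set X := ψ ^ 2 * κ ^ 3 * ((β ^ 2)⁻¹ * G) with hXd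
  have hX0 : 0 ≤ X := by positivity
  push_cast at t4 ⊢
  have hb : ∑ l, ∑ k ∈ Finset.range (2 * m + 1), (D ^ k * devM' Y (tCov μ momK l p) *
      D ^ (2 * m - k) * devM' Y (tCov μ momK l p)).trace -
      2 * (D ^ (2 * m + 1) * (covM ν * covM ν)).trace ≤ 8 * (2 * m + 2 : ℝ) * X := by
    have : (2 * (m : ℝ) + 1) * (2 * (4 * ψ ^ 2 * κ ^ 3 * ((β ^ 2)⁻¹ * G))) = (2 * m + 1) * 8 * X := by
      rw [hXd]; ring
    rw [this] at t4
    nlinarith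
  calc _ ≤ (2 * (m : ℝ) + 1 + 1) * (8 * (2 * m + 2 : ℝ) * X) := by gcongr
    _ = _ := by rw [hXd]; ring

/-- The drift of the bounded potential is at most a multiple of the potential itself. The cubic
dependence on the covariance is harmless because the first derivative of `x ↦ (x + η) / (x + M)`
decays quadratically. -/
theorem drift_le (hR : ∀ᵐ x ∂μ, ‖x‖ ≤ R) {S : Matrix (Fin n) (Fin n) ℝ} (hS : Sᵀ = S)
    (hS2 : ∀ v : Fin n → ℝ, v ⬝ᵥ S *ᵥ v ≤ 2 * (v ⬝ᵥ v))
    {m : ℕ} (hm : 1 ≤ m) {ψ β : ℝ} (hψ : 1 ≤ ψ) (hβ0 : 0 < β) (hβ1 : β ≤ 1)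
    (hη : n * β ^ (2 * m + 2) < (1 / 4 : ℝ) ^ (2 * m + 2)) (p : ℝ × Eu n)
    (hP : QuadPoincare (tilt μ p) ψ) :
    1 / 2 * ∑ l, fderiv ℝ (fderiv ℝ (potV S (2 * m + 2) (n * β ^ (2 * m + 2))
      ((1 / 4) ^ (2 * m + 2)))) (tE μ momK p) (tCov μ momK l p) (tCov μ momK l p) ≤
      48 * ((2 * m + 2 : ℕ) : ℝ) ^ 2 * ψ ^ 2 * (β ^ 2)⁻¹ *
        potV S (2 * m + 2) (n * β ^ (2 * m + 2)) ((1 / 4) ^ (2 * m + 2)) (tE μ momK p) := by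
  have hqe : Even (2 * m + 2) := ⟨m + 1, by ring⟩
  set q := 2 * m + 2 with hq
  set η := n * β ^ q with hηd
  have hη0 : 0 ≤ η := by positivity
  set M := (1 / 4 : ℝ) ^ q with hM
  have hM0 : 0 < M := by positivity
  set Y := tE μ momK p with hY
  set Γ := potG S q Y with hΓ
  have hΓ0 : 0 ≤ Γ := potG_nonneg hS hqe Y
  set ρ := Γ ^ ((q : ℝ)⁻¹) with hρ
  have hρ0 : 0 ≤ ρ := by positivity
  have hρq : ρ ^ q = Γ := Real.rpow_inv_natCast_pow hΓ0 (by omega)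
  have hκ : ∀ v : Fin n → ℝ, v ⬝ᵥ covM (tilt μ p) *ᵥ v ≤ (2 + ρ) * (v ⬝ᵥ v) := by
    intro v
    have h1 := (abs_le.1 (covM_le_of_pot hR hS hqe (by omega) hρ0 p hρq.ge v)).2
    have h2 := hS2 v
    linarith
  have h1 := potG2_sum_le hR hS (m := m) hψ (by linarith : 1 ≤ 2 + ρ) hβ0 hβ1 p hP hκ
  have h2 : ∀ l, fderiv ℝ (fderiv ℝ (potV S q η M)) Y (tCov μ momK l p) (tCov μ momK l p) ≤
      (M - η) / (Γ + M) ^ 2 * potG2 S (2 * m) Y (tCov μ momK l p) := fun l =>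
    potV_snd_le hS (r := 2 * m) hqe hη0 hη Y _
  have hV : potV S q η M Y = (Γ + η) / (Γ + M) := rfl
  rw [hV]
  have h3 := kappa_cube_le hρ0 (q := q) (by omega)
  rw [hρq] at h3
  have hc0 : 0 ≤ (M - η) / (Γ + M) ^ 2 := div_nonneg (by linarith) (by positivity)
  have hc1 : (M - η) / (Γ + M) ^ 2 ≤ M / (Γ + M) ^ 2 := by gcongr; linarith
  calc _ ≤ 1 / 2 * ∑ l, (M - η) / (Γ + M) ^ 2 * potG2 S (2 * m) Y (tCov μ momK l p) := by
        gcongr with l; exact h2 l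
    _ = 1 / 2 * ((M - η) / (Γ + M) ^ 2 * ∑ l, potG2 S (2 * m) Y (tCov μ momK l p)) := by
        rw [Finset.mul_sum Finset.univ _ ((M - η) / (Γ + M) ^ 2)]
    _ ≤ 1 / 2 * ((M - η) / (Γ + M) ^ 2 * (8 * ((q : ℕ) : ℝ) ^ 2 * ψ ^ 2 * (2 + ρ) ^ 3 *
          (β ^ 2)⁻¹ * (Γ + η))) := by gcongr
    _ ≤ 1 / 2 * (M / (Γ + M) ^ 2 * (8 * ((q : ℕ) : ℝ) ^ 2 * ψ ^ 2 * (2 + ρ) ^ 3 *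
          (β ^ 2)⁻¹ * (Γ + η))) := by gcongr
    _ = 4 * (q : ℝ) ^ 2 * ψ ^ 2 * (β ^ 2)⁻¹ * (((2 + ρ) ^ 3 * M) * ((Γ + η) / (Γ + M) ^ 2)) := by
        ring
    _ ≤ 4 * (q : ℝ) ^ 2 * ψ ^ 2 * (β ^ 2)⁻¹ * ((12 * (Γ + M)) * ((Γ + η) / (Γ + M) ^ 2)) := by
        gcongr
    _ = _ := by field_simp; ring

end Drift

/-! ### Growth of the expected potential -/

section Growth
open Matrix
set_option linter.unusedSectionVars false
variable {n : ℕ} {W : Type} [NormedAddCommGroup W] [NormedSpace ℝ W] [FiniteDimensional ℝ W]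
  {μ : Measure (Eu n)} [IsProbabilityMeasure μ] {R : ℝ}

theorem tCov_continuous {k : Eu n → W} (hk : Continuous k) (hR : ∀ᵐ x ∂μ, ‖x‖ ≤ R) (i : Fin n) :
    Continuous (tCov μ k i) := by
  have h0 : Continuous fun x : Eu n => x i := by fun_prop
  have h1 := tE_continuous (μ := μ) (h0.smul hk) hR
  have h2 := tE_continuous (μ := μ) h0 hR
  have h3 := tE_continuous (μ := μ) hk hR
  exact h1.sub (h2.smul h3)

theorem tCov_bound {k : Eu n → W} (hk : Continuous k) (hR : ∀ᵐ x ∂μ, ‖x‖ ≤ R) (i : Fin n) :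
    ∃ C, 0 ≤ C ∧ ∀ p, ‖tCov μ k i p‖ ≤ C := by
  have h0 : Continuous fun x : Eu n => x i := by fun_prop
  obtain ⟨C1, h1, b1⟩ := exists_bound_ball (h0.smul hk) hR
  obtain ⟨C2, h2, b2⟩ := exists_bound_ball h0 hR
  obtain ⟨C3, h3, b3⟩ := exists_bound_ball hk hR
  refine ⟨C1 + C2 * C3, by positivity, fun p => ?_⟩
  refine (norm_sub_le _ _).trans (add_le_add (norm_tE_le hR b1 p) ?_)
  rw [norm_smul]
  exact mul_le_mul (norm_tE_le hR b2 p) (norm_tE_le hR b3 p) (norm_nonneg _) h2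

theorem drift_continuous {k : Eu n → W} (hk : Continuous k) (hR : ∀ᵐ x ∂μ, ‖x‖ ≤ R) {Φ : W → ℝ}
    (hΦ : ContDiff ℝ 2 Φ) :
    Continuous fun p => 1 / 2 * ∑ i, fderiv ℝ (fderiv ℝ Φ) (tE μ k p) (tCov μ k i p)
        (tCov μ k i p) := by
  have h1 : Continuous (fderiv ℝ (fderiv ℝ Φ)) :=
    (hΦ.fderiv_right (m := 1) (by norm_num)).continuous_fderiv (by norm_num)
  have h2 := h1.comp (tE_continuous (μ := μ) hk hR)
  refine continuous_const.mul (continuous_finsetSum _ fun i _ => ?_)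
  have h3 := tCov_continuous (μ := μ) hk hR i
  exact (h2.clm_apply h3).clm_apply h3

theorem drift_bound {k : Eu n → W} (hk : Continuous k) (hR : ∀ᵐ x ∂μ, ‖x‖ ≤ R) {Φ : W → ℝ}
    (hΦ : ContDiff ℝ 2 Φ) :
    ∃ C, ∀ p, |1 / 2 * ∑ i, fderiv ℝ (fderiv ℝ Φ) (tE μ k p) (tCov μ k i p)
        (tCov μ k i p)| ≤ C := by
  have h1 : Continuous (fderiv ℝ (fderiv ℝ Φ)) :=
    (hΦ.fderiv_right (m := 1) (by norm_num)).continuous_fderiv (by norm_num)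
  obtain ⟨C, hC, b⟩ := exists_bound_comp_tE (V := W →L[ℝ] W →L[ℝ] ℝ) h1 hk hR
  choose D hD d using fun i => tCov_bound (μ := μ) hk hR i
  refine ⟨1 / 2 * ∑ i, C * D i * D i, fun p => ?_⟩
  rw [abs_mul, abs_of_pos (by norm_num : (0 : ℝ) < 1 / 2)]
  gcongr
  refine (Finset.abs_sum_le_sum_abs _ _).trans (Finset.sum_le_sum fun i _ => ?_)
  have h2 := ContinuousLinearMap.le_opNorm₂ (fderiv ℝ (fderiv ℝ Φ) (tE μ k p)) (tCov μ k i p)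
    (tCov μ k i p)
  rw [Real.norm_eq_abs] at h2
  refine h2.trans ?_
  have := hC; have := hD i; have := d i p; have := b p
  gcongr

theorem Em_zero (f : ℝ × Eu n → ℝ) : Em μ f 0 = f 0 := by
  have : tZ μ (0 : ℝ × Eu n) = 1 := by simp [tZ, tl]
  simp only [Em, Real.sqrt_zero, zero_smul]
  have e : ((0 : ℝ), (0 : Eu n)) = 0 := rfl
  simp [e, this]

/-- Grönwall's inequality for expectations. -/
theorem Em_gronwall {k : Eu n → W} (hk : Continuous k) (hR : ∀ᵐ x ∂μ, ‖x‖ ≤ R) (hR0 : 0 ≤ R)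
    {Φ : W → ℝ} (hΦ : ContDiff ℝ 2 Φ) {lam : ℝ}
    (h : ∀ p : ℝ × Eu n, 0 ≤ p.1 → 1 / 2 * ∑ i, fderiv ℝ (fderiv ℝ Φ) (tE μ k p) (tCov μ k i p)
        (tCov μ k i p) ≤ lam * Φ (tE μ k p)) {t : ℝ} (ht : 0 ≤ t) :
    Em μ (fun p => Φ (tE μ k p)) t ≤ Real.exp (lam * t) * Φ (tE μ k 0) := by
  obtain ⟨C, hC, b⟩ := exists_bound_comp_tE hΦ.continuous hk hR
  obtain ⟨D, d⟩ := drift_bound (μ := μ) hk hR hΦ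
  have hc : Continuous fun p => Φ (tE μ k p) := hΦ.continuous.comp (tE_continuous hk hR)
  set φ := Em μ (fun p => Φ (tE μ k p)) with hφ
  have hd : ∀ t, 0 < t → HasDerivAt (fun t => Real.exp (-lam * t) * φ t)
      (Real.exp (-lam * t) * -lam * φ t + Real.exp (-lam * t) * (Em μ (fun p => 1 / 2 * ∑ i,
        fderiv ℝ (fderiv ℝ Φ) (tE μ k p) (tCov μ k i p) (tCov μ k i p)) t)) t := by
    intro t ht
    have h1 : HasDerivAt (fun t => Real.exp (-lam * t)) (Real.exp (-lam * t) * -lam) t := by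
      have := ((hasDerivAt_id t).const_mul (-lam)).exp
      simpa using this
    exact h1.mul (ito hk hR hR0 hΦ ht)
  have hanti : AntitoneOn (fun t => Real.exp (-lam * t) * φ t) (Set.Ici 0) := by
    refine antitoneOn_of_deriv_nonpos (convex_Ici 0) ?_ ?_ ?_
    · exact (by fun_prop : Continuous fun t => Real.exp (-lam * t)).continuousOn.mul
        (Em_continuousOn hR hR0 hc b)
    · intro t ht
      rw [interior_Ici] at ht
      exact (hd t ht).differentiableAt.differentiableWithinAt
    · intro t ht
      rw [interior_Ici] at ht
      rw [(hd t ht).deriv]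
      have h2 := Em_mono hR (drift_continuous hk hR hΦ) (continuous_const.fun_mul hc) d
        (D := |lam| * C) (fun p => by rw [abs_mul]; gcongr; exact b p) (le_of_lt ht)
        (fun θ => h (t, θ) (le_of_lt ht))
      rw [Em_const_mul lam, ← hφ] at h2
      have h3 := mul_le_mul_of_nonneg_left h2 (Real.exp_pos (-lam * t)).le
      linarith
  have h4 := hanti (Set.mem_Ici.2 le_rfl) (Set.mem_Ici.2 ht) ht
  simp only [mul_zero, Real.exp_zero, one_mul] at h4
  have h5 : φ 0 = Φ (tE μ k 0) := Em_zero _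
  rw [h5] at h4
  have h6 := mul_le_mul_of_nonneg_left h4 (Real.exp_pos (lam * t)).le
  rwa [← mul_assoc, ← Real.exp_add, show lam * t + -lam * t = 0 by ring, Real.exp_zero,
    one_mul] at h6

theorem potV_zero (hR : ∀ᵐ x ∂μ, ‖x‖ ≤ R) {q : ℕ} (hq : q ≠ 0) (η M : ℝ) :
    potV (covM μ) q η M (tE μ momK 0) = η / M := by
  have h1 : devM (covM μ) (tE μ momK 0) = 0 := by
    rw [devM_tE hR, tilt_zero _ rfl, sub_self]
  simp [potV, potG, h1, hq]

/-- Up to a time of order `1 / (q ψ²)`, the expected potential stays tiny. -/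
theorem Em_potV_le (hR : ∀ᵐ x ∂μ, ‖x‖ ≤ R) (hR0 : 0 ≤ R)
    (hS2 : ∀ v : Fin n → ℝ, v ⬝ᵥ covM μ *ᵥ v ≤ 2 * (v ⬝ᵥ v))
    {m : ℕ} (hm : 1 ≤ m) {ψ β : ℝ} (hψ : 1 ≤ ψ) (hβ0 : 0 < β) (hβ1 : β ≤ 1)
    (hη : n * β ^ (2 * m + 2) < (1 / 4 : ℝ) ^ (2 * m + 2))
    (hP : ∀ p : ℝ × Eu n, 0 ≤ p.1 → QuadPoincare (tilt μ p) ψ) {t : ℝ} (ht : 0 ≤ t)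
    (htT : 48 * ((2 * m + 2 : ℕ) : ℝ) * ψ ^ 2 * (β ^ 2)⁻¹ * t ≤ 1) :
    Em μ (fun p => potV (covM μ) (2 * m + 2) (n * β ^ (2 * m + 2)) ((1 / 4) ^ (2 * m + 2))
      (tE μ momK p)) t ≤ n * (4 * β * Real.exp 1) ^ (2 * m + 2) := by
  have hqe : Even (2 * m + 2) := ⟨m + 1, by ring⟩
  have hS : (covM μ)ᵀ = covM μ := covM_symm
  refine (Em_gronwall continuous_momK hR hR0 (potV_contDiff hS hqe (by positivity))
    (fun p hp => drift_le hR hS hS2 hm hψ hβ0 hβ1 hη p (hP p hp)) ht).trans ?_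
  rw [potV_zero hR (by omega)]
  set q := 2 * m + 2
  have h1 : 48 * (q : ℝ) ^ 2 * ψ ^ 2 * (β ^ 2)⁻¹ * t ≤ q := by
    have : (0 : ℝ) ≤ q := by positivity
    nlinarith [mul_le_mul_of_nonneg_left htT this]
  have h2 : Real.exp (48 * (q : ℝ) ^ 2 * ψ ^ 2 * (β ^ 2)⁻¹ * t) ≤ Real.exp 1 ^ q := by
    rw [← Real.exp_nat_mul, mul_one]
    exact Real.exp_le_exp.2 h1
  calc _ ≤ Real.exp 1 ^ q * (n * β ^ q / (1 / 4) ^ q) := by gcongr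
    _ = _ := by
      rw [one_div, inv_pow, div_inv_eq_mul, mul_pow, mul_pow]; ring

end Growth

/-! ### Log-concave densities: boundedness and tails -/

section LogConcave
variable {n : ℕ}

theorem lintegral_affine {c : ℝ} (hc : 0 < c) (b : Eu n) {F : Eu n → ℝ≥0∞} (hF : Measurable F) :
    ∫⁻ x, F (c • x + b) = ENNReal.ofReal (c ^ n)⁻¹ * ∫⁻ x, F x := by
  have h1 : ∫⁻ x : Eu n, F (c • x + b) = ∫⁻ x, F (x + b) ∂(Measure.map (c • ·) volume) := by
    rw [lintegral_map (by fun_prop) (by fun_prop)]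
  rw [h1, Measure.map_addHaar_smul _ hc.ne', lintegral_smul_measure, lintegral_add_right_eq_self,
    finrank_euclideanSpace_fin, abs_of_pos (by positivity), smul_eq_mul]

/-- Change of variables for the homothety `x ↦ c x + b`. -/
theorem lintegral_affine' {c : ℝ} (hc : 0 < c) (b : Eu n) {F : Eu n → ℝ≥0∞} (hF : Measurable F) :
    ENNReal.ofReal (c ^ n) * ∫⁻ x, F (c • x + b) = ∫⁻ x, F x := by
  rw [lintegral_affine hc b hF, ← mul_assoc, ← ENNReal.ofReal_mul (by positivity),
    mul_inv_cancel₀ (by positivity), ENNReal.ofReal_one, one_mul]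

variable {p : Eu n → ℝ}

/-- Some level set `{c ≤ p}` has positive measure. If `p` were large at `x`, then `p` would be large on
the contraction of this level set towards `x`, and its integral would exceed one. -/
theorem logconcave_bdd (hm : Measurable p) (hp : IsLogConcaveDensity p)
    (h1 : ∫⁻ x, ENNReal.ofReal (p x) = 1) : ∃ M : ℝ, ∀ x, p x ≤ M := by
  have hex : ∃ c : ℝ, 0 < c ∧ volume {x | c ≤ p x} ≠ 0 := by
    by_contra hcon
    push Not at hcon
    have h0 : volume {x | 0 < p x} = 0 := by
      have : {x | 0 < p x} = ⋃ k : ℕ, {x | 1 / ((k : ℝ) + 1) ≤ p x} := by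
        ext x
        simp only [Set.mem_ofPred_eq, Set.mem_iUnion]
        constructor
        · intro h
          obtain ⟨k, hk⟩ := exists_nat_one_div_lt h
          exact ⟨k, hk.le⟩
        · rintro ⟨k, hk⟩
          exact lt_of_lt_of_le (by positivity) hk
      rw [this, measure_iUnion_null_iff]
      exact fun k => hcon _ (by positivity)
    have h2 : ∫⁻ x, ENNReal.ofReal (p x) = 0 := by
      rw [lintegral_eq_zero_iff (by fun_prop)]
      refine measure_mono_null (fun x hx => ?_) h0
      simp only [Set.mem_ofPred_eq]
      by_contra h
      exact hx (by simpa using not_lt.1 h)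
    rw [h2] at h1
    exact zero_ne_one h1
  obtain ⟨c, hc, hS⟩ := hex
  set S := {x | c ≤ p x} with hSd
  have hSm : MeasurableSet S := measurableSet_le measurable_const hm
  have key : ∀ x, ENNReal.ofReal ((1 / 2 : ℝ) ^ n) * (ENNReal.ofReal (p x ^ (1 / 2 : ℝ) *
      c ^ (1 / 2 : ℝ)) * volume S) ≤ 1 := by
    intro x
    rw [← h1, ← lintegral_affine' (c := 1 / 2) (by norm_num) ((1 / 2 : ℝ) • x) (by fun_prop),
      ← setLIntegral_const]
    refine mul_le_mul' le_rfl ?_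
    refine (setLIntegral_mono' hSm fun y hy => ENNReal.ofReal_le_ofReal ?_).trans
      (setLIntegral_le_lintegral S _)
    have h2 := hp.2 y x (1 / 2) (by norm_num) (by norm_num)
    norm_num at h2 ⊢
    refine le_trans ?_ h2
    rw [mul_comm]
    have := hp.1 x
    gcongr
    exact hy
  have hStop : volume S ≠ ∞ := by
    intro htop
    -- a point of `S` contradicts the bound if `S` has infinite volume
    obtain ⟨x, hx⟩ : S.Nonempty := by
      by_contra h
      rw [Set.not_nonempty_iff_eq_empty] at h
      exact hS (by rw [h]; simp)
    have h2 := key x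
    have hpx : 0 < p x := lt_of_lt_of_le hc hx
    rw [htop, ENNReal.mul_top, ENNReal.mul_top] at h2
    · exact absurd h2 (by simp)
    · simp
    · simp only [ne_eq, ENNReal.ofReal_eq_zero, not_le]; positivity
  set v := (volume S).toReal with hv
  have hv0 : 0 < v := ENNReal.toReal_pos hS hStop
  refine ⟨(2 ^ n / (c ^ (1 / 2 : ℝ) * v)) ^ 2, fun x => ?_⟩
  have h2 := key x
  have hpx := hp.1 x
  rw [← ENNReal.ofReal_toReal hStop, ← ENNReal.ofReal_mul (by positivity), ← ENNReal.ofReal_mul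
    (by positivity), ENNReal.ofReal_le_one, ← hv] at h2
  have h3 : p x ^ (1 / 2 : ℝ) ≤ 2 ^ n / (c ^ (1 / 2 : ℝ) * v) := by
    rw [le_div_iff₀ (by positivity)]
    have e : (1 / 2 : ℝ) ^ n = (2 ^ n)⁻¹ := by rw [one_div, inv_pow]
    rw [e, inv_mul_le_iff₀ (by positivity)] at h2
    linarith
  calc p x = (p x ^ (1 / 2 : ℝ)) ^ 2 := by
        rw [← Real.sqrt_eq_rpow, Real.sq_sqrt hpx]
    _ ≤ _ := by gcongr

/-- The decay length in the tail estimate for isotropic log-concave densities. -/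
def tailK (n : ℕ) : ℝ := √n * (2 + 2 ^ (n + 2))

theorem tailK_pos (hn : 0 < n) : 0 < tailK n := by
  have : (0 : ℝ) < n := by exact_mod_cast hn
  unfold tailK
  positivity

theorem rpow_split_le {a M s : ℝ} (ha : 0 ≤ a) (haM : a ≤ M) (hM : 0 < M) (hs0 : 0 ≤ s) :
    a ≤ a ^ (1 - s) * M ^ s := by
  rcases ha.eq_or_lt with h | h
  · rw [← h]; positivity
  calc a = a ^ (1 - s) * a ^ s := by rw [← Real.rpow_add h]; simp
    _ ≤ _ := by gcongr

/-- Contract the ball of radius `r` towards `x`: log-concavity bounds the density from below on the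
image, all of whose points are far from the origin when `x` is. -/
theorem tail_aux (hm : Measurable p) (hp : IsLogConcaveDensity p) {M : ℝ} (hM0 : 0 < M)
    (hM : ∀ x, p x ≤ M) {μ : Measure (Eu n)} (hμ : μ = volume.withDensity fun x =>
      ENNReal.ofReal (p x)) {r s : ℝ} (hs0 : 0 < s) (hs1 : s < 1) (x : Eu n) :
    ENNReal.ofReal ((1 - s) ^ n * (p x / M) ^ s) * μ {u | ‖u‖ ≤ r} ≤
      μ {z | s * ‖x‖ - r ≤ ‖z‖} := by
  have hB : MeasurableSet {u : Eu n | ‖u‖ ≤ r} := measurableSet_le (by fun_prop) (by fun_prop)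
  have hS : MeasurableSet {z : Eu n | s * ‖x‖ - r ≤ ‖z‖} :=
    measurableSet_le (by fun_prop) (by fun_prop)
  have h1s : 0 < 1 - s := by linarith
  rw [hμ, withDensity_apply _ hB, withDensity_apply _ hS, ← lintegral_indicator hS,
    ← lintegral_affine' h1s (s • x) ((by fun_prop : Measurable fun x =>
      ENNReal.ofReal (p x)).indicator hS), ENNReal.ofReal_mul (by positivity), mul_assoc]
  gcongr
  rw [← lintegral_indicator hB, ← lintegral_const_mul _ ((by fun_prop : Measurable fun x =>
      ENNReal.ofReal (p x)).indicator hB)]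
  refine lintegral_mono fun u => ?_
  by_cases hu : u ∈ {u : Eu n | ‖u‖ ≤ r}
  · have hz : (1 - s) • u + s • x ∈ {z : Eu n | s * ‖x‖ - r ≤ ‖z‖} := by
      simp only [Set.mem_ofPred_eq] at hu ⊢
      have h2 := norm_sub_norm_le (s • x) (-((1 - s) • u))
      rw [sub_neg_eq_add, norm_neg, norm_smul, norm_smul, Real.norm_of_nonneg hs0.le,
        Real.norm_of_nonneg h1s.le] at h2
      rw [add_comm (s • x)] at h2
      have h3 : (1 - s) * ‖u‖ ≤ ‖u‖ := by nlinarith [norm_nonneg u]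
      linarith
    rw [Set.indicator_of_mem hu, Set.indicator_of_mem hz, ← ENNReal.ofReal_mul (by
      have := hp.1 x; positivity)]
    refine ENNReal.ofReal_le_ofReal ?_
    have h2 := hp.2 x u s hs0.le hs1.le
    rw [add_comm ((1 - s) • u)]
    refine le_trans ?_ h2
    have h3 := rpow_split_le (hp.1 u) (hM u) hM0 hs0.le
    rw [Real.div_rpow (hp.1 x) hM0.le, div_mul_eq_mul_div, div_le_iff₀ (by positivity), mul_assoc]
    have := hp.1 x
    gcongr
  · rw [Set.indicator_of_notMem hu, mul_zero]
    exact zero_le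

/-- Exponential decay of the density relative to its supremum, from `tail_aux` and Chebyshev's
inequality. -/
theorem logconcave_tail (hn : 0 < n) (hm : Measurable p) (hp : IsLogConcaveDensity p) {M : ℝ}
    (hM0 : 0 < M) (hM : ∀ x, p x ≤ M) {μ : Measure (Eu n)} [IsProbabilityMeasure μ]
    (hμ : μ = volume.withDensity fun x => ENNReal.ofReal (p x))
    (hi : Integrable (fun x : Eu n => ‖x‖ ^ 2) μ) (h2 : ∫ x, ‖x‖ ^ 2 ∂μ ≤ n) (x : Eu n) :
    p x / M ≤ Real.exp 2 * Real.exp (-(‖x‖ / tailK n)) := by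
  have hn' : (0 : ℝ) < n := by exact_mod_cast hn
  have hK := tailK_pos hn
  have hq1 : p x / M ≤ 1 := by rw [div_le_one hM0]; exact hM x
  have hq0 : 0 ≤ p x / M := div_nonneg (hp.1 x) hM0.le
  rcases le_total ‖x‖ (2 * tailK n) with hx | hx
  · rw [← Real.exp_add]
    refine hq1.trans (Real.one_le_exp ?_)
    rw [← sub_eq_add_neg, sub_nonneg, div_le_iff₀ hK]; exact hx
  have hx0 : 0 < ‖x‖ := by linarith
  set s := tailK n / ‖x‖ with hs
  have hs0 : 0 < s := by positivity
  have hs2 : s ≤ 1 / 2 := by rw [hs, div_le_iff₀ hx0]; linarith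
  -- Chebyshev's inequality for the norm
  have markov : ∀ ρ : ℝ, 0 < ρ → μ.real {z | ρ ≤ ‖z‖} ≤ n / ρ ^ 2 := by
    intro ρ hρ
    have h3 := mul_meas_ge_le_integral_of_nonneg (.of_forall fun z => by positivity) hi (ρ ^ 2)
    have e : {z : Eu n | ρ ^ 2 ≤ ‖z‖ ^ 2} = {z | ρ ≤ ‖z‖} := by
      ext z; simp only [Set.mem_ofPred_eq]
      exact pow_le_pow_iff_left₀ hρ.le (norm_nonneg z) (by norm_num)
    rw [e] at h3
    rw [le_div_iff₀ (by positivity)]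
    linarith
  set r := 2 * √(n : ℝ) with hr
  have hsq : √(n : ℝ) ^ 2 = n := Real.sq_sqrt hn'.le
  have hr0 : 0 < r := by positivity
  have hball : 1 / 2 ≤ μ.real {u | ‖u‖ ≤ r} := by
    have h3 := markov r hr0
    have e : n / r ^ 2 = 1 / 4 := by rw [hr, mul_pow, hsq]; field_simp; norm_num
    rw [e] at h3
    have hms : MeasurableSet {u : Eu n | ‖u‖ ≤ r} := measurableSet_le (by fun_prop) (by fun_prop)
    have h4 := probReal_compl_eq_one_sub (μ := μ) hms
    have h5 : μ.real {u : Eu n | ‖u‖ ≤ r}ᶜ ≤ μ.real {z | r ≤ ‖z‖} := by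
      refine measureReal_mono fun z hz => ?_
      simp only [Set.mem_compl_iff, Set.mem_ofPred_eq, not_le] at hz ⊢
      exact hz.le
    linarith
  have hKr : tailK n - r = √n * 2 ^ (n + 2) := by rw [tailK, hr]; ring
  have hKr0 : 0 < tailK n - r := by rw [hKr]; positivity
  have hfar : μ.real {z | s * ‖x‖ - r ≤ ‖z‖} ≤ ((2 : ℝ) ^ (n + 2) ^ 1 * 2 ^ (n + 2))⁻¹ := by
    have e : s * ‖x‖ = tailK n := by rw [hs]; field_simp
    rw [e]
    refine (markov _ hKr0).trans (le_of_eq ?_)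
    rw [hKr, mul_pow, hsq]
    field_simp
    ring
  have haux := tail_aux hm hp hM0 hM hμ (r := r) hs0 (by linarith) x
  have haux' : (1 - s) ^ n * (p x / M) ^ s * μ.real {u | ‖u‖ ≤ r} ≤
      μ.real {z | s * ‖x‖ - r ≤ ‖z‖} := by
    have h3 := ENNReal.toReal_mono (measure_ne_top _ _) haux
    rw [ENNReal.toReal_mul, ENNReal.toReal_ofReal (by
      have : 0 ≤ 1 - s := by linarith
      positivity)] at h3
    exact h3
  have h4 : (1 / 2 : ℝ) ^ n ≤ (1 - s) ^ n := by gcongr; linarith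
  have hqs : 0 ≤ (p x / M) ^ s := by positivity
  have h5 : (1 / 2 : ℝ) ^ n * (p x / M) ^ s * (1 / 2) ≤ ((2 : ℝ) ^ (n + 2) ^ 1 * 2 ^ (n + 2))⁻¹ := by
    refine le_trans ?_ (haux'.trans hfar)
    have : 0 ≤ 1 - s := by linarith
    gcongr
  have h6 : (p x / M) ^ s ≤ Real.exp (-1) := by
    have e1 : ((2 : ℝ) ^ (n + 2) ^ 1 * 2 ^ (n + 2))⁻¹ = (1 / 2) ^ n * ((1 / 2) ^ n * (1 / 16)) := by
      rw [one_div, inv_pow, pow_one, pow_add]; field_simp; ring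
    rw [e1, mul_assoc] at h5
    have h7 := le_of_mul_le_mul_left h5 (by positivity)
    have h8 : (1 / 2 : ℝ) ^ n ≤ 1 := pow_le_one₀ (by norm_num) (by norm_num)
    have h9 : (1 / 3 : ℝ) ≤ Real.exp (-1) := by
      rw [Real.exp_neg, one_div]
      gcongr
      linarith [Real.exp_one_lt_d9]
    linarith
  have h10 : p x / M ≤ Real.exp (-(‖x‖ / tailK n)) := by
    have e1 : p x / M = ((p x / M) ^ s) ^ s⁻¹ := by
      rw [← Real.rpow_mul hq0, mul_inv_cancel₀ hs0.ne', Real.rpow_one]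
    have e2 : Real.exp (-(‖x‖ / tailK n)) = Real.exp (-1) ^ s⁻¹ := by
      rw [← Real.exp_mul, hs, inv_div, neg_one_mul]
    rw [e1, e2]
    gcongr
  refine h10.trans ?_
  have : 1 ≤ Real.exp 2 := Real.one_le_exp (by norm_num)
  nlinarith [Real.exp_pos (-(‖x‖ / tailK n))]

/-- The fourth root of a log-concave probability density has a controlled integral, after
normalisation by the supremum `M`. -/
theorem logconcave_root (hm : Measurable p) (hp : IsLogConcaveDensity p)
    (h1 : ∫⁻ x, ENNReal.ofReal (p x) = 1) {M : ℝ} (hM0 : 0 < M) {x0 : Eu n} (hx0 : M / 2 ≤ p x0) :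
    ∫⁻ x, ENNReal.ofReal (M * (p x / M) ^ (1 / 4 : ℝ)) ≤ ENNReal.ofReal (2 * 4 ^ n) := by
  have h2 : ENNReal.ofReal ((1 / 4 : ℝ) ^ n) * ∫⁻ x, ENNReal.ofReal
      (1 / 2 * (M * (p x / M) ^ (1 / 4 : ℝ))) ≤ 1 := by
    rw [← h1, ← lintegral_affine' (c := 1 / 4) (by norm_num) ((3 / 4 : ℝ) • x0)
      (F := fun x => ENNReal.ofReal (p x)) (by fun_prop)]
    gcongr with x
    have h3 := hp.2 x x0 (1 / 4) (by norm_num) (by norm_num)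
    norm_num at h3 ⊢
    refine le_trans ?_ h3
    have e1 : M * (p x / M) ^ (1 / 4 : ℝ) = p x ^ (1 / 4 : ℝ) * M ^ (3 / 4 : ℝ) := by
      have e2 : M = M ^ (1 / 4 : ℝ) * M ^ (3 / 4 : ℝ) := by
        rw [← Real.rpow_add hM0]; norm_num
      rw [Real.div_rpow (hp.1 x) hM0.le]
      nth_rw 1 [e2]
      field_simp
    rw [e1]
    have hpx := hp.1 x
    have h4 : 1 / 2 * M ^ (3 / 4 : ℝ) ≤ p x0 ^ (3 / 4 : ℝ) := by
      calc 1 / 2 * M ^ (3 / 4 : ℝ) ≤ (1 / 2 : ℝ) ^ (3 / 4 : ℝ) * M ^ (3 / 4 : ℝ) := by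
            gcongr
            have := Real.rpow_le_rpow_of_exponent_ge (x := 1 / 2) (by norm_num) (by norm_num)
              (by norm_num : (3 / 4 : ℝ) ≤ 1)
            simpa using this
        _ = (M / 2) ^ (3 / 4 : ℝ) := by
            rw [← Real.mul_rpow (by norm_num) hM0.le]; congr 1; ring
        _ ≤ _ := by gcongr
    calc 1 / 2 * (p x ^ (1 / 4 : ℝ) * M ^ (3 / 4 : ℝ)) =
        p x ^ (1 / 4 : ℝ) * (1 / 2 * M ^ (3 / 4 : ℝ)) := by ring
      _ ≤ _ := by gcongr
  simp only [ENNReal.ofReal_mul (by norm_num : (0 : ℝ) ≤ 1 / 2)] at h2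
  rw [lintegral_const_mul _ (by fun_prop), ← mul_assoc, ← ENNReal.ofReal_mul (by positivity)] at h2
  have e3 : 2 * (4 : ℝ) ^ n = ((1 / 4) ^ n * (1 / 2))⁻¹ := by
    rw [mul_inv, one_div, inv_pow, inv_inv, one_div, inv_inv, mul_comm]
  rw [e3, ENNReal.ofReal_inv_of_pos (by positivity), ← one_div]
  rw [ENNReal.le_div_iff_mul_le (Or.inl (by simp)) (Or.inl ENNReal.ofReal_ne_top), mul_comm]
  exact h2

end LogConcave

/-! ### A crude Poincaré inequality for log-concave measures -/

section BasePoincare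
variable {n : ℕ}

theorem ae_differentiableAt_of_locallyLipschitz {f : Eu n → ℝ} (hf : LocallyLipschitz f) :
    ∀ᵐ x, DifferentiableAt ℝ f x := by
  refine measure_null_of_locally_null _ fun x _ => ?_
  obtain ⟨K, t, ht, hK⟩ := hf x
  obtain ⟨u, hu, huo, hxu⟩ := mem_nhds_iff.1 ht
  refine ⟨u ∩ {x | ¬ DifferentiableAt ℝ f x}, ?_, ?_⟩
  · exact mem_nhdsWithin.2 ⟨u, huo, hxu, fun y hy => ⟨hy.1, hy.2⟩⟩
  · have h := (hK.mono hu).ae_differentiableWithinAt_of_mem (μ := volume)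
    refine measure_mono_null (fun y hy => ?_) h
    intro h2
    exact hy.2 ((h2 hy.1).differentiableAt (huo.mem_nhds hy.1))

theorem lintegral_exp_decay (D : ℝ) (hD : 0 ≤ D) {c : ℝ} (hc : 0 < c) :
    ∫⁻ s in Set.Ioc (0 : ℝ) (1 / 2), ENNReal.ofReal (D * Real.exp (-(c * (s * D)))) ≤
      ENNReal.ofReal (1 / c) := by
  have hcont : Continuous fun s : ℝ => D * Real.exp (-(c * (s * D))) := by fun_prop
  rw [← ofReal_integral_eq_lintegral_ofReal (hcont.integrableOn_Ioc)
    (.of_forall fun s => by positivity), ← intervalIntegral.integral_of_le (by norm_num)]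
  refine ENNReal.ofReal_le_ofReal ?_
  rw [intervalIntegral.integral_eq_sub_of_hasDerivAt
    (f := fun s => -(1 / c) * Real.exp (-(c * (s * D)))) _ (hcont.intervalIntegrable _ _)]
  · simp
    positivity
  · intro s _
    have h : HasDerivAt (fun s : ℝ => -(c * (s * D))) (-(c * (1 * D))) s :=
      (((hasDerivAt_id s).mul_const D).const_mul c).neg
    refine (h.exp.const_mul (-(1 / c))).congr_deriv ?_
    field_simp

/-- Cauchy–Schwarz along the first half of a segment, with the exponential weight
`exp (c s |x - y|)`. -/
theorem segment_bound {f : Eu n → ℝ} (hf : LocallyLipschitz f) {c : ℝ} (hc : 0 < c) (x y : Eu n)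
    (hd : ∀ᵐ s ∂(volume.restrict (Set.Ioc (0 : ℝ) (1 / 2))),
      DifferentiableAt ℝ f ((1 - s) • x + s • y)) :
    ENNReal.ofReal ((f x - f ((1 / 2 : ℝ) • x + (1 / 2 : ℝ) • y)) ^ 2) ≤
      ENNReal.ofReal (1 / c) * ∫⁻ s in Set.Ioc (0 : ℝ) (1 / 2),
        ENNReal.ofReal (‖fderiv ℝ f ((1 - s) • x + s • y)‖ ^ 2) *
          ENNReal.ofReal (‖x - y‖ * Real.exp (c * (s * ‖x - y‖))) := by
  set ν := volume.restrict (Set.Ioc (0 : ℝ) (1 / 2)) with hν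
  set z : ℝ → Eu n := fun s => (1 - s) • x + s • y with hz
  set L := ‖x - y‖ with hL
  have hzd : ∀ s, HasDerivAt z (y - x) s := fun s => by
    have h1 : HasDerivAt (fun s : ℝ => (1 - s) • x) ((-1 : ℝ) • x) s :=
      ((hasDerivAt_id s).const_sub 1).smul_const x
    have h2 : HasDerivAt (fun s : ℝ => s • y) ((1 : ℝ) • y) s :=
      (hasDerivAt_id s).smul_const y
    refine (h1.add h2).congr_deriv ?_
    simp [sub_eq_add_neg, add_comm]
  have hzc : ContDiff ℝ 1 z := by rw [hz]; fun_prop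
  have hzl : LocallyLipschitz z := hzc.locallyLipschitz
  have hfz : LocallyLipschitz (f ∘ z) := hf.comp hzl
  obtain ⟨K, hK⟩ := (hfz.locallyLipschitzOn (s := Set.uIcc (0 : ℝ) (1 / 2))
    ).exists_lipschitzOnWith_of_compact isCompact_uIcc
  have hftc := hK.absolutelyContinuousOnInterval.integral_deriv_eq_sub
  have h1 : ‖f x - f ((1 / 2 : ℝ) • x + (1 / 2 : ℝ) • y)‖ₑ ≤
      ∫⁻ s, ‖fderiv ℝ f (z s)‖ₑ * ENNReal.ofReal L ∂ν := by
    have e : f x - f ((1 / 2 : ℝ) • x + (1 / 2 : ℝ) • y) = -∫ s, deriv (f ∘ z) s ∂ν := by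
      rw [hν, ← intervalIntegral.integral_of_le (by norm_num), hftc]
      simp only [Function.comp, hz]
      norm_num
    rw [e, enorm_neg]
    refine (enorm_integral_le_lintegral_enorm _).trans (lintegral_mono_ae ?_)
    filter_upwards [hd] with s hs
    have h2 := hs.hasFDerivAt.comp_hasDerivAt s (hzd s)
    rw [h2.deriv, ← ofReal_norm, ← ofReal_norm, ← ENNReal.ofReal_mul (norm_nonneg _)]
    refine ENNReal.ofReal_le_ofReal ((ContinuousLinearMap.le_opNorm _ _).trans (le_of_eq ?_))
    rw [hL, norm_sub_rev]
  have hmf : Measurable fun s => ‖fderiv ℝ f (z s)‖ :=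
    ((measurable_fderiv ℝ f).comp hzc.continuous.measurable).norm
  have hL0 : 0 ≤ L := norm_nonneg _
  have h2 : (∫⁻ s, ‖fderiv ℝ f (z s)‖ₑ * ENNReal.ofReal L ∂ν) ^ 2 ≤
      (∫⁻ s, ENNReal.ofReal (‖fderiv ℝ f (z s)‖ ^ 2) *
          ENNReal.ofReal (L * Real.exp (c * (s * L))) ∂ν) *
      ∫⁻ s, ENNReal.ofReal (L * Real.exp (-(c * (s * L)))) ∂ν := by
    have h3 := ENNReal.lintegral_mul_le_Lp_mul_Lq ν Real.HolderConjugate.two_two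
      (f := fun s => ENNReal.ofReal (‖fderiv ℝ f (z s)‖ * √(L * Real.exp (c * (s * L)))))
      (g := fun s => ENNReal.ofReal (√(L * Real.exp (-(c * (s * L))))))
      (by fun_prop) (by fun_prop)
    have e1 : ∀ s, ‖fderiv ℝ f (z s)‖ₑ * ENNReal.ofReal L =
        ENNReal.ofReal (‖fderiv ℝ f (z s)‖ * √(L * Real.exp (c * (s * L)))) *
        ENNReal.ofReal (√(L * Real.exp (-(c * (s * L))))) := by
      intro s
      rw [← ofReal_norm, ← ENNReal.ofReal_mul (by positivity), ← ENNReal.ofReal_mul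
        (by positivity), mul_assoc, ← Real.sqrt_mul (by positivity)]
      congr 2
      rw [Real.exp_neg]
      symm
      rw [Real.sqrt_eq_iff_mul_self_eq (by positivity) hL0]
      field_simp
    simp only [Pi.mul_apply, ← e1] at h3
    refine (pow_le_pow_left' h3 2).trans ?_
    rw [mul_pow, ← ENNReal.rpow_natCast, ← ENNReal.rpow_natCast, ← ENNReal.rpow_mul,
      ← ENNReal.rpow_mul]
    norm_num
    refine mul_le_mul' (lintegral_mono fun s => ?_) (lintegral_mono fun s => ?_)
    · rw [mul_pow, ← ENNReal.ofReal_pow (by positivity), Real.sq_sqrt (by positivity)]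
    · rw [← ENNReal.ofReal_pow (by positivity), Real.sq_sqrt (by positivity)]
  have h3 : ENNReal.ofReal ((f x - f ((1 / 2 : ℝ) • x + (1 / 2 : ℝ) • y)) ^ 2) =
      ‖f x - f ((1 / 2 : ℝ) • x + (1 / 2 : ℝ) • y)‖ₑ ^ 2 := by
    rw [← ofReal_norm, ← ENNReal.ofReal_pow (norm_nonneg _), Real.norm_eq_abs, sq_abs]
  rw [h3, mul_comm]
  refine (pow_le_pow_left' h1 2).trans (h2.trans ?_)
  gcongr
  exact lintegral_exp_decay L hL0 hc

theorem ae_segment_differentiable {f : Eu n → ℝ} (hf : LocallyLipschitz f) (y : Eu n) :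
    ∀ᵐ x, ∀ᵐ s ∂(volume.restrict (Set.Ioc (0 : ℝ) (1 / 2))),
      DifferentiableAt ℝ f ((1 - s) • x + s • y) := by
  set N := {x | ¬ DifferentiableAt ℝ f x} with hN
  have hNm : MeasurableSet N := (measurableSet_of_differentiableAt ℝ f).compl
  have hN0 : volume N = 0 := ae_differentiableAt_of_locallyLipschitz hf
  set ν := volume.restrict (Set.Ioc (0 : ℝ) (1 / 2)) with hν
  have hmeas : Measurable fun q : Eu n × ℝ => N.indicator (fun _ => (1 : ℝ≥0∞))
      ((1 - q.2) • q.1 + q.2 • y) :=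
    (measurable_const.indicator hNm).comp (by fun_prop)
  have h0 : ∫⁻ x, ∫⁻ s, N.indicator (fun _ => (1 : ℝ≥0∞)) ((1 - s) • x + s • y) ∂ν = 0 := by
    rw [lintegral_lintegral_swap hmeas.aemeasurable]
    rw [lintegral_eq_zero_iff' (Measurable.lintegral_prod_left' hmeas).aemeasurable, hν]
    rw [Filter.EventuallyEq, ae_restrict_iff' measurableSet_Ioc]
    refine .of_forall fun s hs => ?_
    have h1s : 0 < 1 - s := by linarith [hs.2]
    change ∫⁻ x, N.indicator (fun _ => (1 : ℝ≥0∞)) ((1 - s) • x + s • y) = 0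
    rw [lintegral_affine h1s (s • y) (F := N.indicator fun _ => (1 : ℝ≥0∞))
      (measurable_const.indicator hNm), lintegral_indicator_const hNm, hN0]
    simp
  rw [lintegral_eq_zero_iff (Measurable.lintegral_prod_right' hmeas)] at h0
  filter_upwards [h0] with x hx
  have hmx : Measurable fun s : ℝ => N.indicator (fun _ => (1 : ℝ≥0∞)) ((1 - s) • x + s • y) :=
    (measurable_const.indicator hNm).comp
      (by fun_prop : Measurable fun s : ℝ => (1 - s) • x + s • y)
  rw [Pi.zero_apply, lintegral_eq_zero_iff hmx] at hx
  filter_upwards [hx] with s hs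
  by_contra h
  have : (1 - s) • x + s • y ∈ N := h
  simp [Set.indicator_of_mem this] at hs

variable {p : Eu n → ℝ}

/-- The pointwise inequality behind the crude Poincaré inequality: transport of the weight
`p(x) p(y)` to the point `(1 - s) x + s y`. -/
theorem transport_weight (hp : IsLogConcaveDensity p) {M K : ℝ} (hM0 : 0 < M) (hK : 0 < K)
    (hM : ∀ x, p x ≤ M)
    (htail : ∀ x, p x / M ≤ Real.exp 2 * Real.exp (-(‖x‖ / K))) (x y : Eu n) {s : ℝ}
    (hs0 : 0 < s) (hs1 : s ≤ 1 / 2) :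
    p x * p y * (‖x - y‖ * Real.exp (1 / (4 * K) * (s * ‖x - y‖))) ≤
      Real.exp 1 * (M * (p y / M) ^ (1 / 4 : ℝ)) * (p ((1 - s) • x + s • y) *
        (2 * (‖(1 - s) • x + s • y - y‖ *
          Real.exp (-(1 / (4 * K) * (s * ‖(1 - s) • x + s • y - y‖)))))) := by
  set L := ‖x - y‖ with hL
  have hD : ‖(1 - s) • x + s • y - y‖ = (1 - s) * L := by
    have : (1 - s) • x + s • y - y = (1 - s) • (x - y) := by module
    rw [this, norm_smul, Real.norm_of_nonneg (by linarith)]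
  rw [hD]
  have hL0 : 0 ≤ L := norm_nonneg _
  set qx := p x / M with hqx
  set qy := p y / M with hqy
  have hqx0 : 0 ≤ qx := div_nonneg (hp.1 x) hM0.le
  have hqy0 : 0 ≤ qy := div_nonneg (hp.1 y) hM0.le
  have hqx1 : qx ≤ 1 := by rw [hqx, div_le_one hM0]; exact hM x
  have hqy1 : qy ≤ 1 := by rw [hqy, div_le_one hM0]; exact hM y
  have hpx : p x = M * qx := by rw [hqx]; field_simp
  have hpy : p y = M * qy := by rw [hqy]; field_simp
  have hz := hp.2 x y (1 - s) (by linarith) (by linarith)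
  rw [sub_sub_cancel] at hz
  set P := p ((1 - s) • x + s • y) with hP
  have hP0 : 0 ≤ P := hp.1 _
  have hMM : M ^ (1 - s) * M ^ s = M := by rw [← Real.rpow_add hM0]; simp
  have h1 : p x * p y ≤ P * (M * (qx ^ s * qy ^ (1 - s))) := by
    have e1 : qx = qx ^ (1 - s) * qx ^ s := by
      rw [← Real.rpow_add' hqx0 (by simp)]; simp
    have e2 : qy = qy ^ s * qy ^ (1 - s) := by
      rw [← Real.rpow_add' hqy0 (by simp)]; simp
    have e3 : M * (qx ^ (1 - s) * qy ^ s) ≤ P := by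
      rw [hpx, hpy, Real.mul_rpow hM0.le hqx0, Real.mul_rpow hM0.le hqy0] at hz
      calc _ = M ^ (1 - s) * M ^ s * (qx ^ (1 - s) * qy ^ s) := by rw [hMM]
        _ ≤ _ := le_trans (le_of_eq (by ring)) hz
    calc p x * p y = (M * (qx ^ (1 - s) * qy ^ s)) * (M * (qx ^ s * qy ^ (1 - s))) := by
          rw [hpx, hpy]
          nth_rw 1 [e1]
          nth_rw 1 [e2]
          ring
      _ ≤ _ := by gcongr
  have h2 : qx ^ s ≤ Real.exp s * Real.exp (-(s * ‖x‖ / (2 * K))) := by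
    calc qx ^ s ≤ qx ^ (s / 2) := by
          rcases hqx0.eq_or_lt with h | h
          · rw [← h, Real.zero_rpow hs0.ne', Real.zero_rpow (by positivity)]
          · exact Real.rpow_le_rpow_of_exponent_ge h hqx1 (by linarith)
      _ ≤ (Real.exp 2 * Real.exp (-(‖x‖ / K))) ^ (s / 2) := by
          gcongr
          exact htail x
      _ = _ := by
          rw [← Real.exp_add, ← Real.exp_add, ← Real.exp_mul]
          congr 1
          field_simp
  have h3 : qy ^ (1 - s) ≤ qy ^ (1 / 4 : ℝ) * (Real.exp (1 / 2) * Real.exp (-(s * ‖y‖ / (2 * K)))) := by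
    calc qy ^ (1 - s) ≤ qy ^ (1 / 4 + 1 / 4 : ℝ) := by
          rcases hqy0.eq_or_lt with h | h
          · rw [← h, Real.zero_rpow (by linarith), Real.zero_rpow (by norm_num)]
          · exact Real.rpow_le_rpow_of_exponent_ge h hqy1 (by linarith)
      _ = qy ^ (1 / 4 : ℝ) * qy ^ (1 / 4 : ℝ) := Real.rpow_add' hqy0 (by norm_num)
      _ ≤ qy ^ (1 / 4 : ℝ) * (Real.exp 2 * Real.exp (-(‖y‖ / K))) ^ (1 / 4 : ℝ) := by
          gcongr
          exact htail y
      _ ≤ _ := by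
          gcongr
          rw [← Real.exp_add, ← Real.exp_add, ← Real.exp_mul]
          refine Real.exp_le_exp.2 ?_
          have : s * ‖y‖ / (2 * K) ≤ (1 / 2) * ‖y‖ / (2 * K) := by gcongr
          have e : (1 / 2) * ‖y‖ / (2 * K) = ‖y‖ / K * (1 / 4) := by field_simp; ring
          linarith
  have h4 : qx ^ s * qy ^ (1 - s) ≤ Real.exp 1 * qy ^ (1 / 4 : ℝ) * Real.exp (-(s * L / (2 * K))) := by
    calc qx ^ s * qy ^ (1 - s) ≤ (Real.exp s * Real.exp (-(s * ‖x‖ / (2 * K)))) *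
          (qy ^ (1 / 4 : ℝ) * (Real.exp (1 / 2) * Real.exp (-(s * ‖y‖ / (2 * K))))) := by gcongr
      _ = qy ^ (1 / 4 : ℝ) * Real.exp (s + 1 / 2 - s * (‖x‖ + ‖y‖) / (2 * K)) := by
          rw [show s + 1 / 2 - s * (‖x‖ + ‖y‖) / (2 * K) = s + -(s * ‖x‖ / (2 * K)) +
            (1 / 2 + -(s * ‖y‖ / (2 * K))) by ring, Real.exp_add, Real.exp_add, Real.exp_add]
          ring
      _ ≤ qy ^ (1 / 4 : ℝ) * Real.exp (1 + -(s * L / (2 * K))) := by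
          refine mul_le_mul_of_nonneg_left (Real.exp_le_exp.2 ?_) (by positivity)
          have : s * L / (2 * K) ≤ s * (‖x‖ + ‖y‖) / (2 * K) := by
            gcongr
            exact norm_sub_le x y
          linarith
      _ = _ := by rw [Real.exp_add]; ring
  have h5 : Real.exp (-(s * L / (2 * K))) * (L * Real.exp (1 / (4 * K) * (s * L))) ≤
      2 * ((1 - s) * L * Real.exp (-(1 / (4 * K) * (s * ((1 - s) * L))))) := by
    calc _ = L * Real.exp (-(1 / (4 * K) * (s * L))) := by
          rw [mul_left_comm, ← Real.exp_add]
          congr 2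
          field_simp
          ring
      _ ≤ (2 * ((1 - s) * L)) * Real.exp (-(1 / (4 * K) * (s * ((1 - s) * L)))) := by
          have h6 : (1 - s) * L ≤ L := by nlinarith
          have h7 : L ≤ 2 * ((1 - s) * L) := by nlinarith
          refine mul_le_mul h7 (Real.exp_le_exp.2 ?_) (by positivity) (hL0.trans h7)
          gcongr
      _ = _ := by ring
  calc p x * p y * (L * Real.exp (1 / (4 * K) * (s * L)))
      ≤ P * (M * (Real.exp 1 * qy ^ (1 / 4 : ℝ) * Real.exp (-(s * L / (2 * K))))) *
        (L * Real.exp (1 / (4 * K) * (s * L))) := by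
        refine mul_le_mul_of_nonneg_right (h1.trans ?_) (by positivity)
        gcongr
    _ = Real.exp 1 * (M * qy ^ (1 / 4 : ℝ)) * (P * (Real.exp (-(s * L / (2 * K))) *
        (L * Real.exp (1 / (4 * K) * (s * L))))) := by ring
    _ ≤ _ := by gcongr

/-- Oscillation of `f` between a point `x` and the midpoint of `x` and `y`, integrated in `x`.
Staying on the half of the segment close to `x`, the map from `x` to a point of the segment has a
Jacobian bounded below by `2⁻ⁿ`. -/
theorem half_bound (hm : Measurable p) (hp : IsLogConcaveDensity p) {M K : ℝ} (hM0 : 0 < M)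
    (hK : 0 < K) (hM : ∀ x, p x ≤ M)
    (htail : ∀ x, p x / M ≤ Real.exp 2 * Real.exp (-(‖x‖ / K))) {f : Eu n → ℝ}
    (hf : LocallyLipschitz f) (y : Eu n) :
    ∫⁻ x, ENNReal.ofReal (p x * p y * (f x - f ((1 / 2 : ℝ) • x + (1 / 2 : ℝ) • y)) ^ 2) ≤
      ENNReal.ofReal (M * (p y / M) ^ (1 / 4 : ℝ)) * (ENNReal.ofReal (32 * K ^ 2 * 2 ^ n *
        Real.exp 1) * ∫⁻ z, ENNReal.ofReal (p z * ‖fderiv ℝ f z‖ ^ 2)) := by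
  set c := 1 / (4 * K) with hc
  have hc0 : 0 < c := by positivity
  set ν := volume.restrict (Set.Ioc (0 : ℝ) (1 / 2)) with hν
  set Q := M * (p y / M) ^ (1 / 4 : ℝ) with hQ
  have hQ0 : 0 ≤ Q := by
    have := div_nonneg (hp.1 y) hM0.le
    positivity
  have hmf : Measurable fun z => ‖fderiv ℝ f z‖ := (measurable_fderiv ℝ f).norm
  have hp0 := hp.1
  -- the transported integrand
  set Φ : ℝ → Eu n → ℝ≥0∞ := fun s z => ENNReal.ofReal (p z * ‖fderiv ℝ f z‖ ^ 2) *
    ENNReal.ofReal (‖z - y‖ * Real.exp (-(c * (s * ‖z - y‖)))) with hΦ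
  have hΦm : Measurable fun w : Eu n × ℝ => Φ w.2 w.1 := by
    simp only [hΦ]; fun_prop
  have hΦs : ∀ s, Measurable (Φ s) := fun s => by simp only [hΦ]; fun_prop
  have hΦm2 : Measurable fun w : Eu n × ℝ => Φ w.2 ((1 - w.2) • w.1 + w.2 • y) := by
    simp only [hΦ]; fun_prop
  set κ := ENNReal.ofReal (1 / c) * ENNReal.ofReal (Real.exp 1 * Q * 2) with hκ
  have h1 : ∀ᵐ x, ENNReal.ofReal (p x * p y * (f x - f ((1 / 2 : ℝ) • x + (1 / 2 : ℝ) • y)) ^ 2) ≤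
      κ * ∫⁻ s, Φ s ((1 - s) • x + s • y) ∂ν := by
    filter_upwards [ae_segment_differentiable hf y] with x hx
    have h2 := segment_bound hf hc0 x y hx
    have hpp : 0 ≤ p x * p y := mul_nonneg (hp0 x) (hp0 y)
    rw [ENNReal.ofReal_mul hpp, hκ]
    refine (mul_le_mul' le_rfl h2).trans ?_
    rw [mul_left_comm, mul_assoc]
    refine mul_le_mul' le_rfl ?_
    have hmx : Measurable fun s : ℝ => Φ s ((1 - s) • x + s • y) := by
      simp only [hΦ]; fun_prop
    rw [← lintegral_const_mul _ (by fun_prop), ← lintegral_const_mul _ hmx]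
    refine lintegral_mono_ae ((ae_restrict_iff' measurableSet_Ioc).2 (.of_forall fun s hs => ?_))
    have h3 := transport_weight hp hM0 hK hM htail x y hs.1 hs.2
    simp only [hΦ]
    have := hp0 ((1 - s) • x + s • y)
    rw [← ENNReal.ofReal_mul (by positivity), ← ENNReal.ofReal_mul (by positivity),
      ← ENNReal.ofReal_mul (by positivity), ← ENNReal.ofReal_mul (by positivity)]
    refine ENNReal.ofReal_le_ofReal ?_
    rw [← hc] at h3
    calc _ = ‖fderiv ℝ f ((1 - s) • x + s • y)‖ ^ 2 *
          (p x * p y * (‖x - y‖ * Real.exp (c * (s * ‖x - y‖)))) := by ring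
      _ ≤ _ := mul_le_mul_of_nonneg_left h3 (by positivity)
      _ = _ := by ring
  refine (lintegral_mono_ae h1).trans ?_
  rw [lintegral_const_mul _ (Measurable.lintegral_prod_right' hΦm2),
    lintegral_lintegral_swap hΦm2.aemeasurable]
  have h2 : ∫⁻ s, (∫⁻ x, Φ s ((1 - s) • x + s • y)) ∂ν ≤
      ∫⁻ s, (ENNReal.ofReal (2 ^ n) * ∫⁻ z, Φ s z) ∂ν := by
    refine lintegral_mono_ae ((ae_restrict_iff' measurableSet_Ioc).2 (.of_forall fun s hs => ?_))
    have h1s : 0 < 1 - s := by linarith [hs.2]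
    rw [lintegral_affine h1s (s • y) (hΦs s)]
    refine mul_le_mul' (ENNReal.ofReal_le_ofReal ?_) le_rfl
    rw [← inv_pow]
    have : (1 - s)⁻¹ ≤ 2 := by
      rw [inv_le_comm₀ h1s (by norm_num)]; linarith [hs.2]
    gcongr
  have h3 : ∫⁻ s, (ENNReal.ofReal (2 ^ n) * ∫⁻ z, Φ s z) ∂ν ≤ ENNReal.ofReal (2 ^ n) *
      ((∫⁻ z, ENNReal.ofReal (p z * ‖fderiv ℝ f z‖ ^ 2)) * ENNReal.ofReal (1 / c)) := by
    rw [lintegral_const_mul _ (Measurable.lintegral_prod_left' hΦm)]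
    refine mul_le_mul' le_rfl ?_
    rw [← lintegral_lintegral_swap (f := fun z s => Φ s z) hΦm.aemeasurable,
      ← lintegral_mul_const _ (by fun_prop)]
    refine lintegral_mono fun z => ?_
    simp only [hΦ]
    rw [lintegral_const_mul _ (by fun_prop)]
    exact mul_le_mul' le_rfl (lintegral_exp_decay _ (norm_nonneg _) hc0)
  refine (mul_le_mul' le_rfl (h2.trans h3)).trans (le_of_eq ?_)
  have e : ENNReal.ofReal (32 * K ^ 2 * 2 ^ n * Real.exp 1) = ENNReal.ofReal (1 / c) *
      ENNReal.ofReal (Real.exp 1 * 2) * ENNReal.ofReal (2 ^ n) * ENNReal.ofReal (1 / c) := by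
    rw [← ENNReal.ofReal_mul (by positivity), ← ENNReal.ofReal_mul (by positivity),
      ← ENNReal.ofReal_mul (by positivity)]
    congr 1
    rw [hc]
    field_simp
    ring
  rw [hκ, e, show Real.exp 1 * Q * 2 = Q * (Real.exp 1 * 2) by ring, ENNReal.ofReal_mul hQ0]
  ring

end BasePoincare

section BasePoincare2
variable {n : ℕ}

/-- A (very large) dimensional upper bound for the Poincaré constant of an isotropic log-concave
probability measure. -/
def baseB (n : ℕ) : ℝ := 2 * 2 * (2 * 4 ^ n * (32 * tailK n ^ 2 * 2 ^ n * Real.exp 1))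

theorem baseB_nonneg (n : ℕ) : 0 ≤ baseB n := by unfold baseB; positivity

/-- The second moment of the norm under an isotropic measure. -/
theorem isotropic_sq {μ : Measure (Eu n)} (hi : IsIsotropicMeasure μ) :
    Integrable (fun x : Eu n => ‖x‖ ^ 2) μ ∧ ∫ x, ‖x‖ ^ 2 ∂μ = n := by
  have h1 : ∀ i, Integrable (fun x : Eu n => x i * x i) μ := fun i => by
    by_contra h
    have h2 := hi.2 i i
    rw [integral_undef h, if_pos rfl] at h2
    exact zero_ne_one h2
  have e : (fun x : Eu n => ‖x‖ ^ 2) = fun x => ∑ i, x i * x i := by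
    ext x
    rw [EuclideanSpace.norm_sq_eq]
    exact Finset.sum_congr rfl fun i _ => by rw [Real.norm_eq_abs, sq_abs, sq]
  rw [e]
  refine ⟨integrable_finsetSum _ fun i _ => h1 i, ?_⟩
  rw [integral_finsetSum _ fun i _ => h1 i]
  simp [hi.2]

/-- The crude Poincaré inequality for `f x - f y`, through the midpoint of `x` and `y`. -/
theorem base_double (hn : 0 < n) {μ : Measure (Eu n)} [IsProbabilityMeasure μ]
    (hl : IsLogConcaveMeasure μ) (hi : IsIsotropicMeasure μ) {f : Eu n → ℝ}
    (hf : LocallyLipschitz f) :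
    ∫⁻ y, (∫⁻ x, ENNReal.ofReal ((f x - f y) ^ 2) ∂μ) ∂μ ≤
      ENNReal.ofReal (baseB n) * ∫⁻ x, ENNReal.ofReal (‖fderiv ℝ f x‖ ^ 2) ∂μ := by
  obtain ⟨p, hm, hp, hμ⟩ := hl
  have hp0 := hp.1
  have h1 : ∫⁻ x, ENNReal.ofReal (p x) = 1 := by
    have := measure_univ (μ := μ)
    rwa [hμ, withDensity_apply _ MeasurableSet.univ, Measure.restrict_univ] at this
  obtain ⟨M', hM'⟩ := logconcave_bdd hm hp h1
  have hbdd : BddAbove (Set.range p) := ⟨M', by rintro _ ⟨x, rfl⟩; exact hM' x⟩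
  set M := ⨆ x, p x with hMd
  have hM : ∀ x, p x ≤ M := fun x => le_ciSup hbdd x
  have hM0 : 0 < M := by
    by_contra h
    have : ∀ x, p x = 0 := fun x => le_antisymm ((hM x).trans (not_lt.1 h)) (hp0 x)
    simp [this] at h1
  obtain ⟨x0, hx0⟩ : ∃ x0, M / 2 ≤ p x0 := by
    obtain ⟨x0, h⟩ := exists_lt_of_lt_ciSup (show M / 2 < ⨆ x, p x by rw [← hMd]; linarith)
    exact ⟨x0, h.le⟩
  obtain ⟨hi1, hi2⟩ := isotropic_sq hi
  have htail := logconcave_tail hn hm hp hM0 hM hμ hi1 hi2.le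
  have hK := tailK_pos hn
  have hroot := logconcave_root hm hp h1 hM0 hx0
  have hfm : Measurable f := hf.continuous.measurable
  have hmf : Measurable fun z => ‖fderiv ℝ f z‖ := (measurable_fderiv ℝ f).norm
  set I := ∫⁻ z, ENNReal.ofReal (p z * ‖fderiv ℝ f z‖ ^ 2) with hI
  have hd : Measurable fun x => ENNReal.ofReal (p x) := by fun_prop
  have eI : ∫⁻ x, ENNReal.ofReal (‖fderiv ℝ f x‖ ^ 2) ∂μ = I := by
    rw [hμ, lintegral_withDensity_eq_lintegral_mul _ hd (by fun_prop), hI]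
    exact lintegral_congr fun x => by rw [Pi.mul_apply, ← ENNReal.ofReal_mul (hp0 x)]
  -- both halves of the segments are handled by the same estimate
  have hhalf : ∫⁻ y, ∫⁻ x, ENNReal.ofReal (p x * p y *
      (f x - f ((1 / 2 : ℝ) • x + (1 / 2 : ℝ) • y)) ^ 2) ≤
      ENNReal.ofReal (2 * 4 ^ n * (32 * tailK n ^ 2 * 2 ^ n * Real.exp 1)) * I := by
    refine (lintegral_mono fun y => half_bound hm hp hM0 hK hM htail hf y).trans ?_
    rw [lintegral_mul_const _ (by fun_prop), ENNReal.ofReal_mul (p := 2 * 4 ^ n) (by positivity),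
      mul_assoc (ENNReal.ofReal _)]
    exact mul_le_mul' hroot le_rfl
  have hmm : Measurable fun w : Eu n × Eu n => ENNReal.ofReal (p w.1 * p w.2 *
      (f w.1 - f ((1 / 2 : ℝ) • w.1 + (1 / 2 : ℝ) • w.2)) ^ 2) := by fun_prop
  have hmm' : Measurable fun w : Eu n × Eu n => ENNReal.ofReal (p w.1 * p w.2 *
      (f w.2 - f ((1 / 2 : ℝ) • w.2 + (1 / 2 : ℝ) • w.1)) ^ 2) := by fun_prop
  have hhalf' : ∫⁻ y, ∫⁻ x, ENNReal.ofReal (p x * p y *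
      (f y - f ((1 / 2 : ℝ) • y + (1 / 2 : ℝ) • x)) ^ 2) ≤
      ENNReal.ofReal (2 * 4 ^ n * (32 * tailK n ^ 2 * 2 ^ n * Real.exp 1)) * I := by
    rw [lintegral_lintegral_swap (by fun_prop)]
    refine le_trans (le_of_eq ?_) hhalf
    refine lintegral_congr fun x => lintegral_congr fun y => ?_
    rw [mul_comm (p x)]
  have e2 : ∫⁻ y, (∫⁻ x, ENNReal.ofReal ((f x - f y) ^ 2) ∂μ) ∂μ =
      ∫⁻ y, ∫⁻ x, ENNReal.ofReal (p x * p y * (f x - f y) ^ 2) := by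
    have e3 : ∀ y, ∫⁻ x, ENNReal.ofReal ((f x - f y) ^ 2) ∂μ =
        ∫⁻ x, ENNReal.ofReal (p x) * ENNReal.ofReal ((f x - f y) ^ 2) := fun y => by
      rw [hμ, lintegral_withDensity_eq_lintegral_mul _ hd (by fun_prop)]
      rfl
    have hmy : Measurable fun y => ∫⁻ x, ENNReal.ofReal (p x) * ENNReal.ofReal ((f x - f y) ^ 2) :=
      Measurable.lintegral_prod_right' (f := fun w : Eu n × Eu n => ENNReal.ofReal (p w.2) *
        ENNReal.ofReal ((f w.2 - f w.1) ^ 2)) (by fun_prop)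
    simp only [e3]
    conv_lhs => rw [hμ, lintegral_withDensity_eq_lintegral_mul _ hd hmy]
    refine lintegral_congr fun y => ?_
    rw [Pi.mul_apply, ← lintegral_const_mul _ (by fun_prop)]
    refine lintegral_congr fun x => ?_
    rw [← ENNReal.ofReal_mul (hp0 x), ← ENNReal.ofReal_mul (hp0 y)]
    congr 1
    ring
  have hof2 : ∀ r : ℝ, 0 ≤ r → 2 * ENNReal.ofReal r = ENNReal.ofReal (2 * r) := fun r _ => by
    rw [ENNReal.ofReal_mul (by norm_num), ENNReal.ofReal_ofNat]
  rw [e2, eI]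
  calc ∫⁻ y, ∫⁻ x, ENNReal.ofReal (p x * p y * (f x - f y) ^ 2)
      ≤ ∫⁻ y, ((∫⁻ x, 2 * ENNReal.ofReal (p x * p y *
      (f x - f ((1 / 2 : ℝ) • x + (1 / 2 : ℝ) • y)) ^ 2)) + ∫⁻ x, 2 * ENNReal.ofReal (p x * p y *
      (f y - f ((1 / 2 : ℝ) • y + (1 / 2 : ℝ) • x)) ^ 2)) := by
        refine lintegral_mono fun y => ?_
        rw [← lintegral_add_left (by fun_prop)]
        refine lintegral_mono fun x => ?_
        have hpp : 0 ≤ p x * p y := mul_nonneg (hp0 x) (hp0 y)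
        rw [← mul_add, ← ENNReal.ofReal_add (by positivity) (by positivity),
          hof2 _ (by positivity)]
        refine ENNReal.ofReal_le_ofReal ?_
        rw [add_comm ((1 / 2 : ℝ) • y)]
        set m := f ((1 / 2 : ℝ) • x + (1 / 2 : ℝ) • y)
        have : (f x - f y) ^ 2 ≤ 2 * ((f x - m) ^ 2 + (f y - m) ^ 2) := by
          nlinarith [sq_nonneg (f x - m + (f y - m))]
        calc _ ≤ p x * p y * (2 * ((f x - m) ^ 2 + (f y - m) ^ 2)) :=
              mul_le_mul_of_nonneg_left this hpp
          _ = _ := by ring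
    _ = 2 * (∫⁻ y, ∫⁻ x, ENNReal.ofReal (p x * p y *
      (f x - f ((1 / 2 : ℝ) • x + (1 / 2 : ℝ) • y)) ^ 2)) +
        2 * ∫⁻ y, ∫⁻ x, ENNReal.ofReal (p x * p y *
      (f y - f ((1 / 2 : ℝ) • y + (1 / 2 : ℝ) • x)) ^ 2) := by
        have hA : Measurable fun y => ∫⁻ x, ENNReal.ofReal (p x * p y *
            (f x - f ((1 / 2 : ℝ) • x + (1 / 2 : ℝ) • y)) ^ 2) :=
          Measurable.lintegral_prod_left' hmm
        have hB : Measurable fun y => ∫⁻ x, ENNReal.ofReal (p x * p y *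
            (f y - f ((1 / 2 : ℝ) • y + (1 / 2 : ℝ) • x)) ^ 2) :=
          Measurable.lintegral_prod_left' hmm'
        rw [← lintegral_const_mul _ hA, ← lintegral_const_mul _ hB,
          ← lintegral_add_left (hA.const_mul _)]
        refine lintegral_congr fun y => ?_
        rw [lintegral_const_mul _ (by fun_prop), lintegral_const_mul _ (by fun_prop)]
    _ ≤ 2 * (ENNReal.ofReal (2 * 4 ^ n * (32 * tailK n ^ 2 * 2 ^ n * Real.exp 1)) * I) +
        2 * (ENNReal.ofReal (2 * 4 ^ n * (32 * tailK n ^ 2 * 2 ^ n * Real.exp 1)) * I) :=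
        add_le_add (mul_le_mul' le_rfl hhalf) (mul_le_mul' le_rfl hhalf')
    _ = _ := by
        unfold baseB
        rw [ENNReal.ofReal_mul (p := 2 * 2) (by norm_num), ENNReal.ofReal_mul (p := 2) (by norm_num)]
        simp only [ENNReal.ofReal_ofNat]
        ring

theorem norm_gradient_eq (f : Eu n → ℝ) (x : Eu n) : ‖gradient f x‖ = ‖fderiv ℝ f x‖ := by
  simp [gradient]

/-- A Poincaré inequality with a constant depending only on the dimension. Its only purpose is to show
that the supremum defining `KLSConst` is that of a bounded set. -/
theorem base_poincare (hn : 0 < n) {μ : Measure (Eu n)} [IsProbabilityMeasure μ]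
    (hl : IsLogConcaveMeasure μ) (hi : IsIsotropicMeasure μ) {f : Eu n → ℝ}
    (hf : LocallyLipschitz f) (h_grad : Integrable (fun x => ‖gradient f x‖ ^ 2) μ) :
    ∫ x, (f x - ∫ y, f y ∂μ) ^ 2 ∂μ ≤ baseB n * ∫ x, ‖gradient f x‖ ^ 2 ∂μ := by
  have hfm : Measurable f := hf.continuous.measurable
  set I := ∫ x, ‖gradient f x‖ ^ 2 ∂μ with hI
  have h1 := base_double hn hl hi hf
  simp only [norm_gradient_eq] at h_grad hI
  have e1 : ∫⁻ x, ENNReal.ofReal (‖fderiv ℝ f x‖ ^ 2) ∂μ = ENNReal.ofReal I := by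
    rw [hI, ofReal_integral_eq_lintegral_ofReal h_grad (.of_forall fun x => by positivity)]
  have hB := baseB_nonneg n
  rw [e1, ← ENNReal.ofReal_mul hB] at h1
  obtain ⟨y, hy⟩ : ∃ y, ∫⁻ x, ENNReal.ofReal ((f x - f y) ^ 2) ∂μ ≤
      ENNReal.ofReal (baseB n * I) := by
    obtain ⟨y, hy⟩ := exists_le_lintegral (μ := μ)
      (f := fun y => ∫⁻ x, ENNReal.ofReal ((f x - f y) ^ 2) ∂μ)
      (Measurable.lintegral_prod_right' (f := fun w : Eu n × Eu n =>
        ENNReal.ofReal ((f w.2 - f w.1) ^ 2)) (by fun_prop)).aemeasurable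
    exact ⟨y, hy.trans h1⟩
  have hsq : Integrable (fun x => (f x - f y) ^ 2) μ := by
    refine (lintegral_ofReal_ne_top_iff_integrable (by fun_prop)
      (.of_forall fun x => by positivity)).1 (ne_top_of_le_ne_top ENNReal.ofReal_ne_top hy)
  have hI0 : 0 ≤ I := by rw [hI]; exact integral_nonneg fun x => by positivity
  have h2 : ∫ x, (f x - f y) ^ 2 ∂μ ≤ baseB n * I := by
    rw [← ofReal_integral_eq_lintegral_ofReal hsq (.of_forall fun x => by positivity)] at hy
    exact (ENNReal.ofReal_le_ofReal_iff (by positivity)).1 hy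
  refine le_trans ?_ h2
  have hmem : MemLp (fun x => f x - f y) 2 μ := (memLp_two_iff_integrable_sq (by fun_prop)).2 hsq
  have hint1 : Integrable (fun x => f x - f y) μ := hmem.integrable (by norm_num)
  have hfi : Integrable f μ := by
    have := hint1.add (integrable_const (f y))
    exact this.congr (.of_forall fun x => by simp)
  set a := ∫ y, f y ∂μ with ha
  have e3 : ∫ x, (f x - f y) ∂μ = a - f y := by
    rw [integral_sub hfi (integrable_const _)]; simp [ha]
  have e4 : ∀ x, (f x - a) ^ 2 = (f x - f y) ^ 2 + ((-2 * (a - f y)) * (f x - f y) +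
      (a - f y) ^ 2) := fun x => by ring
  simp only [e4]
  have hi5 : Integrable (fun x => -2 * (a - f y) * (f x - f y) + (a - f y) ^ 2) μ :=
    (hint1.const_mul _).add (integrable_const _)
  rw [integral_add hsq hi5,
    integral_add (hint1.const_mul _) (integrable_const _), integral_const_mul, e3]
  simp
  nlinarith [sq_nonneg (a - f y)]

end BasePoincare2

/-! ### The KLS constant controls compactly supported log-concave measures -/

section KLS
open Matrix
variable {n : ℕ}

/-- Boundedness of the set of Poincaré constants. If no admissible constant exists the infimum is that
of the empty set, hence `0`. -/
theorem poincareConst_le_base (hn : 0 < n) {μ : Measure (Eu n)} [IsProbabilityMeasure μ]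
    (hl : IsLogConcaveMeasure μ) (hi : IsIsotropicMeasure μ) : poincareConst μ ≤ baseB n := by
  unfold poincareConst
  set S := {A : ℝ | 0 ≤ A ∧ ∀ f : EuclideanSpace ℝ (Fin n) → ℝ, LocallyLipschitz f →
    ∫ x, (f x - ∫ y, f y ∂μ) ^ 2 ∂μ ≤ A * ∫ x, ‖gradient f x‖ ^ 2 ∂μ} with hS
  rcases S.eq_empty_or_nonempty with h | ⟨A, hA⟩
  · rw [h, Real.sInf_empty]; exact baseB_nonneg n
  · refine csInf_le ⟨0, fun a ha => ha.1⟩ ⟨baseB_nonneg n, fun f hf => ?_⟩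
    by_cases h_grad : Integrable (fun x => ‖gradient f x‖ ^ 2) μ
    · exact base_poincare hn hl hi hf h_grad
    · have := hA.2 f hf
      rw [integral_undef h_grad, mul_zero] at this ⊢
      exact this

theorem sqrt_poincareConst_le_KLS (hn : 0 < n) {μ : Measure (Eu n)} [IsProbabilityMeasure μ]
    (hl : IsLogConcaveMeasure μ) (hi : IsIsotropicMeasure μ) :
    √(poincareConst μ) ≤ KLSConst n := by
  refine le_csSup ⟨√(baseB n), ?_⟩ ⟨μ, inferInstance, hl, hi, rfl⟩
  rintro s ⟨ν, h1, h2, h3, rfl⟩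
  exact Real.sqrt_le_sqrt (poincareConst_le_base hn h2 h3)

theorem KLSConst_nonneg (n : ℕ) : 0 ≤ KLSConst n := by
  refine Real.sSup_nonneg ?_
  rintro s ⟨ν, h1, h2, h3, rfl⟩
  exact Real.sqrt_nonneg _

/-- The Poincaré inequality with constant `ψₙ²`. The bounded support makes every energy finite, so that
no integral takes a junk value. -/
theorem KLS_poincare (hn : 0 < n) {μ : Measure (Eu n)} [IsProbabilityMeasure μ]
    (hl : IsLogConcaveMeasure μ) (hi : IsIsotropicMeasure μ) {R : ℝ} (hR : ∀ᵐ x ∂μ, ‖x‖ ≤ R)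
    {f : Eu n → ℝ} (hf : LocallyLipschitz f) :
    ∫ x, (f x - ∫ y, f y ∂μ) ^ 2 ∂μ ≤ KLSConst n ^ 2 * ∫ x, ‖gradient f x‖ ^ 2 ∂μ := by
  -- gradients of locally Lipschitz functions are bounded on the support
  have h_grad : ∀ f : Eu n → ℝ, LocallyLipschitz f → Integrable (fun x => ‖gradient f x‖ ^ 2) μ := by
    intro f hf
    obtain ⟨K, hK⟩ := (hf.locallyLipschitzOn (s := Metric.closedBall (0 : Eu n) (R + 1))
      ).exists_lipschitzOnWith_of_compact (isCompact_closedBall _ _)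
    simp only [norm_gradient_eq]
    refine Integrable.of_bound (((measurable_fderiv ℝ f).norm.pow_const 2).aestronglyMeasurable)
      ((K : ℝ) ^ 2) ?_
    filter_upwards [hR] with x hx
    have h1 : ‖fderiv ℝ f x‖ ≤ K := by
      refine norm_fderiv_le_of_lipschitzOn ℝ (s := Metric.closedBall (0 : Eu n) (R + 1)) ?_ hK
      refine Filter.mem_of_superset (Metric.ball_mem_nhds x one_pos) fun y hy => ?_
      rw [Metric.mem_ball, dist_eq_norm] at hy
      rw [mem_closedBall_zero_iff]
      have := norm_le_norm_add_norm_sub' y x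
      linarith
    rw [Real.norm_of_nonneg (by positivity)]
    gcongr
  set I := ∫ x, ‖gradient f x‖ ^ 2 ∂μ with hI
  have hI0 : 0 ≤ I := integral_nonneg fun x => by positivity
  have hbase := base_poincare hn hl hi hf (h_grad f hf)
  have hpc : poincareConst μ ≤ KLSConst n ^ 2 := by
    have h1 := sqrt_poincareConst_le_KLS hn hl hi
    have h2 : 0 ≤ poincareConst μ := Real.sInf_nonneg fun a ha => ha.1
    rw [← Real.sq_sqrt h2]
    gcongr
  rcases hI0.eq_or_lt with h0 | h0
  · rw [← hI, ← h0] at hbase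
    rw [← h0]
    linarith
  · refine le_trans ?_ (mul_le_mul_of_nonneg_right hpc hI0)
    rw [← div_le_iff₀ h0]
    refine le_csInf ⟨baseB n, baseB_nonneg n, fun f hf => base_poincare hn hl hi hf (h_grad f hf)⟩ ?_
    intro A hA
    rw [div_le_iff₀ h0]
    exact hA.2 f hf

/-! ### Closure properties of log-concave densities -/

theorem logconc_mul {p q : Eu n → ℝ} (hp : IsLogConcaveDensity p) (hq : IsLogConcaveDensity q) :
    IsLogConcaveDensity fun x => p x * q x := by
  refine ⟨fun x => mul_nonneg (hp.1 x) (hq.1 x), fun x y t h0 h1 => ?_⟩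
  rw [Real.mul_rpow (hp.1 x) (hq.1 x), Real.mul_rpow (hp.1 y) (hq.1 y)]
  have h2 := hp.2 x y t h0 h1
  have h3 := hq.2 x y t h0 h1
  have := hp.1 x; have := hp.1 y; have := hq.1 x; have := hq.1 y
  calc _ = (p x ^ t * p y ^ (1 - t)) * (q x ^ t * q y ^ (1 - t)) := by ring
    _ ≤ _ := mul_le_mul h2 h3 (by positivity) (hp.1 _)

theorem logconc_exp {h : Eu n → ℝ} (hc : ConcaveOn ℝ Set.univ h) :
    IsLogConcaveDensity fun x => Real.exp (h x) := by
  refine ⟨fun x => by positivity, fun x y t h0 h1 => ?_⟩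
  rw [← Real.exp_mul, ← Real.exp_mul, ← Real.exp_add]
  refine Real.exp_le_exp.2 ?_
  have := hc.2 (Set.mem_univ x) (Set.mem_univ y) h0 (sub_nonneg.2 h1) (by ring)
  simp only [smul_eq_mul] at this
  linarith

theorem logconc_const {c : ℝ} (hc : 0 ≤ c) : IsLogConcaveDensity fun _ : Eu n => c := by
  refine ⟨fun _ => hc, fun x y t h0 h1 => ?_⟩
  rw [← Real.rpow_add' hc (by simp)]; simp

theorem logconc_indicator {s : Set (Eu n)} (hs : Convex ℝ s) :
    IsLogConcaveDensity (s.indicator fun _ => (1 : ℝ)) := by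
  refine ⟨fun x => Set.indicator_nonneg (fun _ _ => zero_le_one) x, fun x y t h0 h1 => ?_⟩
  rcases h0.eq_or_lt with rfl | h0'
  · simp
  rcases h1.eq_or_lt with rfl | h1'
  · simp
  by_cases hx : x ∈ s
  · by_cases hy : y ∈ s
    · have := hs hx hy h0 (sub_nonneg.2 h1) (by ring)
      simp [hx, hy, this]
    · simp only [Set.indicator_of_notMem hy]
      rw [Real.zero_rpow (by linarith), mul_zero]
      exact Set.indicator_nonneg (fun _ _ => zero_le_one) _
  · simp only [Set.indicator_of_notMem hx]
    rw [Real.zero_rpow (by linarith), zero_mul]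
    exact Set.indicator_nonneg (fun _ _ => zero_le_one) _

theorem logconc_affine {p : Eu n → ℝ} (hp : IsLogConcaveDensity p) (f : Eu n →ₗ[ℝ] Eu n)
    (a : Eu n) : IsLogConcaveDensity fun y => p (f y + a) := by
  refine ⟨fun y => hp.1 _, fun x y t h0 h1 => ?_⟩
  have h2 := hp.2 (f x + a) (f y + a) t h0 h1
  have e : t • (f x + a) + (1 - t) • (f y + a) = f (t • x + (1 - t) • y) + a := by
    rw [map_add, map_smul, map_smul]; module
  rwa [e] at h2

/-- Restricting a log-concave measure by a log-concave weight. -/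
theorem logconc_withDensity {μ : Measure (Eu n)} (hl : IsLogConcaveMeasure μ) {q : Eu n → ℝ}
    (hqm : Measurable q) (hq : IsLogConcaveDensity q) :
    IsLogConcaveMeasure (μ.withDensity fun x => ENNReal.ofReal (q x)) := by
  obtain ⟨p, hm, hp, rfl⟩ := hl
  refine ⟨fun x => p x * q x, by fun_prop, logconc_mul hp hq, ?_⟩
  rw [← withDensity_mul _ (by fun_prop) (by fun_prop)]
  congr 1
  ext x
  rw [Pi.mul_apply, ENNReal.ofReal_mul (hp.1 x)]

theorem concave_tlin {p : ℝ × Eu n} (hp : 0 ≤ p.1) :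
    ConcaveOn ℝ Set.univ fun x : Eu n => tlin x p := by
  have h1 : ConvexOn ℝ Set.univ fun x : Eu n => ‖x‖ ^ 2 :=
    (convexOn_univ_norm).pow (fun x _ => norm_nonneg x) 2
  have h2 : ConcaveOn ℝ Set.univ fun x : Eu n => inner ℝ p.2 x :=
    ((innerSL ℝ p.2).toLinearMap.concaveOn convex_univ)
  have h3 := h2.sub (h1.smul (c := p.1 / 2) (by positivity))
  refine h3.congr fun x _ => ?_
  simp only [Pi.sub_apply, smul_eq_mul, tlin_apply]
  rw [real_inner_comm]
  ring

/-- For `t ≥ 0` the weight `exp (⟪x, θ⟫ - t ‖x‖² / 2)` is log-concave. -/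
theorem tilt_logconcave {μ : Measure (Eu n)} (hl : IsLogConcaveMeasure μ) {p : ℝ × Eu n}
    (hp : 0 ≤ p.1) : IsLogConcaveMeasure (tilt μ p) := by
  unfold tilt Measure.tilted
  refine logconc_withDensity hl ?_ ?_
  · have := continuous_tlin_apply p
    fun_prop
  · simp only [div_eq_mul_inv]
    exact logconc_mul (logconc_exp (concave_tlin hp)) (logconc_const
      (inv_nonneg.2 (integral_nonneg fun x => by positivity)))

end KLS

/-! ### Standardization of compactly supported log-concave measures -/

section Standardization
set_option linter.unusedSectionVars false
open Matrix
variable {n : ℕ} {ν : Measure (Eu n)} [IsProbabilityMeasure ν] {R : ℝ}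

theorem logconc_map {ν : Measure (Eu n)} (hl : IsLogConcaveMeasure ν) (L : Eu n ≃ₗ[ℝ] Eu n)
    (a : Eu n) : IsLogConcaveMeasure (ν.map fun x => L (x - a)) := by
  obtain ⟨p, hm, hp, rfl⟩ := hl
  have hLc : Continuous (L : Eu n →ₗ[ℝ] Eu n) := LinearMap.continuous_of_finiteDimensional _
  have hLc' : Continuous (fun x => L x) := hLc
  have hSc : Continuous (L.symm : Eu n →ₗ[ℝ] Eu n) := LinearMap.continuous_of_finiteDimensional _
  have hSc' : Continuous (fun x => L.symm x) := hSc
  have hdet : LinearMap.det (L : Eu n →ₗ[ℝ] Eu n) ≠ 0 := L.isUnit_det'.ne_zero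
  have hφ : Measurable fun x : Eu n => L (x - a) := by fun_prop
  set d : ℝ := |(LinearMap.det (L : Eu n →ₗ[ℝ] Eu n))⁻¹| with hd
  have hvol : (volume : Measure (Eu n)).map (fun x => L (x - a)) = ENNReal.ofReal d • volume := by
    have h1 : (volume : Measure (Eu n)).map (fun x => x - a) = volume :=
      (measurePreserving_sub_right volume a).map_eq
    have h2 : (fun x : Eu n => L (x - a)) = (L : Eu n →ₗ[ℝ] Eu n) ∘ fun x => x - a := rfl
    rw [h2, ← Measure.map_map hLc.measurable (by fun_prop), h1,
      Measure.map_linearMap_addHaar_eq_smul_addHaar _ hdet]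
  refine ⟨fun y => d * p ((L.symm : Eu n →ₗ[ℝ] Eu n) y + a), ?_,
    logconc_mul (logconc_const (abs_nonneg _)) (logconc_affine hp _ a), ?_⟩
  · have := hSc.measurable
    fun_prop
  · ext s hs
    rw [Measure.map_apply hφ hs, withDensity_apply _ (hφ hs), withDensity_apply _ hs,
      ← lintegral_indicator (hφ hs), ← lintegral_indicator hs]
    have h3 : ∫⁻ y, s.indicator (fun y => ENNReal.ofReal (p (L.symm y + a))) y
        ∂((volume : Measure (Eu n)).map (fun x => L (x - a))) =
        ∫⁻ x, s.indicator (fun y => ENNReal.ofReal (p (L.symm y + a))) (L (x - a)) := by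
      refine lintegral_map (Measurable.indicator ?_ hs) hφ
      have := hSc'.measurable
      fun_prop
    have h4 : ∀ x, ((fun x => L (x - a)) ⁻¹' s).indicator (fun x => ENNReal.ofReal (p x)) x =
        s.indicator (fun y => ENNReal.ofReal (p (L.symm y + a))) (L (x - a)) := by
      intro x
      by_cases hx : L (x - a) ∈ s
      · rw [Set.indicator_of_mem hx, Set.indicator_of_mem (show x ∈ (fun x => L (x - a)) ⁻¹' s from hx)]
        simp
      · rw [Set.indicator_of_notMem hx, Set.indicator_of_notMem (show x ∉ (fun x => L (x - a)) ⁻¹' s from hx)]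
    simp only [h4]
    rw [← h3, hvol, lintegral_smul_measure, smul_eq_mul, ← lintegral_const_mul]
    · refine lintegral_congr fun y => ?_
      simp only [Set.indicator]
      split_ifs
      · rw [ENNReal.ofReal_mul (abs_nonneg _)]; rfl
      · simp
    · refine Measurable.indicator ?_ hs
      have := hSc'.measurable
      fun_prop

theorem logconc_ac (hl : IsLogConcaveMeasure ν) : ν ≪ volume := by
  obtain ⟨p, hm, hp, rfl⟩ := hl
  exact withDensity_absolutelyContinuous _ _

theorem covM_pos (hl : IsLogConcaveMeasure ν) (hR : ∀ᵐ x ∂ν, ‖x‖ ≤ R) {v : Fin n → ℝ}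
    (hv : v ≠ 0) : 0 < v ⬝ᵥ covM ν *ᵥ v := by
  rw [covM_quad hR]
  have hc : Continuous fun x => (ctr ν x ⬝ᵥ v) * (ctr ν x ⬝ᵥ v) := by
    have := continuous_ctr (ν := ν)
    fun_prop
  have h0 : 0 ≤ ∫ x, (ctr ν x ⬝ᵥ v) * (ctr ν x ⬝ᵥ v) ∂ν :=
    integral_nonneg fun x => mul_self_nonneg _
  refine lt_of_le_of_ne h0 fun h => ?_
  have h1 := (integral_eq_zero_iff_of_nonneg (fun x => mul_self_nonneg _)
    (integrable_of_cont hc hR)).1 h.symm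
  set w : Eu n := WithLp.toLp 2 v
  set H : Submodule ℝ (Eu n) := LinearMap.ker (innerSL ℝ w).toLinearMap with hH
  have hH0 : volume (H : Set (Eu n)) = 0 := by
    refine Measure.addHaar_submodule _ _ fun htop => ?_
    have h2 : w ∈ H := htop ▸ Submodule.mem_top
    rw [hH, LinearMap.mem_ker] at h2
    have h3 : w = 0 := by simpa using h2
    exact hv (by simpa [w] using h3)
  have hs : volume {x : Eu n | x - WithLp.toLp 2 (bar ν) ∈ H} = 0 := by
    have := (measurePreserving_sub_right (volume : Measure (Eu n)) (WithLp.toLp 2 (bar ν))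
      ).measure_preimage (s := (H : Set (Eu n)))
      (H.closed_of_finiteDimensional.measurableSet.nullMeasurableSet)
    rw [hH0] at this
    exact this
  have h2 := logconc_ac hl hs
  have h3 : ∀ᵐ x ∂ν, x ∈ {x : Eu n | x - WithLp.toLp 2 (bar ν) ∈ H} := by
    filter_upwards [h1] with x hx
    have h4 : ctr ν x ⬝ᵥ v = 0 := by simpa using hx
    show x - WithLp.toLp 2 (bar ν) ∈ H
    rw [hH, LinearMap.mem_ker]
    simp only [ContinuousLinearMap.coe_coe, innerSL_apply_apply]
    rw [PiLp.inner_apply]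
    simpa [dotProduct, ctr, w] using h4
  have h4 : ν Set.univ = 0 := by
    have h5 : ν {x : Eu n | x - WithLp.toLp 2 (bar ν) ∈ H}ᶜ = 0 := h3
    have := measure_union_null h2 h5
    rwa [Set.union_compl_self] at this
  simp at h4

/-- A compactly supported log-concave measure is an affine image of an isotropic one. -/
theorem exists_standardization (hl : IsLogConcaveMeasure ν) (hR : ∀ᵐ x ∂ν, ‖x‖ ≤ R) :
    ∃ (C : Matrix (Fin n) (Fin n) ℝ) (φ : Eu n → Eu n), Continuous φ ∧ covM ν = Cᵀ * C ∧
      (∀ x, Cᵀ *ᵥ (φ x).ofLp = ctr ν x) ∧ IsLogConcaveMeasure (ν.map φ) ∧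
      IsIsotropicMeasure (ν.map φ) ∧ ∃ R', ∀ᵐ y ∂(ν.map φ), ‖y‖ ≤ R' := by
  have hpsd : (covM ν).PosDef := by
    refine Matrix.PosDef.of_dotProduct_mulVec_pos ?_ ?_
    · show (covM ν)ᴴ = _
      rw [conjTranspose_eq_transpose_of_trivial, covM_symm]
    · intro v hv
      simpa using covM_pos hl hR hv
  obtain ⟨C, hC⟩ : ∃ C : Matrix (Fin n) (Fin n) ℝ, covM ν = Cᴴ * C := by
    open scoped MatrixOrder in
    exact CStarAlgebra.nonneg_iff_eq_star_mul_self.mp hpsd.posSemidef.nonneg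
  rw [conjTranspose_eq_transpose_of_trivial] at hC
  have hdet : IsUnit (Cᵀ).det := by
    have h1 := hpsd.det_pos
    rw [hC, Matrix.det_mul] at h1
    exact (left_ne_zero_of_mul h1.ne').isUnit
  set D := (Cᵀ)⁻¹ with hD
  have hDC : D * Cᵀ = 1 := Matrix.nonsing_inv_mul _ hdet
  have hCD : Cᵀ * D = 1 := Matrix.mul_nonsing_inv _ hdet
  let L : Eu n ≃ₗ[ℝ] Eu n := LinearEquiv.ofLinearMap (Matrix.toEuclideanLin D)
    (Matrix.toEuclideanLin Cᵀ)
    (by ext x i; simp [Matrix.toLpLin_apply, hDC])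
    (by ext x i; simp [Matrix.toLpLin_apply, hCD])
  have hL : ∀ x, (L (x - WithLp.toLp 2 (bar ν))).ofLp = D *ᵥ ctr ν x := by
    intro x
    show (Matrix.toEuclideanLin D (x - WithLp.toLp 2 (bar ν))).ofLp = _
    rw [Matrix.toLpLin_apply]
    rfl
  have hLi : ∀ x i, (L (x - WithLp.toLp 2 (bar ν))) i = ctr ν x ⬝ᵥ D i := by
    intro x i
    rw [hL, dotProduct_comm]; rfl
  have hφc : Continuous fun x => L (x - WithLp.toLp 2 (bar ν)) := by
    have hLc : Continuous (L : Eu n →ₗ[ℝ] Eu n) := LinearMap.continuous_of_finiteDimensional _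
    have hLc' : Continuous (fun x => L x) := hLc
    fun_prop
  refine ⟨C, fun x => L (x - WithLp.toLp 2 (bar ν)), hφc, hC, fun x => ?_, logconc_map hl L _,
    ⟨fun i => ?_, fun i j => ?_⟩, ?_⟩
  · rw [hL, Matrix.mulVec_mulVec, hCD, Matrix.one_mulVec]
  · rw [integral_map hφc.aemeasurable (by fun_prop)]
    simp only [hLi]
    exact dot_ctr_integral hR _
  · rw [integral_map hφc.aemeasurable (by fun_prop)]
    simp only [hLi]
    rw [← covM_quad hR, hC]
    have h1 : D i ⬝ᵥ (Cᵀ * C) *ᵥ D j = (D * (Cᵀ * C) * Dᵀ) i j := by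
      rw [Matrix.mul_assoc, Matrix.mul_apply', ]
      congr 1
    rw [h1]
    have h2 : D * (Cᵀ * C) * Dᵀ = 1 := by
      rw [← Matrix.mul_assoc, hDC, Matrix.one_mul]
      have := congrArg Matrix.transpose hDC
      rwa [Matrix.transpose_mul, Matrix.transpose_transpose, Matrix.transpose_one] at this
    rw [h2, Matrix.one_apply]
  · obtain ⟨C', -, hC'⟩ := exists_bound_ball hφc hR
    exact ⟨C', (ae_map_iff hφc.aemeasurable (measurableSet_le (by fun_prop) (by fun_prop))).2 hC'⟩

theorem dot_le_norm (u : Fin n → ℝ) (h : Eu n) : |u ⬝ᵥ h.ofLp| ≤ √(u ⬝ᵥ u) * ‖h‖ := by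
  have h1 := abs_real_inner_le_norm (WithLp.toLp 2 u) h
  rw [PiLp.inner_apply] at h1
  have h2 : ‖(WithLp.toLp 2 u : Eu n)‖ = √(u ⬝ᵥ u) := by
    rw [EuclideanSpace.norm_eq]
    congr 1
    simp [dotProduct, pow_two]
  rw [h2] at h1
  simpa [dotProduct, mul_comm] using h1

/-- Apply the Poincaré inequality to a quadratic form of the isotropic image of `ν`, and transport it
back; the linear map costs a factor given by the covariance. -/
theorem quadPoincare_KLS (hn : 0 < n) (hl : IsLogConcaveMeasure ν) (hR : ∀ᵐ x ∂ν, ‖x‖ ≤ R) :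
    QuadPoincare ν (KLSConst n) := by
  intro M hM κ hκ hcov
  obtain ⟨C, φ, hφ, hC, hCφ, hl', hi', R', hR'⟩ := exists_standardization hl hR
  have : IsProbabilityMeasure (ν.map φ) := Measure.isProbabilityMeasure_map hφ.aemeasurable
  set f : Eu n → ℝ := fun y => (Cᵀ *ᵥ y.ofLp) ⬝ᵥ M *ᵥ (Cᵀ *ᵥ y.ofLp) with hf
  have hfc : ContDiff ℝ 2 f := by
    simp only [hf, dotProduct, mulVec]
    fun_prop
  have hgrad : ∀ y : Eu n, ‖gradient f y‖ ^ 2 ≤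
      4 * κ * ((M *ᵥ (Cᵀ *ᵥ y.ofLp)) ⬝ᵥ (M *ᵥ (Cᵀ *ᵥ y.ofLp))) := by
    intro y
    rw [norm_gradient_eq]
    set u := M *ᵥ (Cᵀ *ᵥ y.ofLp) with hu
    have hder : ∀ h : Eu n, fderiv ℝ f y h = 2 * ((C *ᵥ u) ⬝ᵥ h.ofLp) := by
      intro h
      have h1 := hasDerivAt_comp_line hfc y h 0
      have h2 : ∀ s : ℝ, f (y + s • h) = f y + s * (2 * ((C *ᵥ u) ⬝ᵥ h.ofLp)) + s ^ 2 * f h := by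
        intro s
        have e1 : (C *ᵥ u) ⬝ᵥ h.ofLp = (Cᵀ *ᵥ h.ofLp) ⬝ᵥ M *ᵥ (Cᵀ *ᵥ y.ofLp) := by
          rw [dotProduct_comm, dotProduct_mulVec, ← mulVec_transpose]
        have e2 : (Cᵀ *ᵥ y.ofLp) ⬝ᵥ M *ᵥ (Cᵀ *ᵥ h.ofLp) =
            (Cᵀ *ᵥ h.ofLp) ⬝ᵥ M *ᵥ (Cᵀ *ᵥ y.ofLp) := by
          rw [dotProduct_mulVec, ← mulVec_transpose, hM, dotProduct_comm]
        rw [e1]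
        simp only [hf, WithLp.ofLp_add, WithLp.ofLp_smul, mulVec_add, mulVec_smul, add_dotProduct,
          dotProduct_add, smul_dotProduct, dotProduct_smul, smul_eq_mul, e2]
        ring
      simp only [h2] at h1
      have h3 : HasDerivAt (fun s : ℝ => f y + s * (2 * ((C *ᵥ u) ⬝ᵥ h.ofLp)) + s ^ 2 * f h)
          (2 * ((C *ᵥ u) ⬝ᵥ h.ofLp)) 0 := by
        have := (((hasDerivAt_id (0 : ℝ)).mul_const (2 * ((C *ᵥ u) ⬝ᵥ h.ofLp))).const_add
          (f y)).add (((hasDerivAt_pow 2 (0 : ℝ)).mul_const (f h)))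
        refine this.congr_deriv ?_
        simp
      have := h1.unique h3
      simpa using this
    have hCu : (C *ᵥ u) ⬝ᵥ (C *ᵥ u) ≤ κ * (u ⬝ᵥ u) := by
      have := hcov u
      rwa [hC, ← Matrix.mulVec_mulVec, dotProduct_mulVec, ← mulVec_transpose,
        transpose_transpose] at this
    have hnn : 0 ≤ u ⬝ᵥ u := by simpa using dotProduct_star_self_nonneg u
    have hb : ‖fderiv ℝ f y‖ ≤ 2 * √(κ * (u ⬝ᵥ u)) := by
      refine ContinuousLinearMap.opNorm_le_bound _ (by positivity) fun h => ?_
      rw [hder, Real.norm_eq_abs, abs_mul, abs_two, mul_assoc]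
      refine mul_le_mul_of_nonneg_left ?_ zero_le_two
      exact (dot_le_norm _ h).trans
        (mul_le_mul_of_nonneg_right (Real.sqrt_le_sqrt hCu) (norm_nonneg h))
    calc ‖fderiv ℝ f y‖ ^ 2 ≤ (2 * √(κ * (u ⬝ᵥ u))) ^ 2 :=
          pow_le_pow_left₀ (norm_nonneg _) hb 2
      _ = 4 * κ * (u ⬝ᵥ u) := by rw [mul_pow, Real.sq_sqrt (by positivity)]; ring
  have hP := KLS_poincare hn hl' hi' hR' (f := f) (hfc.of_le (by norm_num) : ContDiff ℝ 1 f).locallyLipschitz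
  set c := ∫ y, f y ∂(ν.map φ) with hc
  refine ⟨c, ?_⟩
  have hfcont := hfc.continuous
  rw [integral_map hφ.aemeasurable (by fun_prop)] at hP
  simp only [hf, hCφ] at hP
  refine hP.trans ?_
  have hcq : Continuous fun y : Eu n =>
      4 * κ * ((M *ᵥ (Cᵀ *ᵥ y.ofLp)) ⬝ᵥ (M *ᵥ (Cᵀ *ᵥ y.ofLp))) := by
    simp only [dotProduct, mulVec]; fun_prop
  have h5 : ∫ x, ‖gradient f x‖ ^ 2 ∂(ν.map φ) ≤
      ∫ y, 4 * κ * ((M *ᵥ (Cᵀ *ᵥ y.ofLp)) ⬝ᵥ (M *ᵥ (Cᵀ *ᵥ y.ofLp))) ∂(ν.map φ) :=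
    integral_mono_of_nonneg (ae_of_all _ fun x => by positivity) (integrable_of_cont hcq hR')
      (ae_of_all _ hgrad)
  rw [integral_map hφ.aemeasurable hcq.aestronglyMeasurable] at h5
  simp only [hCφ] at h5
  rw [integral_const_mul] at h5
  calc _ ≤ KLSConst n ^ 2 * (4 * κ * ∫ x, (M *ᵥ ctr ν x) ⬝ᵥ (M *ᵥ ctr ν x) ∂ν) :=
        mul_le_mul_of_nonneg_left h5 (sq_nonneg _)
    _ = _ := by ring

/-- Coordinate functions of an isotropic vector have variance one and gradient of norm one. -/
theorem one_le_KLS (hn : 0 < n) (hl : IsLogConcaveMeasure ν) (hR : ∀ᵐ x ∂ν, ‖x‖ ≤ R) :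
    1 ≤ KLSConst n := by
  obtain ⟨C, φ, hφ, hC, hCφ, hl', hi', R', hR'⟩ := exists_standardization hl hR
  have : IsProbabilityMeasure (ν.map φ) := Measure.isProbabilityMeasure_map hφ.aemeasurable
  set i : Fin n := ⟨0, hn⟩
  have hfc : ContDiff ℝ 1 fun y : Eu n => y i := by fun_prop
  have hP := KLS_poincare hn hl' hi' hR' hfc.locallyLipschitz
  have h1 := hi'.2 i i
  simp only [hi'.1 i, sub_zero, pow_two (_ : ℝ)] at hP
  rw [h1, if_pos rfl] at hP
  have h2 : ∀ y, ‖gradient (fun y : Eu n => y i) y‖ * ‖gradient (fun y : Eu n => y i) y‖ ≤ 1 := by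
    intro y
    rw [norm_gradient_eq]
    have h3 : ‖fderiv ℝ (fun y : Eu n => y i) y‖ ≤ 1 := by
      have h4 : fderiv ℝ (fun y : Eu n => y i) y = EuclideanSpace.proj i :=
        (EuclideanSpace.proj (𝕜 := ℝ) i : Eu n →L[ℝ] ℝ).hasFDerivAt.fderiv
      rw [h4]
      refine ContinuousLinearMap.opNorm_le_bound _ zero_le_one fun h => ?_
      rw [one_mul]
      exact PiLp.norm_apply_le h i
    nlinarith [norm_nonneg (fderiv ℝ (fun y : Eu n => y i) y)]
  have h5 : ∫ x, ‖gradient (fun y : Eu n => y i) x‖ * ‖gradient (fun y : Eu n => y i) x‖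
      ∂(ν.map φ) ≤ 1 := by
    have := integral_mono_of_nonneg (μ := ν.map φ) (ae_of_all _ fun x => mul_self_nonneg _)
      (integrable_const (1 : ℝ)) (ae_of_all _ h2)
    simpa using this
  have h6 := KLSConst_nonneg n
  nlinarith [mul_self_nonneg (KLSConst n)]

end Standardization

/-! ### Hessian estimates along the localization -/

section Hessian
set_option linter.unusedSectionVars false
open Matrix
variable {n : ℕ} {μ : Measure (Eu n)} [IsProbabilityMeasure μ] {R : ℝ}

/-- A positive semidefinite form is a sum of squares. -/
theorem exists_sum_sq (H : Eu n →L[ℝ] Eu n →L[ℝ] ℝ) (hH : ∀ x, 0 ≤ H x x) :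
    ∃ C : Matrix (Fin n) (Fin n) ℝ, ∀ x : Eu n, H x x = (C *ᵥ x.ofLp) ⬝ᵥ (C *ᵥ x.ofLp) := by
  set e : Fin n → Eu n := fun i => EuclideanSpace.single i (1 : ℝ) with he
  -- the symmetrized matrix of the form
  set h : Matrix (Fin n) (Fin n) ℝ := Matrix.of fun i j => (H (e i) (e j) + H (e j) (e i)) / 2
    with hh
  have hq : ∀ x : Eu n, H x x = x.ofLp ⬝ᵥ h *ᵥ x.ofLp := by
    intro x
    have hx : x = ∑ i, x i • e i := (sum_basis_smul x).symm
    have h1 : H x x = ∑ i, ∑ j, x i * x j * H (e i) (e j) := by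
      conv_lhs => rw [hx]
      simp only [map_sum, map_smul, _root_.sum_apply, _root_.smul_apply,
        smul_eq_mul, Finset.mul_sum]
      rw [Finset.sum_comm]
      refine Finset.sum_congr rfl fun i _ => Finset.sum_congr rfl fun j _ => by ring
    have h2 : H x x = ∑ i, ∑ j, x i * x j * H (e j) (e i) := by
      rw [h1, Finset.sum_comm]
      refine Finset.sum_congr rfl fun i _ => Finset.sum_congr rfl fun j _ => by ring
    have h3 : x.ofLp ⬝ᵥ h *ᵥ x.ofLp = (H x x + H x x) / 2 := by
      nth_rewrite 1 [h1]
      rw [h2, ← Finset.sum_add_distrib, Finset.sum_div]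
      simp only [dotProduct, mulVec, ← Finset.sum_add_distrib, Finset.sum_div, Finset.mul_sum, hh,
        Matrix.of_apply]
      refine Finset.sum_congr rfl fun i _ => Finset.sum_congr rfl fun j _ => by ring
    rw [h3]; ring
  have hpsd : h.PosSemidef := by
    refine Matrix.PosSemidef.of_dotProduct_mulVec_nonneg ?_ ?_
    · show hᴴ = h
      ext i j
      simp [hh, add_comm]
    · intro v
      have := hH (WithLp.toLp 2 v)
      rw [hq] at this
      simpa using this
  obtain ⟨C, hC⟩ : ∃ C : Matrix (Fin n) (Fin n) ℝ, h = Cᴴ * C := by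
    open scoped MatrixOrder in
    exact CStarAlgebra.nonneg_iff_eq_star_mul_self.mp hpsd.nonneg
  refine ⟨C, fun x => ?_⟩
  rw [hq, hC, conjTranspose_eq_transpose_of_trivial, ← Matrix.mulVec_mulVec, dotProduct_mulVec,
    ← mulVec_transpose, transpose_transpose]

/-- Both the trace of a positive semidefinite form and its sum over the rows of a symmetric
matrix, expanded over common vectors. -/
theorem exists_rows (H : Eu n →L[ℝ] Eu n →L[ℝ] ℝ) (hH : ∀ x, 0 ≤ H x x)
    {A : Matrix (Fin n) (Fin n) ℝ} (r : ℝ) :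
    ∃ c : Fin n → Fin n → ℝ,
      ∑ i, H (EuclideanSpace.single i 1) (EuclideanSpace.single i 1) = ∑ k, c k ⬝ᵥ c k ∧
      ∑ i, H (WithLp.toLp 2 (r • A i)) (WithLp.toLp 2 (r • A i)) =
        r ^ 2 * ∑ k, (A *ᵥ c k) ⬝ᵥ (A *ᵥ c k) := by
  obtain ⟨C, hC⟩ := exists_sum_sq H hH
  refine ⟨fun k => C k, ?_, ?_⟩
  · simp only [hC, PiLp.ofLp_single, mulVec_single_one]
    simp only [dotProduct, Matrix.col_apply]
    exact Finset.sum_comm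
  · simp only [hC, mulVec_smul, dotProduct_smul, smul_dotProduct, smul_eq_mul]
    rw [Finset.mul_sum]
    simp only [dotProduct, mulVec, Finset.mul_sum]
    rw [Finset.sum_comm]
    refine Finset.sum_congr rfl fun k _ => Finset.sum_congr rfl fun i _ => ?_
    simp only [← Finset.mul_sum]
    have : ∑ j, C k j * A i j = ∑ j, A i j * C k j :=
      Finset.sum_congr rfl fun j _ => mul_comm _ _
    rw [this]; ring

theorem tCov_smul (hR : ∀ᵐ x ∂μ, ‖x‖ ≤ R) (r : ℝ) (i : Fin n) (p : ℝ × Eu n) :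
    tCov μ (fun x => r • x) i p = WithLp.toLp 2 (r • covM (tilt μ p) i) := by
  have := isProbabilityMeasure_tilt hR p
  have hR' := tilt_ae hR p
  ext j
  have h1 : ∀ k : Eu n → Eu n, Continuous k →
      (∫ x, k x ∂(tilt μ p)) j = ∫ x, k x j ∂(tilt μ p) := by
    intro k hk
    exact ((EuclideanSpace.proj (𝕜 := ℝ) j : Eu n →L[ℝ] ℝ).integral_comp_comm
      (integrable_of_cont hk hR')).symm
  simp only [tCov, tE_eq, PiLp.sub_apply, PiLp.smul_apply, Pi.smul_apply]
  rw [h1 _ (by fun_prop), h1 _ (by fun_prop), covM_expand hR']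
  simp only [PiLp.smul_apply, smul_eq_mul, bar]
  rw [mul_sub, integral_const_mul r fun x : Eu n => x j,
    ← integral_const_mul r fun x : Eu n => x i * x j]
  congr 1
  · refine integral_congr_ae (.of_forall fun x => ?_)
    simp only
    ring
  · ring

theorem covM_second {ν : Measure (Eu n)} [IsProbabilityMeasure ν] (hR : ∀ᵐ x ∂ν, ‖x‖ ≤ R)
    (v : Fin n → ℝ) :
    v ⬝ᵥ covM ν *ᵥ v = ∫ x, (v ⬝ᵥ x.ofLp) ^ 2 ∂ν - (v ⬝ᵥ bar ν) ^ 2 := by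
  rw [covM_quad hR]
  have hcx : Continuous fun x : Eu n => v ⬝ᵥ x.ofLp := by
    simp only [dotProduct]; fun_prop
  have hi := integrable_of_cont (ν := ν) hcx hR
  have e0 : ∀ x, ctr ν x ⬝ᵥ v = v ⬝ᵥ x.ofLp - v ⬝ᵥ bar ν := fun x => by
    rw [← dotProduct_sub, dotProduct_comm]; rfl
  have hb : ∫ x, v ⬝ᵥ x.ofLp ∂ν = v ⬝ᵥ bar ν := by
    have h := dot_ctr_integral hR v
    simp only [e0] at h
    rw [integral_sub hi (integrable_const _)] at h
    simp at h
    linarith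
  have e : ∀ x, (ctr ν x ⬝ᵥ v) * (ctr ν x ⬝ᵥ v) =
      ((v ⬝ᵥ x.ofLp) ^ 2 - (2 * (v ⬝ᵥ bar ν)) * (v ⬝ᵥ x.ofLp)) + (v ⬝ᵥ bar ν) ^ 2 := fun x => by
    rw [e0]; ring
  have hi2 := integrable_of_cont (ν := ν) (hcx.fun_pow 2) hR
  simp only [e]
  rw [integral_add (int_sub hi2 (hi.const_mul _)) (integrable_const _),
    integral_sub hi2 (hi.const_mul _), integral_const_mul, hb]
  simp
  ring

theorem dot_sq_le (v : Fin n → ℝ) (x : Eu n) : (v ⬝ᵥ x.ofLp) ^ 2 ≤ v ⬝ᵥ v * ‖x‖ ^ 2 := by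
  have hv : 0 ≤ v ⬝ᵥ v := by simpa using dotProduct_star_self_nonneg v
  have h := pow_le_pow_left₀ (abs_nonneg _) (dot_le_norm v x) 2
  rwa [sq_abs, mul_pow, Real.sq_sqrt hv] at h

theorem covM_le_ball {ν : Measure (Eu n)} [IsProbabilityMeasure ν] (hR : ∀ᵐ x ∂ν, ‖x‖ ≤ R)
    (v : Fin n → ℝ) : v ⬝ᵥ covM ν *ᵥ v ≤ R ^ 2 * (v ⬝ᵥ v) := by
  have hv : 0 ≤ v ⬝ᵥ v := by simpa using dotProduct_star_self_nonneg v
  have hcx : Continuous fun x : Eu n => v ⬝ᵥ x.ofLp := by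
    simp only [dotProduct]; fun_prop
  have h1 : ∫ x, (v ⬝ᵥ x.ofLp) ^ 2 ∂ν ≤ R ^ 2 * (v ⬝ᵥ v) := by
    have := integral_mono_ae (integrable_of_cont (ν := ν) (hcx.fun_pow 2) hR)
      (integrable_const (R ^ 2 * (v ⬝ᵥ v))) (by
        filter_upwards [hR] with x hx
        have h4 : ‖x‖ ^ 2 ≤ R ^ 2 := pow_le_pow_left₀ (norm_nonneg x) hx 2
        have h5 := mul_le_mul_of_nonneg_left h4 hv
        have := dot_sq_le v x
        linarith)
    simpa using this
  rw [covM_second hR]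
  linarith [sq_nonneg (v ⬝ᵥ bar ν)]

/-- The bounded potential as a function of the localization parameters. -/
def potU (μ : Measure (Eu n)) (q : ℕ) (η M : ℝ) (p : ℝ × Eu n) : ℝ :=
  potV (covM μ) q η M (tE μ momK p)

theorem potU_nonneg {q : ℕ} (hq : Even q) {η M : ℝ} (hη : 0 ≤ η) (hM : η < M) (p : ℝ × Eu n) :
    0 ≤ potU μ q η M p := by
  have h1 := potG_nonneg covM_symm hq (tE μ momK p) (S := covM μ)
  have : 0 < M := by linarith
  unfold potU potV
  positivity

/-- If the bounded potential is below `1 / 2`, then `Γ ≤ M`. -/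
theorem pot_lt_of_potU {q : ℕ} (hq : Even q) {η M : ℝ} (hη : 0 ≤ η) (hM : η < M) {p : ℝ × Eu n}
    (h : potU μ q η M p < 1 / 2) : potG (covM μ) q (tE μ momK p) ≤ M := by
  have h1 := potG_nonneg covM_symm hq (tE μ momK p) (S := covM μ)
  have hM0 : 0 < M := by linarith
  unfold potU potV at h
  rw [div_lt_iff₀ (by linarith)] at h
  linarith

/-- Where `Γ ≤ M = 4^(-q)` the covariance is at most `2 + 1/4 = 9/4`, whose square is `81/16`; elsewhere
the potential is at least `1/2`, and the covariance is at most `R²`. -/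
theorem hess_upper (hR : ∀ᵐ x ∂μ, ‖x‖ ≤ R)
    (hS2 : ∀ v : Fin n → ℝ, v ⬝ᵥ covM μ *ᵥ v ≤ 2 * (v ⬝ᵥ v)) {q : ℕ} (hq : Even q) (hq0 : q ≠ 0)
    {η : ℝ} (hη : 0 ≤ η) (hM : η < (1 / 4) ^ q) (p : ℝ × Eu n)
    (H : Eu n →L[ℝ] Eu n →L[ℝ] ℝ) (hH : ∀ x, 0 ≤ H x x) (r : ℝ) :
    ∑ i, H (tCov μ (fun x => r • x) i p) (tCov μ (fun x => r • x) i p) ≤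
      r ^ 2 * ((81 / 16 + 2 * R ^ 4 * potU μ q η ((1 / 4) ^ q) p) *
        ∑ i, H (EuclideanSpace.single i 1) (EuclideanSpace.single i 1)) := by
  have := isProbabilityMeasure_tilt hR p
  have hR' := tilt_ae hR p
  obtain ⟨c, hc1, hc2⟩ := exists_rows H hH (A := covM (tilt μ p)) r
  simp only [tCov_smul hR]
  rw [hc1, hc2]
  refine mul_le_mul_of_nonneg_left ?_ (sq_nonneg r)
  rw [Finset.mul_sum]
  refine (Finset.sum_le_sum fun k _ => ?_)
  have hk : 0 ≤ c k ⬝ᵥ c k := by simpa using dotProduct_star_self_nonneg (c k)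
  have hU := potU_nonneg (μ := μ) hq hη hM p
  rcases lt_or_ge (potU μ q η ((1 / 4) ^ q) p) (1 / 2) with h | h
  · have h1 := covM_le_of_pot hR covM_symm hq hq0 (by norm_num : (0 : ℝ) ≤ 1 / 4) p
      (pot_lt_of_potU hq hη hM h)
    have h2 := covM_sq_le hR' (by norm_num : (0 : ℝ) ≤ 9 / 4) (fun v => by
      have h3 := (abs_le.1 (h1 v)).2
      have h4 := hS2 v
      linarith) (c k)
    have h5 : 0 ≤ 2 * R ^ 4 * potU μ q η ((1 / 4) ^ q) p := by positivity
    nlinarith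
  · have h2 := covM_sq_le hR' (sq_nonneg R) (covM_le_ball hR') (c k)
    refine h2.trans (mul_le_mul_of_nonneg_right ?_ hk)
    have : 0 ≤ R ^ 4 := by positivity
    nlinarith

/-- Where `Γ ≤ M = 4^(-q)` the covariance is at least `3/4 - 1/4 = 1/2`; elsewhere the left-hand side is
non-positive, as the potential is at least `1/2`. -/
theorem hess_lower (hR : ∀ᵐ x ∂μ, ‖x‖ ≤ R)
    (hS : ∀ v : Fin n → ℝ, 3 / 4 * (v ⬝ᵥ v) ≤ v ⬝ᵥ covM μ *ᵥ v) {q : ℕ} (hq : Even q) (hq0 : q ≠ 0)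
    {η : ℝ} (hη : 0 ≤ η) (hM : η < (1 / 4) ^ q) (p : ℝ × Eu n)
    (H : Eu n →L[ℝ] Eu n →L[ℝ] ℝ) (hH : ∀ x, 0 ≤ H x x) (r : ℝ) :
    r ^ 2 * (1 / 4 * (1 - 2 * potU μ q η ((1 / 4) ^ q) p) *
        ∑ i, H (EuclideanSpace.single i 1) (EuclideanSpace.single i 1)) ≤
      ∑ i, H (tCov μ (fun x => r • x) i p) (tCov μ (fun x => r • x) i p) := by
  have := isProbabilityMeasure_tilt hR p
  obtain ⟨c, hc1, hc2⟩ := exists_rows H hH (A := covM (tilt μ p)) r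
  simp only [tCov_smul hR]
  rw [hc1, hc2]
  refine mul_le_mul_of_nonneg_left ?_ (sq_nonneg r)
  rw [Finset.mul_sum]
  refine (Finset.sum_le_sum fun k _ => ?_)
  have hk : 0 ≤ c k ⬝ᵥ c k := by simpa using dotProduct_star_self_nonneg (c k)
  have hU := potU_nonneg (μ := μ) hq hη hM p
  set w := covM (tilt μ p) *ᵥ c k with hw
  have hw0 : 0 ≤ w ⬝ᵥ w := by simpa using dotProduct_star_self_nonneg w
  rcases lt_or_ge (potU μ q η ((1 / 4) ^ q) p) (1 / 2) with h | h
  · have h1 := covM_le_of_pot hR covM_symm hq hq0 (by norm_num : (0 : ℝ) ≤ 1 / 4) p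
      (pot_lt_of_potU hq hη hM h) (c k)
    have h2 : 1 / 2 * (c k ⬝ᵥ c k) ≤ c k ⬝ᵥ w := by
      have h3 := (abs_le.1 h1).1
      have h4 := hS (c k)
      linarith
    -- `|w - c / 2|² ≥ 0`
    have h5 : 0 ≤ (w - (1 / 2 : ℝ) • c k) ⬝ᵥ (w - (1 / 2 : ℝ) • c k) := by
      simpa using dotProduct_star_self_nonneg (w - (1 / 2 : ℝ) • c k)
    simp only [sub_dotProduct, dotProduct_sub, smul_dotProduct, dotProduct_smul, smul_eq_mul,
      dotProduct_comm w (c k)] at h5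
    nlinarith
  · nlinarith

end Hessian

/-! ### Comparison for compactly supported measures -/

section Core
set_option linter.unusedSectionVars false
variable {n : ℕ} {μ : Measure (Eu n)} [IsProbabilityMeasure μ] {R : ℝ} {g : Eu n → ℝ}

theorem Em_one (hR : ∀ᵐ x ∂μ, ‖x‖ ≤ R) {t : ℝ} (ht : 0 ≤ t) : Em μ (fun _ => 1) t = 1 := by
  have h := Em_tE (μ := μ) hR (continuous_const (y := (1 : ℝ))) ht
  have e : ∀ p, tE μ (fun _ => (1 : ℝ)) p = 1 := by
    intro p
    have := isProbabilityMeasure_tilt hR p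
    rw [tE_eq]; simp
  simpa [e] using h

theorem tE_smul (r : ℝ) (p : ℝ × Eu n) :
    tE μ (fun x => r • x) p = r • tE μ (fun x => x) p := by
  rw [tE_eq, tE_eq, integral_smul]

theorem gauge_jensen (hg : IsGauge g) {ν : Measure (Eu n)} [IsProbabilityMeasure ν]
    (hR : ∀ᵐ x ∂ν, ‖x‖ ≤ R) {k : Eu n → Eu n} (hk : Continuous k) :
    g (∫ x, k x ∂ν) ≤ ∫ x, g (k x) ∂ν :=
  hg.2.1.map_integral_le hg.continuous.continuousOn isClosed_univ (ae_of_all _ fun _ => trivial)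
    (integrable_of_cont hk hR) (integrable_of_cont (hg.continuous.comp hk) hR)

/-- Fubini's theorem and the Cameron–Martin formula for averages along the localization: the
tilting parameter at time `t` is `t X + √t Z`, with `Z` Gaussian and independent of `X`. -/
theorem Em_fubini (hR : ∀ᵐ x ∂μ, ‖x‖ ≤ R) {F : Eu n → Eu n → ℝ}
    (hF : Continuous (Function.uncurry F)) {D a : ℝ}
    (hb : ∀ x z, ‖x‖ ≤ R → |F x z| ≤ D * Real.exp (a * ‖z‖)) {t : ℝ} (ht : 0 ≤ t) :
    Integrable (fun z => tl μ (fun x => F x z) (t, √t • z)) (stdGaussian n) ∧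
    ∫ z, tl μ (fun x => F x z) (t, √t • z) ∂(stdGaussian n) =
      ∫ x, (∫ z, F x (z + √t • x) ∂(stdGaussian n)) ∂μ := by
  have e1 : ∀ z : Eu n, tl μ (fun x => F x z) (t, √t • z) = ∫ x, Real.exp
      (⟪√t • x, z⟫ - ‖√t • x‖ ^ 2 / 2) * F x z ∂μ := by
    intro z
    rw [tl]
    refine integral_congr_ae (.of_forall fun x => ?_)
    simp only [tlin_apply, smul_eq_mul, inner_smul_right, inner_smul_left, norm_smul, mul_pow,
      Real.norm_of_nonneg (Real.sqrt_nonneg t), Real.sq_sqrt ht]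
    simp only [conj_trivial]
    ring_nf
  have hF' : Continuous fun q : Eu n × Eu n => F q.2 q.1 := by
    have : (fun q : Eu n × Eu n => F q.2 q.1) = Function.uncurry F ∘ Prod.swap := rfl
    rw [this]; exact hF.comp continuous_swap
  have h_grad : Integrable (Function.uncurry fun (z x : Eu n) =>
      Real.exp (⟪√t • x, z⟫ - ‖√t • x‖ ^ 2 / 2) * F x z) ((stdGaussian n).prod μ) := by
    have hc : Continuous (Function.uncurry fun (z x : Eu n) =>
        Real.exp (⟪√t • x, z⟫ - ‖√t • x‖ ^ 2 / 2) * F x z) := by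
      unfold Function.uncurry; fun_prop
    refine Integrable.mono' (g := fun q : Eu n × Eu n => Real.exp ((√t * R + a) * ‖q.1‖) * D)
      ((integrable_exp_norm_gauss (n := n) (√t * R + a)).mul_prod (integrable_const (μ := μ) D))
      hc.aestronglyMeasurable ?_
    have h3 : ∀ᵐ q ∂((stdGaussian n).prod μ), ‖q.2‖ ≤ R :=
      Measure.quasiMeasurePreserving_snd.ae hR
    filter_upwards [h3] with q hq
    rw [Function.uncurry, norm_mul, Real.norm_of_nonneg (Real.exp_nonneg _), add_mul, Real.exp_add,
      mul_assoc, mul_comm _ D]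
    refine mul_le_mul (Real.exp_le_exp.2 ?_) (hb _ _ hq) (norm_nonneg _) (Real.exp_nonneg _)
    have h4 := real_inner_le_norm (√t • q.2) q.1
    rw [norm_smul, Real.norm_of_nonneg (Real.sqrt_nonneg t)] at h4
    have h5 : √t * ‖q.2‖ * ‖q.1‖ ≤ √t * R * ‖q.1‖ := by gcongr
    have : 0 ≤ ‖√t • q.2‖ ^ 2 / 2 := by positivity
    linarith
  simp only [e1]
  refine ⟨h_grad.integral_prod_left, ?_⟩
  rw [integral_integral_swap h_grad]
  refine integral_congr_ae (.of_forall fun x => ?_)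
  have h2 := gauss_shift (n := n) (v := √t • x) (h := fun z => F x z)
  simp only [smul_eq_mul] at h2
  exact h2.symm

/-- Conditionally on the tilting parameter, `X` differs from its mean by a rescaled Gaussian
fluctuation. -/
theorem compare_mean (hg : IsGauge g) (hR : ∀ᵐ x ∂μ, ‖x‖ ≤ R) (hR0 : 0 ≤ R) {t : ℝ} (ht : 0 < t) :
    ∫ x, g x ∂μ ≤ Em μ (fun p => g (tE μ (fun x => x) p)) t +
      2 * (√t)⁻¹ * ∫ y, g y ∂(stdGaussian n) := by
  have hgc := hg.continuous
  obtain ⟨b, hb0, hb⟩ := hg.exists_bound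
  set s := √t with hs
  have hs0 : 0 < s := Real.sqrt_pos.2 ht
  set F : Eu n → Eu n → ℝ := fun x z => g (x - s⁻¹ • z) + g (s⁻¹ • z - x) with hFdef
  have hFc : Continuous (Function.uncurry F) := by
    unfold Function.uncurry; simp only [hFdef]; fun_prop
  have hFb : ∀ x z, ‖x‖ ≤ R → |F x z| ≤ (2 * b * (R + s⁻¹)) * Real.exp (1 * ‖z‖) := by
    intro x z hx
    simp only [hFdef]
    rw [abs_of_nonneg (add_nonneg (hg.1 _) (hg.1 _)), one_mul]
    have h1 : ‖x - s⁻¹ • z‖ ≤ R + s⁻¹ * ‖z‖ := by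
      refine (norm_sub_le _ _).trans ?_
      rw [norm_smul, Real.norm_of_nonneg (inv_nonneg.2 hs0.le)]
      linarith
    have h2 : ‖s⁻¹ • z - x‖ ≤ R + s⁻¹ * ‖z‖ := by rwa [norm_sub_rev]
    have h3 : R + s⁻¹ * ‖z‖ ≤ (R + s⁻¹) * Real.exp ‖z‖ := by
      have h4 := norm_le_exp_norm z
      have h5 : 1 ≤ Real.exp ‖z‖ := Real.one_le_exp (norm_nonneg z)
      have h6 : 0 ≤ s⁻¹ := inv_nonneg.2 hs0.le
      nlinarith
    have h4 := (hb _).trans (mul_le_mul_of_nonneg_left (h1.trans h3) hb0)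
    have h5 := (hb _).trans (mul_le_mul_of_nonneg_left (h2.trans h3) hb0)
    nlinarith
  obtain ⟨hI, hE⟩ := Em_fubini hR hFc hFb ht.le
  have hm : ∀ x, ∫ z, F x (z + √t • x) ∂(stdGaussian n) =
      2 * (√t)⁻¹ * ∫ y, g y ∂(stdGaussian n) := by
    intro x
    have e : ∀ z, F x (z + √t • x) = s⁻¹ * g (-z) + s⁻¹ * g z := by
      intro z
      have e0 : s⁻¹ • (z + s • x) = s⁻¹ • z + x := by
        rw [smul_add, smul_smul, inv_mul_cancel₀ hs0.ne', one_smul]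
      have e1 : x - s⁻¹ • (z + s • x) = s⁻¹ • (-z) := by
        rw [e0, smul_neg]; abel
      have e2 : s⁻¹ • (z + s • x) - x = s⁻¹ • z := by
        rw [e0]; abel
      simp only [hFdef]
      rw [← hs, e1, e2, hg.2.2 _ (inv_nonneg.2 hs0.le), hg.2.2 _ (inv_nonneg.2 hs0.le)]
    simp only [e]
    have hneg : Integrable (fun z => g (-z)) (stdGaussian n) := by
      refine integrable_gauss_of_poly (Continuous.aestronglyMeasurable (by fun_prop)) hb0 (k := 1)
        fun x => ?_
      rw [Real.norm_of_nonneg (hg.1 _), pow_one]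
      simpa using hb (-x)
    rw [integral_add (hneg.const_mul _) (hg.integrable.const_mul _), integral_const_mul,
      integral_const_mul, gauss_neg]
    ring
  simp only [hm] at hE
  simp only [integral_const, probReal_univ, one_smul] at hE
  rw [← hE, ← Em_tE hR hgc ht.le]
  have hac := tE_continuous (μ := μ) (continuous_id' (X := Eu n)) hR
  obtain ⟨Ca, -, hCa⟩ := exists_bound_comp_tE (μ := μ) hgc (continuous_id' (X := Eu n)) hR
  obtain ⟨Cg, -, hCg⟩ := exists_bound_ball (μ := μ) hgc hR
  have hI1 := Em_integrable (μ := μ) hR (f := fun p => g (tE μ (fun x => x) p)) (hgc.comp hac) hCa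
    ht.le
  have hI2 := Em_integrable (μ := μ) hR (f := fun p => tE μ g p) (tE_continuous hgc hR)
    (fun p => norm_tE_le hR hCg p) ht.le
  unfold Em
  rw [← integral_add hI1 hI]
  refine integral_mono hI2 (int_add hI1 hI) fun z => ?_
  simp only
  set p : ℝ × Eu n := (t, √t • z) with hp
  have hprob := isProbabilityMeasure_tilt hR p
  have hR' := tilt_ae hR p
  have hFz : Continuous fun x => F x z := by simp only [hFdef]; fun_prop
  rw [← tZ_smul_tE hR (k := fun x => F x z), smul_eq_mul, ← mul_add]
  refine mul_le_mul_of_nonneg_left ?_ (tZ_pos hR p).le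
  rw [tE_eq, tE_eq, tE_eq]
  set av := ∫ x, x ∂(tilt μ p) with hav
  set c : Eu n := s⁻¹ • z with hc
  have hi1 : Integrable (fun x => g (x - c)) (tilt μ p) := integrable_of_cont (by fun_prop) hR'
  have hi2 : Integrable (fun x => g (c - x)) (tilt μ p) := integrable_of_cont (by fun_prop) hR'
  have hid : Integrable (fun x : Eu n => x) (tilt μ p) := integrable_of_cont (by fun_prop) hR'
  have hj : g (c - av) ≤ ∫ x, g (c - x) ∂(tilt μ p) := by
    have := gauge_jensen hg hR' (k := fun x => c - x) (by fun_prop)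
    rw [integral_sub (integrable_const _) hid] at this
    simpa using this
  have h1 : ∫ x, g x ∂(tilt μ p) ≤ ∫ x, (g (av) + g (c - av) + g (x - c)) ∂(tilt μ p) := by
    refine integral_mono (integrable_of_cont hgc hR')
      (int_add (integrable_const _) hi1) fun x => ?_
    have e : x = av + ((c - av) + (x - c)) := by abel
    have h2 := hg.add_le av ((c - av) + (x - c))
    have h3 := hg.add_le (c - av) (x - c)
    rw [← e] at h2
    linarith
  rw [integral_add (integrable_const _) hi1] at h1
  simp only [integral_const, probReal_univ, one_smul] at h1
  simp only [hFdef]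
  rw [integral_add hi1 hi2]
  linarith

variable {q : ℕ} {η ε T : ℝ}

theorem potU_continuous (hR : ∀ᵐ x ∂μ, ‖x‖ ≤ R) (hq : Even q) :
    Continuous (potU μ q η ((1 / 4) ^ q)) :=
  (potV_contDiff covM_symm hq (by positivity)).continuous.comp (tE_continuous continuous_momK hR)

/-- The upper comparison for a compactly supported measure, given control of the potential up to
time `T`. Itô's formula for the Gaussian smoothing of `g`, applied to the rescaled mean of the tilt,
bounds the mean of `g` at the tilted mean; `compare_mean` passes from there to `X` itself. -/
theorem core_upper (hg : IsGauge g) (hR : ∀ᵐ x ∂μ, ‖x‖ ≤ R) (hR0 : 0 ≤ R)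
    (hS2 : ∀ v : Fin n → ℝ, v ⬝ᵥ (covM μ).mulVec v ≤ 2 * (v ⬝ᵥ v)) (hq : Even q) (hq0 : q ≠ 0)
    (hη : 0 ≤ η) (hM : η < (1 / 4) ^ q) (hT : 0 < T)
    (hU : ∀ t, 0 < t → t < T → Em μ (potU μ q η ((1 / 4) ^ q)) t ≤ ε) :
    ∫ x, g x ∂μ ≤ (√T * (1 + (81 / 16 + 2 * R ^ 4 * ε) / 2) + 2 * (√T)⁻¹) *
      ∫ y, g y ∂(stdGaussian n) + g (∫ x, x ∂μ) := by
  set m := ∫ y, g y ∂(stdGaussian n) with hm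
  have hm0 : 0 ≤ m := integral_nonneg hg.1
  set s := √T with hs
  have hs0 : 0 < s := Real.sqrt_pos.2 hT
  have hsT : s ^ 2 = T := Real.sq_sqrt hT.le
  set r := s⁻¹ with hr
  have hr0 : 0 < r := inv_pos.2 hs0
  have hk : Continuous fun x : Eu n => r • x := by fun_prop
  have hP := gsm_contDiff hg
  have hUc := potU_continuous (μ := μ) (η := η) hR hq
  have hUb : ∀ p, |potU μ q η ((1 / 4) ^ q) p| ≤ 1 := fun p => potV_bound covM_symm hq hη hM _
  set y : ℝ → ℝ := Em μ fun p => gsm g (tE μ (fun x => r • x) p) with hy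
  have hder : ∀ t, 0 < t → HasDerivAt y _ t := fun t ht => ito hk hR hR0 hP ht
  obtain ⟨C0, -, hC0⟩ := exists_bound_comp_tE (μ := μ) hP.continuous hk hR
  have hyc : ContinuousOn y (Set.Icc 0 T) := (Em_continuousOn hR hR0
    (hP.continuous.comp (tE_continuous hk hR)) hC0).mono Set.Icc_subset_Ici_self
  obtain ⟨C1, hC1⟩ := drift_bound (μ := μ) hk hR hP
  have hbound : ∀ t ∈ interior (Set.Icc 0 T), deriv y t ≤
      1 / 2 * r ^ 2 * m * (81 / 16 + 2 * R ^ 4 * ε) := by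
    intro t ht
    rw [interior_Icc] at ht
    rw [(hder t ht.1).deriv]
    have h1 : Em μ (fun p => 1 / 2 * ∑ i, fderiv ℝ (fderiv ℝ (gsm g)) (tE μ (fun x => r • x) p)
        (tCov μ (fun x => r • x) i p) (tCov μ (fun x => r • x) i p)) t ≤
        Em μ (fun p => 1 / 2 * r ^ 2 * m * (81 / 16 * 1 +
          2 * R ^ 4 * potU μ q η ((1 / 4) ^ q) p)) t := by
      refine Em_mono hR (drift_continuous hk hR hP) (by fun_prop) hC1
        (D := |1 / 2 * r ^ 2 * m| * (81 / 16 + 2 * R ^ 4)) ?_ ht.1.le ?_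
      · intro p
        rw [abs_mul]
        refine mul_le_mul_of_nonneg_left ?_ (abs_nonneg _)
        refine (abs_add_le _ _).trans ?_
        rw [abs_mul (2 * R ^ 4), abs_of_nonneg (by positivity : 0 ≤ 2 * R ^ 4)]
        have := mul_le_mul_of_nonneg_left (hUb p) (by positivity : 0 ≤ 2 * R ^ 4)
        norm_num
        linarith
      · intro θ
        have h2 := hess_upper hR hS2 hq hq0 hη hM (t, θ)
          (fderiv ℝ (fderiv ℝ (gsm g)) (tE μ (fun x => r • x) (t, θ))) (gsm_psd hg _) r
        have h3 := gsm_laplacian_le hg (tE μ (fun x => r • x) (t, θ))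
        have h4 := potU_nonneg (μ := μ) hq hη hM (t, θ)
        have h5 : 0 ≤ 81 / 16 + 2 * R ^ 4 * potU μ q η ((1 / 4) ^ q) (t, θ) := by positivity
        have h6 := mul_le_mul_of_nonneg_left (mul_le_mul_of_nonneg_left h3 h5) (sq_nonneg r)
        rw [← hm] at h6
        linarith [h2.trans h6]
    refine h1.trans ?_
    rw [Em_const_mul, Em_add hR (by fun_prop) (by fun_prop) (C := 81 / 16) (D := 2 * R ^ 4)
      (fun p => by norm_num) (fun p => ?_) ht.1.le, Em_const_mul, Em_const_mul, Em_one hR ht.1.le]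
    · refine mul_le_mul_of_nonneg_left ?_ (by positivity)
      have := mul_le_mul_of_nonneg_left (hU t ht.1 ht.2) (by positivity : 0 ≤ 2 * R ^ 4)
      linarith
    · rw [abs_mul, abs_of_nonneg (by positivity : 0 ≤ 2 * R ^ 4)]
      have := mul_le_mul_of_nonneg_left (hUb p) (by positivity : 0 ≤ 2 * R ^ 4)
      linarith
  have hyT := (convex_Icc 0 T).image_sub_le_mul_sub_of_deriv_le hyc (fun t ht => by
    rw [interior_Icc] at ht
    exact (hder t ht.1).differentiableAt.differentiableWithinAt) hbound 0 ⟨le_rfl, hT.le⟩ T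
    ⟨hT.le, le_rfl⟩ hT.le
  have hy0 : y 0 ≤ m + r * g (∫ x, x ∂μ) := by
    have h1 : y 0 = gsm g (r • ∫ x, x ∂μ) := by
      rw [hy, Em_zero, tE_smul, tE_eq, tilt_zero _ rfl]
    have h2 := gsm_le hg 0 (r • ∫ x, x ∂μ)
    rw [zero_add, gsm_zero, hg.2.2 _ hr0.le] at h2
    rw [h1]; exact h2
  have hcmp := compare_mean hg hR hR0 hT
  rw [← hs, ← hm] at hcmp
  have hac := tE_continuous (μ := μ) (continuous_id' (X := Eu n)) hR
  obtain ⟨Ca, -, hCa⟩ := exists_bound_comp_tE (μ := μ) hg.continuous (continuous_id' (X := Eu n)) hR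
  have hgy : Em μ (fun p => g (tE μ (fun x => x) p)) T ≤ s * y T := by
    rw [hy, ← Em_const_mul]
    have hc1 : Continuous fun p => g (tE μ (fun x => x) p) := hg.continuous.comp hac
    have hc2 : Continuous fun p => s * gsm g (tE μ (fun x => r • x) p) :=
      continuous_const.mul (hP.continuous.comp (tE_continuous hk hR))
    refine Em_mono hR hc1 hc2 hCa (D := s * C0)
      (fun p => ?_) hT.le fun θ => ?_
    · rw [abs_mul, abs_of_pos hs0]
      exact mul_le_mul_of_nonneg_left (hC0 p) hs0.le
    · have h1 := gsm_ge hg (tE μ (fun x => r • x) (T, θ))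
      rw [tE_smul, hg.2.2 _ hr0.le] at h1
      rw [tE_smul]
      have h2 := mul_le_mul_of_nonneg_left h1 hs0.le
      rwa [← mul_assoc, hr, mul_inv_cancel₀ hs0.ne', one_mul] at h2
  have hsr : s * r = 1 := mul_inv_cancel₀ hs0.ne'
  have hrT : r ^ 2 * T = 1 := by rw [← hsT, ← mul_pow, mul_comm, hsr, one_pow]
  have h7 : y T ≤ m + r * g (∫ x, x ∂μ) + 1 / 2 * m * (81 / 16 + 2 * R ^ 4 * ε) := by
    have : 1 / 2 * r ^ 2 * m * (81 / 16 + 2 * R ^ 4 * ε) * (T - 0) =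
      (r ^ 2 * T) * (1 / 2 * m * (81 / 16 + 2 * R ^ 4 * ε)) := by ring
    rw [this, hrT] at hyT
    linarith
  have h8 := mul_le_mul_of_nonneg_left h7 hs0.le
  have h9 : s * (m + r * g (∫ x, x ∂μ) + 1 / 2 * m * (81 / 16 + 2 * R ^ 4 * ε)) =
      s * (1 + (81 / 16 + 2 * R ^ 4 * ε) / 2) * m + (s * r) * g (∫ x, x ∂μ) := by ring
  rw [h9, hsr] at h8
  calc _ ≤ _ := hcmp
    _ ≤ _ := add_le_add (hgy.trans h8) le_rfl
    _ = _ := by ring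

/-- The lower comparison for a compactly supported measure, given control of the potential up to
time `T`. The Laplacian of the smoothing is at least `P - g`, and the
expectation of `P` is non-decreasing along the localization, hence almost the Gaussian mean of `g`. -/
theorem core_lower (hg : IsGauge g) (hR : ∀ᵐ x ∂μ, ‖x‖ ≤ R) (hR0 : 0 ≤ R)
    (hS : ∀ v : Fin n → ℝ, 3 / 4 * (v ⬝ᵥ v) ≤ v ⬝ᵥ (covM μ).mulVec v) (hq : Even q) (hq0 : q ≠ 0)
    (hη : 0 ≤ η) (hM : η < (1 / 4) ^ q) (hT : 0 < T)
    (hU : ∀ t, 0 < t → t < T → Em μ (potU μ q η ((1 / 4) ^ q)) t ≤ ε) :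
    √T * (1 / 8 - 1 / 4 * ε) * ∫ y, g y ∂(stdGaussian n) ≤
      9 / 8 * ∫ x, g x ∂μ + 9 / 8 * g (-∫ x, x ∂μ) := by
  set m := ∫ y, g y ∂(stdGaussian n) with hm
  have hm0 : 0 ≤ m := integral_nonneg hg.1
  set s := √T with hs
  have hs0 : 0 < s := Real.sqrt_pos.2 hT
  have hsT : s ^ 2 = T := Real.sq_sqrt hT.le
  set r := s⁻¹ with hr
  have hr0 : 0 < r := inv_pos.2 hs0
  have hk : Continuous fun x : Eu n => r • x := by fun_prop
  have hP := gsm_contDiff hg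
  have hgc := hg.continuous
  have hUc := potU_continuous (μ := μ) (η := η) hR hq
  have hUb : ∀ p, |potU μ q η ((1 / 4) ^ q) p| ≤ 1 := fun p => potV_bound covM_symm hq hη hM _
  set e := ∫ x, g x ∂μ with he
  set y : ℝ → ℝ := Em μ fun p => gsm g (tE μ (fun x => r • x) p) with hy
  have hder : ∀ t, 0 < t → HasDerivAt y _ t := fun t ht => ito hk hR hR0 hP ht
  obtain ⟨C0, hC00, hC0⟩ := exists_bound_comp_tE (μ := μ) hP.continuous hk hR
  have hyc : ContinuousOn y (Set.Icc 0 T) := (Em_continuousOn hR hR0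
    (hP.continuous.comp (tE_continuous hk hR)) hC0).mono Set.Icc_subset_Ici_self
  have hPc : Continuous fun p => gsm g (tE μ (fun x => r • x) p) :=
    hP.continuous.comp (tE_continuous hk hR)
  obtain ⟨C1, hC1⟩ := drift_bound (μ := μ) hk hR hP
  obtain ⟨Cg, hCg0, hCg⟩ := exists_bound_ball (μ := μ) hgc hR
  have hgb : ∀ p, |tE μ g p| ≤ Cg := fun p => norm_tE_le hR hCg p
  have hgE := tE_continuous (μ := μ) hgc hR
  have hdiff : DifferentiableOn ℝ y (interior (Set.Icc 0 T)) := fun t ht => by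
    rw [interior_Icc] at ht
    exact (hder t ht.1).differentiableAt.differentiableWithinAt
  have hjen : ∀ p, g (tE μ (fun x => r • x) p) ≤ r * tE μ g p := by
    intro p
    have := isProbabilityMeasure_tilt hR p
    rw [tE_smul, hg.2.2 _ hr0.le, tE_eq, tE_eq]
    exact mul_le_mul_of_nonneg_left (gauge_jensen hg (tilt_ae hR p) continuous_id') hr0.le
  -- convexity makes the smoothed gauge a submartingale
  have hmono : ∀ t ∈ Set.Icc 0 T, y 0 ≤ y t := by
    intro t ht
    have := (convex_Icc 0 T).mul_sub_le_image_sub_of_le_deriv hyc hdiff (C := 0) (fun t ht => by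
      rw [interior_Icc] at ht
      rw [(hder t ht.1).deriv]
      refine integral_nonneg fun z => mul_nonneg (tZ_pos hR _).le (mul_nonneg (by norm_num)
        (Finset.sum_nonneg fun i _ => gsm_psd hg _ _))) 0 ⟨le_rfl, hT.le⟩ t ht ht.1
    linarith
  have hbound : ∀ t ∈ interior (Set.Icc 0 T),
      1 / 8 * r ^ 2 * (y 0 + (-r * e + (-(2 * m)) * ε)) ≤ deriv y t := by
    intro t ht
    rw [interior_Icc] at ht
    rw [(hder t ht.1).deriv]
    have h1 : Em μ (fun p => 1 / 8 * r ^ 2 * (gsm g (tE μ (fun x => r • x) p) +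
        ((-r) * tE μ g p + (-(2 * m)) * potU μ q η ((1 / 4) ^ q) p))) t ≤
        Em μ (fun p => 1 / 2 * ∑ i, fderiv ℝ (fderiv ℝ (gsm g)) (tE μ (fun x => r • x) p)
        (tCov μ (fun x => r • x) i p) (tCov μ (fun x => r • x) i p)) t := by
      refine Em_mono hR (by fun_prop) (drift_continuous hk hR hP)
        (C := 1 / 8 * r ^ 2 * (C0 + (r * Cg + 2 * m))) ?_ hC1 ht.1.le ?_
      · intro p
        rw [abs_mul, abs_of_nonneg (by positivity : 0 ≤ 1 / 8 * r ^ 2)]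
        refine mul_le_mul_of_nonneg_left ?_ (by positivity)
        refine (abs_add_le _ _).trans (add_le_add (hC0 p) ((abs_add_le _ _).trans
          (add_le_add ?_ ?_)))
        · rw [abs_mul, abs_neg, abs_of_pos hr0]
          exact mul_le_mul_of_nonneg_left (hgb p) hr0.le
        · rw [abs_mul, abs_neg, abs_of_nonneg (by positivity)]
          have := mul_le_mul_of_nonneg_left (hUb p) (by positivity : 0 ≤ 2 * m)
          linarith
      · intro θ
        have h2 := hess_lower hR hS hq hq0 hη hM (t, θ)
          (fderiv ℝ (fderiv ℝ (gsm g)) (tE μ (fun x => r • x) (t, θ))) (gsm_psd hg _) r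
        have h3 := gsm_laplacian_le hg (tE μ (fun x => r • x) (t, θ))
        have h3' := gsm_laplacian_ge hg (tE μ (fun x => r • x) (t, θ))
        have h4 := potU_nonneg (μ := μ) hq hη hM (t, θ)
        have h5 := hjen (t, θ)
        set L := ∑ i, fderiv ℝ (fderiv ℝ (gsm g)) (tE μ (fun x => r • x) (t, θ))
          (EuclideanSpace.single i 1) (EuclideanSpace.single i 1)
        set u := potU μ q η ((1 / 4) ^ q) (t, θ)
        rw [← hm] at h3
        have h6 : gsm g (tE μ (fun x => r • x) (t, θ)) + ((-r) * tE μ g (t, θ) + (-(2 * m)) * u) ≤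
            (1 - 2 * u) * L := by
          have := mul_le_mul_of_nonneg_left h3 h4
          linarith
        have h7 := mul_le_mul_of_nonneg_left h6 (by positivity : 0 ≤ 1 / 8 * r ^ 2)
        linarith
    refine le_trans ?_ h1
    have hb2 : ∀ p, |(-(2 * m)) * potU μ q η ((1 / 4) ^ q) p| ≤ 2 * m := by
      intro p
      rw [abs_mul, abs_neg, abs_of_nonneg (by positivity)]
      have := mul_le_mul_of_nonneg_left (hUb p) (by positivity : 0 ≤ 2 * m)
      linarith
    have hb1 : ∀ p, |(-r) * tE μ g p| ≤ r * Cg := by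
      intro p
      rw [abs_mul, abs_neg, abs_of_pos hr0]
      exact mul_le_mul_of_nonneg_left (hgb p) hr0.le
    rw [Em_const_mul, Em_add hR hPc (by fun_prop) hC0 (D := r * Cg + 2 * m)
      (fun p => (abs_add_le _ _).trans (add_le_add (hb1 p) (hb2 p))) ht.1.le,
      Em_add hR (by fun_prop) (by fun_prop) hb1 hb2 ht.1.le, Em_const_mul, Em_const_mul,
      Em_tE hR hgc ht.1.le]
    refine mul_le_mul_of_nonneg_left ?_ (by positivity)
    have h3 := hmono t ⟨ht.1.le, ht.2.le⟩
    have h4 := mul_le_mul_of_nonneg_left (hU t ht.1 ht.2) (by positivity : 0 ≤ 2 * m)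
    rw [hy] at h3 ⊢
    linarith
  have hyT := (convex_Icc 0 T).mul_sub_le_image_sub_of_le_deriv hyc hdiff hbound 0
    ⟨le_rfl, hT.le⟩ T ⟨hT.le, le_rfl⟩ hT.le
  have hy0 : m ≤ y 0 + r * g (-∫ x, x ∂μ) := by
    have h1 : y 0 = gsm g (r • ∫ x, x ∂μ) := by
      rw [hy, Em_zero, tE_smul, tE_eq, tilt_zero _ rfl]
    have h2 := gsm_le hg (r • ∫ x, x ∂μ) (r • -∫ x, x ∂μ)
    rw [hg.2.2 _ hr0.le, ← smul_add, add_neg_cancel, smul_zero, gsm_zero] at h2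
    rw [h1]; exact h2
  have hyT' : y T ≤ m + r * e := by
    have h1 : y T ≤ Em μ (fun p => m * 1 + r * tE μ g p) T := by
      refine Em_mono hR hPc (by fun_prop) hC0 (D := m + r * Cg) (fun p => ?_) hT.le fun θ => ?_
      · refine (abs_add_le _ _).trans (add_le_add ?_ ?_)
        · rw [mul_one, abs_of_nonneg hm0]
        · rw [abs_mul, abs_of_pos hr0]
          exact mul_le_mul_of_nonneg_left (hgb p) hr0.le
      · have h2 := gsm_le hg 0 (tE μ (fun x => r • x) (T, θ))
        rw [zero_add, gsm_zero] at h2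
        have := hjen (T, θ)
        linarith
    rw [Em_add hR (by fun_prop) (by fun_prop) (C := m) (D := r * Cg)
      (fun p => by rw [mul_one, abs_of_nonneg hm0]) (fun p => by
        rw [abs_mul, abs_of_pos hr0]
        exact mul_le_mul_of_nonneg_left (hgb p) hr0.le) hT.le, Em_const_mul, Em_const_mul,
      Em_one hR hT.le, Em_tE hR hgc hT.le] at h1
    linarith
  have hsr : s * r = 1 := mul_inv_cancel₀ hs0.ne'
  have hrT : r ^ 2 * T = 1 := by rw [← hsT, ← mul_pow, mul_comm, hsr, one_pow]
  have h7 : 1 / 8 * (y 0 + (-r * e + (-(2 * m)) * ε)) ≤ y T - y 0 := by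
    have : 1 / 8 * r ^ 2 * (y 0 + (-r * e + (-(2 * m)) * ε)) * (T - 0) =
      (r ^ 2 * T) * (1 / 8 * (y 0 + (-r * e + (-(2 * m)) * ε))) := by ring
    rwa [this, hrT, one_mul] at hyT
  have h8 : (1 / 8 - 1 / 4 * ε) * m ≤ 9 / 8 * (r * e) + 9 / 8 * (r * g (-∫ x, x ∂μ)) := by
    linarith
  have h9 := mul_le_mul_of_nonneg_left h8 hs0.le
  have h10 : s * (9 / 8 * (r * e) + 9 / 8 * (r * g (-∫ x, x ∂μ))) =
      (s * r) * (9 / 8 * e + 9 / 8 * g (-∫ x, x ∂μ)) := by ring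
  rw [h10, hsr, one_mul] at h9
  linarith

end Core

/-! ### The choice of parameters -/

section Parameters
variable {n : ℕ}

theorem one_lt_log_succ (hn : 2 ≤ n) : 1 < Real.log (n + 1) := by
  rw [Real.lt_log_iff_exp_lt (by positivity)]
  have h1 := Real.exp_one_lt_d9
  have h2 : (2 : ℝ) ≤ n := by exact_mod_cast hn
  linarith

/-- The absolute constant in the time horizon `T = (horizonC / (ψ √log (n + 1)))²`. -/
def horizonC : ℝ := Real.exp (-11) / 68

theorem horizonC_pos : 0 < horizonC := by unfold horizonC; positivity

theorem horizonC_le_one : horizonC ≤ 1 := by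
  unfold horizonC
  have : Real.exp (-11) ≤ 1 := Real.exp_le_one_iff.2 (by norm_num)
  linarith

/-- For an exponent `q` of order `log (n + 1)`, the expected potential is polynomially small up to
a time of order `1 / (ψ² log (n + 1))`. -/
theorem exists_params (hn : 2 ≤ n) {ν : Measure (Eu n)} [IsProbabilityMeasure ν]
    (hl : IsLogConcaveMeasure ν) {R : ℝ} (hR : ∀ᵐ x ∂ν, ‖x‖ ≤ R) (hR0 : 0 ≤ R)
    (hS2 : ∀ v : Fin n → ℝ, v ⬝ᵥ (covM ν).mulVec v ≤ 2 * (v ⬝ᵥ v)) :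
    ∃ (q : ℕ) (η : ℝ), Even q ∧ q ≠ 0 ∧ 0 ≤ η ∧ η < (1 / 4) ^ q ∧
      ∀ t, 0 < t → t < (horizonC / (KLSConst n * √(Real.log (n + 1)))) ^ 2 →
        Em ν (potU ν q η ((1 / 4) ^ q)) t ≤ 1 / 4 * (((n : ℝ) + 1) ^ 4)⁻¹ := by
  have hL1 := one_lt_log_succ hn
  set L := Real.log (n + 1) with hL
  have hexpL : Real.exp L = n + 1 := Real.exp_log (by positivity)
  set ψ := KLSConst n with hψ
  have hψ1 : 1 ≤ ψ := one_le_KLS (by omega) hl hR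
  set m := ⌈L⌉₊ with hm
  have hm1 : L ≤ m := Nat.le_ceil L
  have hm2 : (m : ℝ) < L + 1 := Nat.ceil_lt_add_one (by linarith)
  have hm0 : 1 ≤ m := by
    have : (1 : ℝ) ≤ m := by linarith
    exact_mod_cast this
  set β : ℝ := Real.exp (-11) / 4 with hβ
  have hβ0 : 0 < β := by positivity
  have hβ1 : β ≤ 1 := by
    have : Real.exp (-11) ≤ 1 := Real.exp_le_one_iff.2 (by norm_num)
    rw [hβ]; linarith
  have hqr : ((2 * m + 2 : ℕ) : ℝ) = 2 * m + 2 := by push_cast; ring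
  have hpow : ∀ a : ℝ, Real.exp a ^ (2 * m + 2) = Real.exp ((2 * m + 2) * a) := fun a => by
    rw [← Real.exp_nat_mul, hqr]
  have hη : n * β ^ (2 * m + 2) < (1 / 4 : ℝ) ^ (2 * m + 2) := by
    have e : n * β ^ (2 * m + 2) =
        (n * Real.exp ((2 * m + 2) * (-11))) * (1 / 4 : ℝ) ^ (2 * m + 2) := by
      rw [← hpow, hβ, div_eq_mul_one_div, mul_pow]; ring
    rw [e]
    refine mul_lt_of_lt_one_left (by positivity) ?_
    calc (n : ℝ) * Real.exp ((2 * m + 2) * (-11)) < Real.exp L * Real.exp ((2 * m + 2) * (-11)) := by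
          rw [hexpL]; exact mul_lt_mul_of_pos_right (by linarith) (by positivity)
      _ ≤ 1 := by rw [← Real.exp_add, Real.exp_le_one_iff]; linarith
  refine ⟨2 * m + 2, n * β ^ (2 * m + 2), ⟨m + 1, by ring⟩, by omega, by positivity, hη, ?_⟩
  intro t ht htT
  have hP : ∀ p : ℝ × Eu n, 0 ≤ p.1 → QuadPoincare (tilt ν p) ψ := fun p hp => by
    have := isProbabilityMeasure_tilt hR p
    exact quadPoincare_KLS (by omega) (tilt_logconcave hl hp) (tilt_ae hR p)
  have hT : 48 * ((2 * m + 2 : ℕ) : ℝ) * ψ ^ 2 * (β ^ 2)⁻¹ * t ≤ 1 := by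
    have hs : √L ^ 2 = L := Real.sq_sqrt (by linarith)
    have e : (horizonC / (ψ * √L)) ^ 2 = β ^ 2 / (289 * (ψ ^ 2 * L)) := by
      have : horizonC = β / 17 := by rw [hβ]; unfold horizonC; ring
      rw [this, div_pow, mul_pow, hs]; field_simp; norm_num
    rw [e, lt_div_iff₀ (by positivity)] at htT
    have h1 : 48 * ((2 * m + 2 : ℕ) : ℝ) ≤ 289 * L := by rw [hqr]; linarith
    have h2 : 48 * ((2 * m + 2 : ℕ) : ℝ) * (ψ ^ 2 * t) ≤ 289 * L * (ψ ^ 2 * t) :=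
      mul_le_mul_of_nonneg_right h1 (by positivity)
    have h3 : 48 * ((2 * m + 2 : ℕ) : ℝ) * ψ ^ 2 * t ≤ β ^ 2 := by linarith
    have h4 := mul_le_mul_of_nonneg_right h3 (by positivity : 0 ≤ (β ^ 2)⁻¹)
    rw [mul_inv_cancel₀ (by positivity)] at h4
    linarith
  refine (Em_potV_le hR hR0 hS2 hm0 hψ1 hβ0 hβ1 hη hP ht.le hT).trans ?_
  have e : 4 * β * Real.exp 1 = Real.exp (-10) := by
    rw [hβ, show 4 * (Real.exp (-11) / 4) * Real.exp 1 = Real.exp (-11) * Real.exp 1 by ring,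
      ← Real.exp_add]; norm_num
  have h4 : Real.exp (-2) ≤ 1 / 4 := by
    have h := Real.add_one_le_exp (1 : ℝ)
    have h2 : Real.exp (-2) * (Real.exp 1 * Real.exp 1) = 1 := by
      rw [← Real.exp_add, ← Real.exp_add]; norm_num
    have h3 : 4 ≤ Real.exp 1 * Real.exp 1 := by nlinarith
    nlinarith [Real.exp_pos (-2)]
  have h5 : (((n : ℝ) + 1) ^ 4)⁻¹ = Real.exp (-(4 * L)) := by
    rw [Real.exp_neg, ← hexpL, ← Real.exp_nat_mul]; norm_num
  rw [e, hpow, h5]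
  calc (n : ℝ) * Real.exp ((2 * m + 2) * (-10)) ≤ Real.exp L * Real.exp ((2 * m + 2) * (-10)) := by
        rw [hexpL]; exact mul_le_mul_of_nonneg_right (by linarith) (by positivity)
    _ ≤ Real.exp (-2) * Real.exp (-(4 * L)) := by
        rw [← Real.exp_add, ← Real.exp_add]; exact Real.exp_le_exp.2 (by linarith)
    _ ≤ _ := mul_le_mul_of_nonneg_right h4 (by positivity)

end Parameters

/-! ### Truncation to a ball -/

section Truncation
variable {n : ℕ} {μ : Measure (Eu n)}

theorem ofLp_integral {ν : Measure (Eu n)} (h : Integrable (fun x : Eu n => x) ν) :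
    (∫ x, x ∂ν).ofLp = bar ν := by
  funext i
  exact ((EuclideanSpace.proj (𝕜 := ℝ) i).integral_comp_comm h).symm

theorem isotropic_norm_integrable [IsProbabilityMeasure μ] (hi : IsIsotropicMeasure μ) :
    Integrable (fun x : Eu n => ‖x‖) μ := by
  have h1 := (isotropic_sq hi).1
  refine (int_add h1 (integrable_const (1 : ℝ))).mono' continuous_norm.aestronglyMeasurable
    (Filter.Eventually.of_forall fun x => ?_)
  rw [norm_norm]
  nlinarith [sq_nonneg (‖x‖ - 1)]

theorem isotropic_integral_id [IsProbabilityMeasure μ] (hi : IsIsotropicMeasure μ) :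
    ∫ x : Eu n, x ∂μ = 0 := by
  have h1 : Integrable (fun x : Eu n => x) μ :=
    (integrable_norm_iff continuous_id.aestronglyMeasurable).1 (isotropic_norm_integrable hi)
  ext i
  exact (congrFun (ofLp_integral h1) i).trans (hi.1 i)

theorem isotropic_dot (hi : IsIsotropicMeasure μ) (v : Fin n → ℝ) :
    Integrable (fun x : Eu n => (v ⬝ᵥ x.ofLp) ^ 2) μ ∧ ∫ x, (v ⬝ᵥ x.ofLp) ^ 2 ∂μ = v ⬝ᵥ v := by
  have hsq := (isotropic_sq hi).1
  have hij : ∀ i j, Integrable (fun x : Eu n => v i * v j * (x i * x j)) μ := fun i j => by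
    refine Integrable.const_mul ?_ _
    refine hsq.mono' (by fun_prop) (Filter.Eventually.of_forall fun x => ?_)
    rw [norm_mul, sq]
    exact mul_le_mul (PiLp.norm_apply_le x i) (PiLp.norm_apply_le x j) (norm_nonneg _)
      (norm_nonneg _)
  have e : (fun x : Eu n => (v ⬝ᵥ x.ofLp) ^ 2) =
      fun x => ∑ i, ∑ j, v i * v j * (x i * x j) := by
    funext x
    rw [sq, dotProduct, Finset.sum_mul_sum]
    exact Finset.sum_congr rfl fun i _ => Finset.sum_congr rfl fun j _ => by ring
  rw [e]
  have hi' : ∀ i, Integrable (fun x : Eu n => ∑ j, v i * v j * (x i * x j)) μ := fun i =>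
    integrable_finsetSum _ fun j _ => hij i j
  refine ⟨integrable_finsetSum _ fun i _ => hi' i, ?_⟩
  rw [integral_finsetSum _ fun i _ => hi' i]
  refine Finset.sum_congr rfl fun i _ => ?_
  rw [integral_finsetSum _ fun j _ => hij i j]
  simp_rw [integral_const_mul, hi.2]
  simp

/-- The second moment carried by the complement of the ball of radius `R`. -/
def tailSq (μ : Measure (Eu n)) (R : ℝ) : ℝ := ∫ x in (Metric.closedBall 0 R)ᶜ, ‖x‖ ^ 2 ∂μ

theorem tailSq_nonneg (R : ℝ) : 0 ≤ tailSq μ R := integral_nonneg fun x => by positivity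

theorem tailSq_le (hi : IsIsotropicMeasure μ) (R : ℝ) : tailSq μ R ≤ n := by
  obtain ⟨h1, h2⟩ := isotropic_sq hi
  rw [← h2]
  exact setIntegral_le_integral h1 (Filter.Eventually.of_forall fun x => by positivity)

theorem tailSq_tendsto (hi : IsIsotropicMeasure μ) :
    Filter.Tendsto (fun k : ℕ => tailSq μ k) Filter.atTop (nhds 0) := by
  have h1 := (isotropic_sq hi).1
  have h2 := tendsto_setIntegral_of_antitone (μ := μ) (f := fun x : Eu n => ‖x‖ ^ 2)
    (s := fun k : ℕ => (Metric.closedBall (0 : Eu n) k)ᶜ)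
    (fun k => Metric.isClosed_closedBall.measurableSet.compl)
    (fun a b hab => Set.compl_subset_compl.2
      (Metric.closedBall_subset_closedBall (by exact_mod_cast hab))) ⟨0, h1.integrableOn⟩
  have h3 : ⋂ k : ℕ, (Metric.closedBall (0 : Eu n) k)ᶜ = ∅ := by
    rw [← Set.compl_iUnion, Metric.iUnion_closedBall_nat, Set.compl_univ]
  rw [h3] at h2
  simpa [tailSq] using h2

theorem tail_norm_le [IsProbabilityMeasure μ] (hi : IsIsotropicMeasure μ) {R : ℝ} (hR : 0 < R) :
    ∫ x in (Metric.closedBall 0 R)ᶜ, ‖x‖ ∂μ ≤ tailSq μ R / R := by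
  rw [tailSq, ← integral_div]
  refine setIntegral_mono_on (isotropic_norm_integrable hi).integrableOn
    ((isotropic_sq hi).1.div_const R).integrableOn
    Metric.isClosed_closedBall.measurableSet.compl fun x hx => ?_
  have : R < ‖x‖ := by simpa using hx
  rw [le_div_iff₀ hR, sq]
  exact mul_le_mul_of_nonneg_left this.le (norm_nonneg x)

/-- Conditioning an isotropic log-concave vector on a ball of radius `R ≥ √(2 n)` costs a factor
at most `2` in density; mean and covariance are controlled by the tail. -/
theorem exists_trunc [IsProbabilityMeasure μ] (hl : IsLogConcaveMeasure μ)
    (hi : IsIsotropicMeasure μ) {R : ℝ} (hR1 : 1 ≤ R) (hRn : 2 * (n : ℝ) ≤ R ^ 2) :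
    ∃ (ν : Measure (Eu n)) (c : ℝ), IsProbabilityMeasure ν ∧ IsLogConcaveMeasure ν ∧
      (∀ᵐ x ∂ν, ‖x‖ ≤ R) ∧ 1 ≤ c ∧ c ≤ 2 ∧
      (∀ h : Eu n → ℝ, ∫ x, h x ∂ν = c * ∫ x in Metric.closedBall 0 R, h x ∂μ) ∧
      (∀ v : Fin n → ℝ, v ⬝ᵥ (covM ν).mulVec v ≤ 2 * (v ⬝ᵥ v)) ∧
      ‖∫ x, x ∂ν‖ ≤ 2 * (tailSq μ R / R) ∧
      ∀ v : Fin n → ℝ, (1 - tailSq μ R - ‖∫ x, x ∂ν‖ ^ 2) * (v ⬝ᵥ v) ≤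
        v ⬝ᵥ (covM ν).mulVec v := by
  set B := Metric.closedBall (0 : Eu n) R with hB
  have hBm : MeasurableSet B := Metric.isClosed_closedBall.measurableSet
  have hR0 : 0 < R := by linarith
  obtain ⟨hsq, hsqn⟩ := isotropic_sq hi
  -- Chebyshev's inequality
  have hcheb : 1 / 2 ≤ μ.real B := by
    have h1 : R ^ 2 * μ.real Bᶜ ≤ n := by
      refine le_trans ?_ (tailSq_le hi R)
      have h2 := setIntegral_mono_on (μ := μ) (s := Bᶜ) (f := fun _ => R ^ 2)
        (g := fun x : Eu n => ‖x‖ ^ 2) (integrable_const _).integrableOn hsq.integrableOn hBm.compl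
        (fun x hx => by
          have : R < ‖x‖ := by simpa [hB] using hx
          exact pow_le_pow_left₀ hR0.le this.le 2)
      rw [setIntegral_const, smul_eq_mul] at h2
      rw [mul_comm]; exact h2
    rw [probReal_compl_eq_one_sub hBm] at h1
    have h3 : 0 < R ^ 2 := by positivity
    have h4 : R ^ 2 * (1 - μ.real B) ≤ R ^ 2 * (1 / 2) := by linarith
    have := le_of_mul_le_mul_left h4 h3
    linarith
  have hB1 : μ.real B ≤ 1 := measureReal_le_one
  have hB0 : μ B ≠ 0 := fun h => by
    rw [measureReal_def, h] at hcheb; norm_num at hcheb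
  set c := (μ.real B)⁻¹ with hc
  have hc1 : 1 ≤ c := (one_le_inv₀ (by linarith)).2 hB1
  have hc2 : c ≤ 2 := by
    rw [hc, inv_le_comm₀ (by linarith) (by norm_num)]; linarith
  have hform : ∀ {W : Type} [NormedAddCommGroup W] [NormedSpace ℝ W] (h : Eu n → W),
      ∫ x, h x ∂(ProbabilityTheory.cond μ B) = c • ∫ x in B, h x ∂μ := fun h => by
    rw [ProbabilityTheory.cond, integral_smul_measure, ENNReal.toReal_inv]; rfl
  have hprob : IsProbabilityMeasure (ProbabilityTheory.cond μ B) :=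
    ProbabilityTheory.cond_isProbabilityMeasure hB0
  have hsupp : ∀ᵐ x ∂(ProbabilityTheory.cond μ B), ‖x‖ ≤ R := by
    filter_upwards [ProbabilityTheory.ae_cond_mem hBm] with x hx
    simpa [hB] using hx
  have hlc : IsLogConcaveMeasure (ProbabilityTheory.cond μ B) := by
    have h1 := logconc_withDensity hl
      (q := fun x => B.indicator (fun _ => (1 : ℝ)) x * c)
      ((measurable_const.indicator hBm).mul_const c)
      (logconc_mul (logconc_indicator (convex_closedBall _ _)) (logconc_const (by positivity)))
    convert h1 using 1
    have e : (fun x => ENNReal.ofReal (B.indicator (fun _ => (1 : ℝ)) x * c)) =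
        (μ B)⁻¹ • B.indicator 1 := by
      funext x
      have hcc : ENNReal.ofReal c = (μ B)⁻¹ := by
        rw [hc, measureReal_def, ← ENNReal.toReal_inv, ENNReal.ofReal_toReal]
        exact ENNReal.inv_ne_top.2 hB0
      by_cases hx : x ∈ B <;> simp [hx, hcc]
    rw [e, withDensity_smul _ (measurable_one.indicator hBm), withDensity_indicator_one hBm]
    rfl
  have hsplit : ∀ {h : Eu n → ℝ}, Integrable h μ →
      ∫ x in B, h x ∂μ = ∫ x, h x ∂μ - ∫ x in Bᶜ, h x ∂μ := fun hh => by
    rw [← integral_add_compl hBm hh]; ring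
  set ν := ProbabilityTheory.cond μ B with hν
  have hvv : ∀ v : Fin n → ℝ, 0 ≤ v ⬝ᵥ v := fun v => by simpa using dotProduct_star_self_nonneg v
  have hid : Integrable (fun x : Eu n => x) ν := integrable_of_cont continuous_id hsupp
  refine ⟨ν, c, hprob, hlc, hsupp, hc1, hc2, fun h => hform h, fun v => ?_, ?_, fun v => ?_⟩
  · obtain ⟨h1, h2⟩ := isotropic_dot hi v
    rw [covM_second hsupp, hform, smul_eq_mul]
    have h3 : ∫ x in B, (v ⬝ᵥ x.ofLp) ^ 2 ∂μ ≤ v ⬝ᵥ v := by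
      rw [← h2]
      exact setIntegral_le_integral h1 (Filter.Eventually.of_forall fun x => by positivity)
    have h4 : c * ∫ x in B, (v ⬝ᵥ x.ofLp) ^ 2 ∂μ ≤ 2 * (v ⬝ᵥ v) :=
      mul_le_mul hc2 h3 (integral_nonneg fun x => by positivity) (by norm_num)
    linarith [sq_nonneg (v ⬝ᵥ bar ν)]
  · have h1 : Integrable (fun x : Eu n => x) μ :=
      (integrable_norm_iff continuous_id.aestronglyMeasurable).1 (isotropic_norm_integrable hi)
    have h2 := integral_add_compl hBm h1
    rw [isotropic_integral_id hi] at h2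
    rw [hform, eq_neg_of_add_eq_zero_left h2, norm_smul, norm_neg, Real.norm_of_nonneg (by linarith)]
    exact mul_le_mul hc2 ((norm_integral_le_integral_norm _).trans (tail_norm_le hi hR0))
      (norm_nonneg _) (by norm_num)
  · obtain ⟨h1, h2⟩ := isotropic_dot hi v
    rw [covM_second hsupp, hform (fun x => (v ⬝ᵥ x.ofLp) ^ 2), smul_eq_mul, ← ofLp_integral hid]
    have h3 := dot_sq_le v (∫ x, x ∂ν)
    have h4 : ∫ x in Bᶜ, (v ⬝ᵥ x.ofLp) ^ 2 ∂μ ≤ (v ⬝ᵥ v) * tailSq μ R := by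
      rw [tailSq, ← integral_const_mul]
      exact integral_mono h1.integrableOn (hsq.const_mul _).integrableOn fun x => dot_sq_le v x
    have h5 := hsplit h1
    rw [h2] at h5
    have h6 : ∫ x in B, (v ⬝ᵥ x.ofLp) ^ 2 ∂μ ≤ c * ∫ x in B, (v ⬝ᵥ x.ofLp) ^ 2 ∂μ :=
      le_mul_of_one_le_left (integral_nonneg fun x => by positivity) hc1
    linarith

end Truncation

/-! ### The two inequalities for isotropic log-concave measures -/

section Final
variable {n : ℕ} {μ : Measure (Eu n)} [IsProbabilityMeasure μ] {g : Eu n → ℝ}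

theorem gauge_integrable (hi : IsIsotropicMeasure μ) (hg : IsGauge g) : Integrable g μ := by
  refine ((isotropic_norm_integrable hi).const_mul
    (4 * ∫ y, g y ∂(stdGaussian n))).mono' hg.continuous.aestronglyMeasurable
    (Filter.Eventually.of_forall fun x => ?_)
  rw [Real.norm_of_nonneg (hg.1 x)]
  exact hg.le_gauss x

theorem one_le_KLS_log (hn : 2 ≤ n) {ν : Measure (Eu n)} [IsProbabilityMeasure ν] {R : ℝ}
    (hl : IsLogConcaveMeasure ν) (hR : ∀ᵐ x ∂ν, ‖x‖ ≤ R) :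
    1 ≤ KLSConst n * √(Real.log (n + 1)) := by
  have h1 := one_le_KLS (by omega) hl hR
  have h2 : 1 ≤ √(Real.log (n + 1)) := Real.one_le_sqrt.2 (one_lt_log_succ hn).le
  nlinarith

/-- The upper comparison: `core_upper` for the measure conditioned on the ball of radius `n + 1`. The
resulting estimate of the mean of `g` on the ball, and of `g` at the barycenter, extends to the
whole space. -/
theorem gauge_upper (hn : 2 ≤ n) (hl : IsLogConcaveMeasure μ) (hi : IsIsotropicMeasure μ)
    (hg : IsGauge g) :
    ∫ x, g x ∂μ ≤ (16 + 2 * horizonC⁻¹) * (KLSConst n * √(Real.log (n + 1))) *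
      ∫ x, g x ∂(stdGaussian n) := by
  have hn0 : (0 : ℝ) ≤ n := Nat.cast_nonneg n
  have hRp : (0 : ℝ) < n + 1 := by positivity
  obtain ⟨ν, c, hprob, hlc, hsupp, hc1, hc2, hform, hS2, hmean, -⟩ :=
    exists_trunc hl hi (R := n + 1) (by linarith) (by nlinarith)
  have hQ := one_le_KLS_log hn hlc hsupp
  obtain ⟨q, η, hq, hq0, hη, hM, hU⟩ := exists_params hn hlc hsupp hRp.le hS2
  set Q := KLSConst n * √(Real.log (n + 1)) with hQd
  set m := ∫ x, g x ∂(stdGaussian n) with hm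
  have hm0 : 0 ≤ m := integral_nonneg hg.1
  have hC := horizonC_pos
  have hs0 : 0 < horizonC / Q := by positivity
  have hs1 : horizonC / Q ≤ 1 := div_le_one_of_le₀ (horizonC_le_one.trans hQ) (by linarith)
  have h1 := core_upper hg hsupp hRp.le hS2 hq hq0 hη hM (by positivity) hU
  rw [Real.sqrt_sq hs0.le, ← hm] at h1
  have e1 : 2 * ((n : ℝ) + 1) ^ 4 * (1 / 4 * (((n : ℝ) + 1) ^ 4)⁻¹) = 1 / 2 := by
    field_simp; norm_num
  rw [e1] at h1
  have htail : tailSq μ (n + 1) / (n + 1) ≤ 1 := by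
    rw [div_le_one hRp]
    have := tailSq_le hi (n + 1)
    linarith
  have hmean' : g (∫ x, x ∂ν) ≤ 8 * m := by
    have h2 := hg.le_gauss (∫ x, x ∂ν)
    have h3 := mul_le_mul_of_nonneg_left (hmean.trans (mul_le_mul_of_nonneg_left htail (by norm_num)))
      (by positivity : 0 ≤ 4 * m)
    rw [← hm] at h2
    linarith
  have hgi := gauge_integrable hi hg
  have hsplit := integral_add_compl
    (Metric.isClosed_closedBall (x := (0 : Eu n)) (ε := n + 1)).measurableSet hgi
  have hin : ∫ x in Metric.closedBall 0 (n + 1), g x ∂μ ≤ ∫ x, g x ∂ν := by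
    rw [hform]
    exact le_mul_of_one_le_left (integral_nonneg hg.1) hc1
  have hout : ∫ x in (Metric.closedBall 0 (n + 1))ᶜ, g x ∂μ ≤ 4 * m := by
    have h2 : ∫ x in (Metric.closedBall 0 (n + 1))ᶜ, g x ∂μ ≤
        ∫ x in (Metric.closedBall 0 (n + 1))ᶜ, 4 * m * ‖x‖ ∂μ :=
      integral_mono hgi.integrableOn
        ((isotropic_norm_integrable hi).const_mul (4 * m)).integrableOn fun x => hg.le_gauss x
    rw [integral_const_mul] at h2
    have h3 := mul_le_mul_of_nonneg_left ((tail_norm_le hi hRp).trans htail)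
      (by positivity : 0 ≤ 4 * m)
    linarith
  have h4 : (horizonC / Q * (1 + (81 / 16 + 1 / 2) / 2) + 2 * (horizonC / Q)⁻¹) * m ≤
      (4 + 2 * horizonC⁻¹ * Q) * m := by
    refine mul_le_mul_of_nonneg_right ?_ hm0
    rw [inv_div, div_eq_mul_inv Q]
    linarith
  have h5 : (16 : ℝ) * m ≤ 16 * Q * m := by
    have := mul_le_mul_of_nonneg_right hQ hm0
    linarith
  linarith

/-- The lower comparison: `core_lower` for the measure conditioned on a large ball. -/
theorem gauge_lower (hn : 2 ≤ n) (hl : IsLogConcaveMeasure μ) (hi : IsIsotropicMeasure μ)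
    (hg : IsGauge g) :
    horizonC / 72 / (KLSConst n * √(Real.log (n + 1))) * ∫ x, g x ∂(stdGaussian n) ≤
      ∫ x, g x ∂μ := by
  have hn0 : (0 : ℝ) ≤ n := Nat.cast_nonneg n
  have hQ : 1 ≤ KLSConst n * √(Real.log (n + 1)) := by
    obtain ⟨ν, c, hprob, hlc, hsupp, -⟩ :=
      exists_trunc hl hi (R := n + 1) (by linarith) (by nlinarith)
    exact one_le_KLS_log hn hlc hsupp
  set Q := KLSConst n * √(Real.log (n + 1)) with hQd
  set m := ∫ x, g x ∂(stdGaussian n) with hm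
  have hm0 : 0 ≤ m := integral_nonneg hg.1
  have hC := horizonC_pos
  have hs0 : 0 < horizonC / Q := by positivity
  have hs1 : horizonC / Q ≤ 1 := div_le_one_of_le₀ (horizonC_le_one.trans hQ) (by linarith)
  set s := horizonC / Q with hs
  -- a radius so large that the tail is negligible on the scale `s`
  obtain ⟨k, hk, hkn⟩ := (((tailSq_tendsto hi).eventually_lt_const
    (by positivity : 0 < s / 288)).and (Filter.eventually_ge_atTop (n + 1))).exists
  have hkn' : (n : ℝ) + 1 ≤ k := by exact_mod_cast hkn
  have hk0 : (0 : ℝ) < k := by linarith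
  obtain ⟨ν, c, hprob, hlc, hsupp, hc1, hc2, hform, hS2, hmean, hS⟩ :=
    exists_trunc hl hi (R := k) (by linarith) (by nlinarith)
  have hτ0 := tailSq_nonneg (μ := μ) k
  have hmean' : ‖∫ x, x ∂ν‖ ≤ 2 * tailSq μ k := hmean.trans (by
    have := div_le_self hτ0 (by linarith : (1 : ℝ) ≤ k)
    linarith)
  have hS' : ∀ v : Fin n → ℝ, 3 / 4 * (v ⬝ᵥ v) ≤ v ⬝ᵥ (covM ν).mulVec v := fun v => by
    refine le_trans ?_ (hS v)
    have hvv : 0 ≤ v ⬝ᵥ v := by simpa using dotProduct_star_self_nonneg v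
    refine mul_le_mul_of_nonneg_right ?_ hvv
    have := norm_nonneg (∫ x, x ∂ν)
    nlinarith
  obtain ⟨q, η, hq, hq0, hη, hM, hU⟩ := exists_params hn hlc hsupp hk0.le hS2
  have h1 := core_lower hg hsupp hk0.le hS' hq hq0 hη hM (by positivity) hU
  rw [Real.sqrt_sq hs0.le, ← hm] at h1
  have hε : (((n : ℝ) + 1) ^ 4)⁻¹ ≤ 1 := inv_le_one_of_one_le₀ (one_le_pow₀ (by linarith))
  have h2 : s * (1 / 16) * m ≤ s * (1 / 8 - 1 / 4 * (1 / 4 * (((n : ℝ) + 1) ^ 4)⁻¹)) * m :=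
    mul_le_mul_of_nonneg_right (mul_le_mul_of_nonneg_left (by linarith) hs0.le) hm0
  have h3 : g (-∫ x, x ∂ν) ≤ 8 * m * tailSq μ k := by
    have h := hg.le_gauss (-∫ x, x ∂ν)
    rw [norm_neg, ← hm] at h
    have := mul_le_mul_of_nonneg_left hmean' (by positivity : 0 ≤ 4 * m)
    linarith
  have h4 : m * tailSq μ k ≤ m * (s / 288) := mul_le_mul_of_nonneg_left hk.le hm0
  have h5 : ∫ x, g x ∂ν ≤ 2 * ∫ x, g x ∂μ := by
    rw [hform]
    exact mul_le_mul hc2 (setIntegral_le_integral (gauge_integrable hi hg)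
      (Filter.Eventually.of_forall hg.1)) (integral_nonneg hg.1) (by norm_num)
  have e : horizonC / 72 / Q = s / 72 := by rw [hs]; ring
  rw [e]
  linarith

end Final

/-- Comparison of log-concave and Gaussian averages of gauge functions
(with the constant psi_n). -/
theorem gauge_comparison_psi_n :
    ∃ c C : ℝ, 0 < c ∧ 0 < C ∧
      ∀ n : ℕ, 2 ≤ n → ∀ μ : Measure (EuclideanSpace ℝ (Fin n)),
        IsProbabilityMeasure μ → IsLogConcaveMeasure μ → IsIsotropicMeasure μ →
        ∀ f : EuclideanSpace ℝ (Fin n) → ℝ, IsGauge f →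
          c / (KLSConst n * Real.sqrt (Real.log (n + 1))) * ∫ x, f x ∂(stdGaussian n) ≤
              ∫ x, f x ∂μ ∧
            ∫ x, f x ∂μ ≤
              C * (KLSConst n * Real.sqrt (Real.log (n + 1))) * ∫ x, f x ∂(stdGaussian n) := by
  refine ⟨horizonC / 72, 16 + 2 * horizonC⁻¹, by have := horizonC_pos; positivity,
    by have := horizonC_pos; positivity, ?_⟩
  intro n hn μ hμ hl hi f hf
  exact ⟨gauge_lower hn hl hi hf, gauge_upper hn hl hi hf⟩

end
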